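/- arXiv:2011.02984 — 2 statements merged into one kernel-verified Lean document; each statement's English description precedes it below -/
import Mathlib

section
/- For every integer n ≥ 1: if n ≡ 0 or 1 (mod 3) then N̄(0,3,n) > N̄(1,3,n), and if n ≡ 2 (mod 3) then N̄(0,3,n) < N̄(1,3,n). -/
/-- An overpartition of `n`: a partition of `n` together with a chosen subset of its
distinct part sizes (the overlined parts). -/
def Overpartition (n : ℕ) : Type :=
  {P : n.Partition × Finset ℕ // P.2 ⊆ P.1.parts.toFinset}

/-- The Dyson rank of an overpartition: largest part minus number of parts. -/
def Overpartition.rank {n : ℕ} (P : Overpartition n) : ℤ :=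
  (P.1.1.parts.sup : ℤ) - (P.1.1.parts.card : ℤ)

/-- `nbarRank m n` is the number of overpartitions of `n` with rank `m`. -/
noncomputable def nbarRank (m : ℤ) (n : ℕ) : ℕ :=
  Nat.card {P : Overpartition n // P.rank = m}

/-- `nbar a c n` is the number of overpartitions of `n` with rank congruent to `a` mod `c`. -/
noncomputable def nbar (a : ℤ) (c : ℕ) (n : ℕ) : ℕ :=
  Nat.card {P : Overpartition n // P.rank ≡ a [ZMOD (c : ℤ)]}

/-- `pbar n` is the number of overpartitions of `n`. -/
noncomputable def pbar (n : ℕ) : ℕ := Nat.card (Overpartition n)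

/-!
Let `P` be the generating function of the overpartitions. A recurrence for the overpartitions with
given largest part and number of parts shows that the generating function of
`N̄(0,3,n) - N̄(1,3,n)` is, from `n = 1` on, `P * S` for an explicit sum `S` of partial theta
functions. A Liouville-type identity over the solutions of `m ^ 2 + u * v = N` yields the dissection
`P(q) * S(q) = P(q ^ 9) * A(q) - 6 * V(q)`, where `A = 1 + 2 * ∑ j, q ^ j * ∑ d ∣ j, a(d)` for a
character-like function `a` modulo 6, and `V` has nonnegative coefficients and is supported on the
exponents congruent to 2 modulo 3.

Since `A` has nonnegative coefficients, those of `P * S` off that class are positive. On it, `6 * V`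
dominates `P(q ^ 9) * B(q)` for a simple series `B`. As the coefficients of `P` are nondecreasing,
Abel summation leaves only the partial sums of the coefficients of `B - A` along the classes modulo
9 to be shown positive. Those of `B` grow like `n / 2`, while those of `A` are at most
`n / 3 + O(√n)`: in the sum of `a(d)` over the pairs `(d, e)` with `d * e` bounded, the number of
cofactors `e` is decreasing in `d` up to a bounded error, so the sign changes of `a` cancel most of
it. The finitely many cases below the range of this estimate are computed.
-/

open Finset PowerSeries
open scoped PowerSeries.WithPiTopology Polynomial

/-! ### Overpartitions by largest part and number of parts -/

/-- The generating function, with `X` marking the size and `x` the number of parts, of the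
overpartitions all of whose parts are at most `l`. -/
noncomputable def overpartitionGenFun {R : Type*} [CommRing R] (x : R) (l : ℕ) : R⟦X⟧ :=
  Nat.Partition.genFun fun i j ↦ if i ≤ l then 2 * x ^ j else 0

theorem coeff_overpartitionGenFun {R : Type*} [CommRing R] (x : R) (l n : ℕ) :
    coeff n (overpartitionGenFun x l) =
      ∑ p : n.Partition with p.parts.sup ≤ l, 2 ^ #p.parts.toFinset * x ^ p.parts.card := by
  rw [overpartitionGenFun, Nat.Partition.coeff_genFun, sum_filter]
  refine sum_congr rfl fun p _ ↦ ?_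
  simp only [Finsupp.prod, Multiset.toFinsupp_support, Multiset.toFinsupp_apply, Multiset.sup_le]
  split_ifs with h
  · have hparts : ∀ i ∈ p.parts.toFinset,
        (if i ≤ l then 2 * x ^ p.parts.count i else 0) = 2 * x ^ p.parts.count i :=
      fun i hi ↦ if_pos (h i (Multiset.mem_toFinset.mp hi))
    rw [prod_congr rfl hparts, prod_mul_distrib, prod_const, prod_pow_eq_pow_sum,
      Multiset.toFinset_sum_count_eq]
  · push Not at h
    obtain ⟨b, hb, hl⟩ := h
    exact prod_eq_zero (Multiset.mem_toFinset.mpr hb) (if_neg hl.not_ge)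

theorem overpartitionGenFun_succ {R : Type*} [CommRing R] (x : R) (l : ℕ) :
    (1 - C x * X ^ (l + 1)) * overpartitionGenFun x (l + 1) =
      (1 + C x * X ^ (l + 1)) * overpartitionGenFun x l := by
  let _ : TopologicalSpace R := ⊥
  have : DiscreteTopology R := ⟨rfl⟩
  have hprod (k : ℕ) : overpartitionGenFun x k = ∏ i ∈ range k,
      (1 + ∑' j, (2 * x ^ (j + 1) : R) • (X : R⟦X⟧) ^ ((i + 1) * (j + 1))) := by
    rw [overpartitionGenFun, Nat.Partition.genFun_eq_tprod, tprod_eq_prod (s := range k)]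
    · exact prod_congr rfl fun i hi ↦ by simp only [if_pos (Nat.succ_le_of_lt (mem_range.mp hi))]
    · intro i hi
      simp only [if_neg (mt Nat.lt_of_succ_le (mt mem_range.mpr hi)), zero_smul, tsum_zero,
        add_zero]
  set y : R⟦X⟧ := C x * X ^ (l + 1) with hy
  have hy0 : constantCoeff y = 0 := by simp [hy]
  have hgeom : (∑' j, y ^ j) * (1 - y) = 1 :=
    WithPiTopology.tsum_pow_mul_one_sub_of_constantCoeff_eq_zero hy0
  have hfactor : ∑' j, (2 * x ^ (j + 1) : R) • (X : R⟦X⟧) ^ ((l + 1) * (j + 1)) =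
      2 * y * ∑' j, y ^ j := by
    rw [← (WithPiTopology.summable_pow_of_constantCoeff_eq_zero hy0).tsum_mul_left]
    refine tsum_congr fun j ↦ ?_
    rw [smul_eq_C_mul, hy, map_mul, map_pow, map_ofNat]
    ring
  rw [hprod (l + 1), prod_range_succ, ← hprod l, hfactor]
  linear_combination 2 * y * overpartitionGenFun x l * hgeom

/-- The generating function of the overpartitions with exactly `k` parts, all of them at most
`l`: the coefficient of `x ^ k` in `overpartitionGenFun x l`. -/
noncomputable def boundedOverpartitionSeries (l k : ℕ) : ℤ⟦X⟧ :=
  mk fun n ↦ (coeff n (overpartitionGenFun (Polynomial.X : ℤ[X]) l)).coeff k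

theorem coeff_boundedOverpartitionSeries (l k n : ℕ) :
    coeff n (boundedOverpartitionSeries l k) =
      ∑ p : n.Partition with p.parts.sup ≤ l ∧ p.parts.card = k, 2 ^ #p.parts.toFinset := by
  rw [boundedOverpartitionSeries, coeff_mk, coeff_overpartitionGenFun,
    Polynomial.finsetSum_coeff, ← filter_filter]
  refine (sum_congr rfl fun p _ ↦ ?_).trans (sum_filter _ _).symm
  rw [← map_ofNat (Polynomial.C (R := ℤ)) 2, ← map_pow, Polynomial.coeff_C_mul_X_pow]
  simp only [eq_comm]

theorem boundedOverpartitionSeries_succ_succ (l k : ℕ) :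
    boundedOverpartitionSeries (l + 1) (k + 1) -
        X ^ (l + 1) * boundedOverpartitionSeries (l + 1) k =
      boundedOverpartitionSeries l (k + 1) + X ^ (l + 1) * boundedOverpartitionSeries l k := by
  have hX (f : ℤ[X]⟦X⟧) (n : ℕ) :
      (coeff n (C Polynomial.X * (X ^ (l + 1) * f))).coeff (k + 1) =
        coeff n (X ^ (l + 1) * PowerSeries.mk fun i ↦ (coeff i f).coeff k) := by
    rw [coeff_C_mul, Polynomial.coeff_X_mul, coeff_X_pow_mul', coeff_X_pow_mul']
    split_ifs <;> simp
  ext n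
  have h := congrArg (fun f ↦ (coeff n f).coeff (k + 1))
    (overpartitionGenFun_succ (Polynomial.X : ℤ[X]) l)
  simp only [sub_mul, add_mul, one_mul, map_sub, map_add, Polynomial.coeff_sub,
    Polynomial.coeff_add, mul_assoc, hX] at h
  simpa only [map_sub, map_add, boundedOverpartitionSeries, coeff_mk] using h

theorem boundedOverpartitionSeries_zero_right (l : ℕ) : boundedOverpartitionSeries l 0 = 1 := by
  ext n
  rw [coeff_boundedOverpartitionSeries, coeff_one]
  rcases eq_or_ne n 0 with rfl | hn
  · simp
  · rw [if_neg hn, filter_false_of_mem, sum_empty]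
    rintro p - ⟨-, hp⟩
    exact hn (by rw [← p.parts_sum, Multiset.card_eq_zero.mp hp, Multiset.sum_zero])

theorem boundedOverpartitionSeries_zero_succ (k : ℕ) :
    boundedOverpartitionSeries 0 (k + 1) = 0 := by
  ext n
  rw [coeff_boundedOverpartitionSeries, map_zero, filter_false_of_mem, sum_empty]
  rintro p - ⟨hsup, hcard⟩
  obtain ⟨a, ha⟩ := Multiset.card_pos_iff_exists_mem.mp (by omega : 0 < p.parts.card)
  exact (p.parts_pos ha).ne' (Nat.le_zero.mp (Multiset.sup_le.mp hsup a ha))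

/-- The `q`-Delannoy numbers, counting the lattice paths from `(0, 0)` to `(m, j)` with unit
horizontal, vertical and diagonal steps, weighted by area. The overpartitions with largest part
`m + 1` and `j + 1` parts have generating function `2 * X ^ (m + j + 1) * qDelannoy m j`. -/
noncomputable def qDelannoy : ℕ → ℕ → ℤ⟦X⟧
  | 0, _ => 1
  | _ + 1, 0 => 1
  | m + 1, j + 1 => X ^ (m + 1) * qDelannoy (m + 1) j + qDelannoy m (j + 1) + X ^ m * qDelannoy m j

theorem qDelannoy_zero_left (j : ℕ) : qDelannoy 0 j = 1 := by rw [qDelannoy]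

theorem qDelannoy_zero_right (m : ℕ) : qDelannoy m 0 = 1 := by cases m <;> rw [qDelannoy]

theorem qDelannoy_succ_succ (m j : ℕ) : qDelannoy (m + 1) (j + 1) =
    X ^ (m + 1) * qDelannoy (m + 1) j + qDelannoy m (j + 1) + X ^ m * qDelannoy m j := by
  rw [qDelannoy]

theorem qDelannoy_succ_succ' (m j : ℕ) : qDelannoy (m + 1) (j + 1) =
    qDelannoy (m + 1) j + X ^ (j + 1) * qDelannoy m (j + 1) + X ^ j * qDelannoy m j := by
  induction m generalizing j with
  | zero =>
    induction j with
    | zero => rw [qDelannoy_succ_succ]; simp only [qDelannoy_zero_left, qDelannoy_zero_right]; ring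
    | succ j ih =>
      have h := qDelannoy_succ_succ 0 j
      rw [qDelannoy_succ_succ]
      simp only [qDelannoy_zero_left] at *
      linear_combination X * ih - h
  | succ m ihm =>
    induction j with
    | zero =>
      have h := qDelannoy_succ_succ m 0
      have h' := ihm 0
      rw [qDelannoy_succ_succ]
      simp only [qDelannoy_zero_right] at *
      linear_combination h' - X * h
    | succ j ih =>
      rw [qDelannoy_succ_succ]
      linear_combination X ^ (m + 2) * ih + ihm (j + 1) + X ^ (m + 1) * ihm j -
        qDelannoy_succ_succ (m + 1) j - X ^ (j + 2) * qDelannoy_succ_succ m (j + 1) -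
        X ^ (j + 1) * qDelannoy_succ_succ m j

theorem qDelannoy_comm (m j : ℕ) : qDelannoy m j = qDelannoy j m := by
  induction m generalizing j with
  | zero => rw [qDelannoy_zero_left, qDelannoy_zero_right]
  | succ m ihm =>
    induction j with
    | zero => rw [qDelannoy_zero_left, qDelannoy_zero_right]
    | succ j ih => rw [qDelannoy_succ_succ, qDelannoy_succ_succ' j m, ih, ihm, ihm]; ring

theorem boundedOverpartitionSeries_eq_add_qDelannoy (m j : ℕ) :
    boundedOverpartitionSeries (m + 1) (j + 1) =
      boundedOverpartitionSeries m (j + 1) + 2 * X ^ (m + j + 1) * qDelannoy m j := by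
  induction m generalizing j with
  | zero =>
    induction j with
    | zero =>
      have h := boundedOverpartitionSeries_succ_succ 0 0
      simp only [boundedOverpartitionSeries_zero_right, boundedOverpartitionSeries_zero_succ,
        qDelannoy_zero_left] at *
      linear_combination h
    | succ j ih =>
      have h := boundedOverpartitionSeries_succ_succ 0 (j + 1)
      simp only [boundedOverpartitionSeries_zero_succ, qDelannoy_zero_left] at *
      linear_combination h + X * ih
  | succ m ihm =>
    induction j with
    | zero =>
      have h := boundedOverpartitionSeries_succ_succ (m + 1) 0
      simp only [boundedOverpartitionSeries_zero_right, qDelannoy_zero_right] at *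
      linear_combination h
    | succ j ih =>
      rw [qDelannoy_succ_succ]
      linear_combination boundedOverpartitionSeries_succ_succ (m + 1) (j + 1) + X ^ (m + 2) * ih -
        X * boundedOverpartitionSeries_succ_succ m (j + 1) + X ^ (m + 2) * ihm j +
        X * ihm (j + 1)

theorem sum_partition_sup_card (m j n : ℕ) :
    ∑ p : n.Partition with p.parts.sup = m + 1 ∧ p.parts.card = j + 1, 2 ^ #p.parts.toFinset =
      coeff n (2 * X ^ (m + j + 1) * qDelannoy m j) := by
  rw [← add_right_inj (coeff n (boundedOverpartitionSeries m (j + 1))), ← map_add,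
    ← boundedOverpartitionSeries_eq_add_qDelannoy, coeff_boundedOverpartitionSeries,
    coeff_boundedOverpartitionSeries, ← sum_union (disjoint_filter.mpr fun p _ ↦ by omega),
    ← filter_or]
  exact congrArg (Finset.sum · _) (filter_congr fun p _ ↦ by omega)

/-! ### Overpartitions by rank -/

theorem natCard_overpartition {n : ℕ} (Q : n.Partition → Prop) [DecidablePred Q] :
    Nat.card {P : Overpartition n // Q P.1.1} =
      ∑ p : n.Partition with Q p, 2 ^ #p.parts.toFinset := by
  let e : {P : Overpartition n // Q P.1.1} ≃
      Σ p : {p : n.Partition // Q p}, {s // s ∈ p.1.parts.toFinset.powerset} :=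
    { toFun := fun P ↦ ⟨⟨P.1.1.1, P.2⟩, ⟨P.1.1.2, mem_powerset.mpr P.1.2⟩⟩
      invFun := fun Q ↦ ⟨⟨(Q.1.1, Q.2.1), mem_powerset.mp Q.2.2⟩, Q.1.2⟩
      left_inv := fun _ ↦ rfl
      right_inv := fun _ ↦ rfl }
  rw [Nat.card_congr e, Nat.card_eq_fintype_card, Fintype.card_sigma]
  simp only [Fintype.card_coe, card_powerset]
  exact (sum_subtype (p := Q) _ (fun p ↦ by simp) fun p ↦ 2 ^ #p.parts.toFinset).symm

theorem nbarRank_eq_sum (m : ℤ) (n : ℕ) : nbarRank m n =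
    ∑ p : n.Partition with (p.parts.sup : ℤ) - p.parts.card = m, 2 ^ #p.parts.toFinset :=
  natCard_overpartition fun p : n.Partition ↦ (p.parts.sup : ℤ) - p.parts.card = m

theorem nbar_eq_sum (a : ℤ) (c n : ℕ) : nbar a c n =
    ∑ p : n.Partition with (p.parts.sup : ℤ) - p.parts.card ≡ a [ZMOD c],
      2 ^ #p.parts.toFinset :=
  natCard_overpartition fun p : n.Partition ↦ (p.parts.sup : ℤ) - p.parts.card ≡ a [ZMOD c]

section PartitionBounds

variable {n : ℕ} (p : n.Partition)

theorem partition_card_le : p.parts.card ≤ n := by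
  simpa [p.parts_sum] using Multiset.card_nsmul_le_sum (a := 1) fun _ hx ↦ p.parts_pos hx

theorem partition_sup_le : p.parts.sup ≤ n :=
  Multiset.sup_le.mpr fun _ ↦ p.le_of_mem_parts

theorem partition_card_pos (hn : 1 ≤ n) : 0 < p.parts.card := by
  refine Multiset.card_pos.mpr fun h ↦ ?_
  have hsum := p.parts_sum
  rw [h, Multiset.sum_zero] at hsum
  omega

theorem partition_sup_pos (hn : 1 ≤ n) : 0 < p.parts.sup := by
  obtain ⟨x, hx⟩ := Multiset.card_pos_iff_exists_mem.mp (partition_card_pos p hn)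
  exact (p.parts_pos hx).trans_le (Multiset.le_sup hx)

end PartitionBounds

theorem nbar_eq_sum_nbarRank (a : ℤ) (c : ℕ) {n : ℕ} (hn : 1 ≤ n) :
    nbar a c n = ∑ m ∈ Ioo (-n : ℤ) n with m ≡ a [ZMOD c], nbarRank m n := by
  rw [nbar_eq_sum, ← sum_fiberwise_of_maps_to (t := {m ∈ Ioo (-n : ℤ) n | m ≡ a [ZMOD c]})
    (g := fun p : n.Partition ↦ (p.parts.sup : ℤ) - p.parts.card)]
  · refine sum_congr rfl fun m hm ↦ ?_
    rw [nbarRank_eq_sum, filter_filter]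
    exact congrArg (Finset.sum · _)
      (filter_congr fun p _ ↦ and_iff_right_of_imp fun h ↦ h ▸ (mem_filter.mp hm).2)
  · intro p hp
    have hc := partition_card_le p
    have hc' := partition_card_pos p hn
    have hs := partition_sup_le p
    have hs' := partition_sup_pos p hn
    exact mem_filter.mpr ⟨mem_Ioo.mpr (by omega), (mem_filter.mp hp).2⟩

theorem nbarRank_eq_sum_coeff_qDelannoy (m : ℤ) {n : ℕ} (hn : 1 ≤ n) : (nbarRank m n : ℤ) =
    ∑ j ∈ range n,
      coeff n (2 * X ^ (m.natAbs + 2 * j + 1) * qDelannoy (m.natAbs + j) j) := by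
  have hfiber (j : ℕ) :
      coeff n (2 * X ^ (m.natAbs + 2 * j + 1) * qDelannoy (m.natAbs + j) j) =
        ∑ p : n.Partition with p.parts.sup = m.toNat + j + 1 ∧ p.parts.card = (-m).toNat + j + 1,
          2 ^ #p.parts.toFinset := by
    rw [sum_partition_sup_card]
    obtain ⟨r, rfl | rfl⟩ := m.eq_nat_or_neg <;>
      simp only [Int.natAbs_natCast, Int.toNat_natCast, Int.natAbs_neg, Int.toNat_neg_natCast,
        neg_neg, zero_add]
    · congr 3; ring_nf
    · rw [qDelannoy_comm j]; congr 3; ring_nf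
  simp only [hfiber, nbarRank_eq_sum]
  push_cast
  rw [← sum_fiberwise_of_maps_to (t := range n)
    (g := fun p : n.Partition ↦ min p.parts.sup p.parts.card - 1)]
  · refine sum_congr rfl fun j _ ↦ ?_
    rw [filter_filter]
    refine congrArg (Finset.sum · _) (filter_congr fun p _ ↦ ?_)
    have hc := partition_card_pos p hn
    have hs := partition_sup_pos p hn
    omega
  · intro p _
    have hc := partition_card_le p
    exact mem_range.mpr (by omega)

/-! ### Series of power series -/

section XPowSeries

variable {R : Type*} [CommRing R]

theorem coeff_X_pow_mul_of_lt {n k : ℕ} (h : n < k) (f : R⟦X⟧) : coeff n (X ^ k * f) = 0 := by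
  rw [coeff_X_pow_mul', if_neg h.not_ge]

variable [TopologicalSpace R] {e : ℕ → ℕ}

theorem hasSum_coeff_X_pow_mul (he : ∀ i, i ≤ e i) (f : ℕ → R⟦X⟧) {n N : ℕ} (h : n < N) :
    HasSum (fun i ↦ coeff n (X ^ e i * f i)) (∑ i ∈ range N, coeff n (X ^ e i * f i)) :=
  hasSum_sum_of_ne_finset_zero fun i hi ↦
    coeff_X_pow_mul_of_lt (h.trans_le ((not_lt.mp (mt mem_range.mpr hi)).trans (he i))) _

theorem summable_X_pow_mul (he : ∀ i, i ≤ e i) (f : ℕ → R⟦X⟧) :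
    Summable fun i ↦ X ^ e i * f i :=
  (WithPiTopology.summable_iff_summable_coeff R).mpr fun n ↦
    (hasSum_coeff_X_pow_mul he f n.lt_succ_self).summable

theorem coeff_tsum_X_pow_mul [T2Space R] (he : ∀ i, i ≤ e i) (f : ℕ → R⟦X⟧) {n N : ℕ}
    (h : n < N) :
    coeff n (∑' i, X ^ e i * f i) = ∑ i ∈ range N, coeff n (X ^ e i * f i) :=
  ((WithPiTopology.hasSum_iff_hasSum_coeff R).mp (summable_X_pow_mul he f).hasSum n).unique
    (hasSum_coeff_X_pow_mul he f h)

end XPowSeries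

theorem sum_Ioo_neg_succ {M : Type*} [AddCommMonoid M] (g : ℤ → M) (n : ℕ) :
    ∑ m ∈ Ioo (-(n + 1) : ℤ) (n + 1), g m =
      g 0 + ∑ r ∈ range n, (g (r + 1) + g (-(r + 1))) := by
  induction n with
  | zero => simp [show Ioo (-1 : ℤ) 1 = {0} from rfl]
  | succ n ih =>
    have hIoo : Ioo (-((n + 1 : ℕ) + 1) : ℤ) ((n + 1 : ℕ) + 1) =
        insert (n + 1 : ℤ) (insert (-(n + 1) : ℤ) (Ioo (-(n + 1) : ℤ) (n + 1))) := by
      ext m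
      simp only [mem_Ioo, mem_insert]
      omega
    rw [hIoo, sum_insert (by simp only [mem_insert, mem_Ioo]; omega),
      sum_insert (by simp only [mem_Ioo]; omega), ih, sum_range_succ]
    abel

/-! ### The rank series -/

/-- `2 * X ^ (r + 1) * rankSeries r` is the generating function of the overpartitions of rank
`r`, and of those of rank `-r`, up to the empty overpartition. -/
noncomputable def rankSeries (r : ℕ) : ℤ⟦X⟧ := ∑' j, X ^ (2 * j) * qDelannoy (r + j) j

theorem summable_rankSeries (r : ℕ) :
    Summable fun j ↦ (X : ℤ⟦X⟧) ^ (2 * j) * qDelannoy (r + j) j :=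
  summable_X_pow_mul (fun j ↦ by omega) _

theorem nbarRank_eq_coeff (m : ℤ) {n : ℕ} (hn : 1 ≤ n) :
    (nbarRank m n : ℤ) = coeff n (2 * X ^ (m.natAbs + 1) * rankSeries m.natAbs) := by
  have hterm (j : ℕ) : 2 * X ^ (m.natAbs + 1) * (X ^ (2 * j) * qDelannoy (m.natAbs + j) j) =
      X ^ (m.natAbs + 2 * j + 1) * (2 * qDelannoy (m.natAbs + j) j) := by ring
  rw [nbarRank_eq_sum_coeff_qDelannoy m hn, rankSeries,
    ← (summable_rankSeries _).tsum_mul_left, tsum_congr hterm,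
    coeff_tsum_X_pow_mul (fun j ↦ by omega) _ n.lt_succ_self, sum_range_succ,
    coeff_X_pow_mul_of_lt (by omega), add_zero]
  exact sum_congr rfl fun j _ ↦ congrArg _ (by ring)

/-- The generating function `∑ j, X ^ j * qDelannoy (r + j) j` along a diagonal. It is the ratio of
the overpartition generating function and a partial theta function, see
`diagonalSeries_eq_mul_partialTheta`. -/
noncomputable def diagonalSeries (r : ℕ) : ℤ⟦X⟧ := ∑' j, X ^ j * qDelannoy (r + j) j

theorem summable_diagonalSeries (r : ℕ) :
    Summable fun j ↦ (X : ℤ⟦X⟧) ^ j * qDelannoy (r + j) j :=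
  summable_X_pow_mul (fun _ ↦ le_rfl) _

theorem diagonalSeries_succ_sub (r : ℕ) : diagonalSeries (r + 1) - diagonalSeries r =
    X ^ (r + 2) * (rankSeries (r + 1) + X * rankSeries (r + 2)) := by
  have hterm (j : ℕ) : X ^ (j + 1) * qDelannoy (r + 1 + (j + 1)) (j + 1) -
      X ^ (j + 1) * qDelannoy (r + (j + 1)) (j + 1) =
      X ^ (r + 2) * (X ^ (2 * j) * qDelannoy (r + 1 + j) j +
        X * (X ^ (2 * j) * qDelannoy (r + 2 + j) j)) := by
    rw [show r + 1 + (j + 1) = r + 1 + j + 1 by ring, show r + 2 + j = r + 1 + j + 1 by ring,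
      show r + (j + 1) = r + 1 + j by ring, qDelannoy_succ_succ]
    ring
  have hT := (summable_rankSeries (r + 2)).mul_left X
  have hTT := (summable_rankSeries (r + 1)).add hT
  have hD := (summable_diagonalSeries (r + 1)).sub (summable_diagonalSeries r)
  simp only [diagonalSeries, rankSeries]
  rw [← (summable_rankSeries _).tsum_mul_left, ← (summable_rankSeries _).tsum_add hT,
    ← hTT.tsum_mul_left, ← (summable_diagonalSeries _).tsum_sub (summable_diagonalSeries _),
    hD.tsum_eq_zero_add, tsum_congr hterm]
  simp only [qDelannoy_zero_right, sub_self, zero_add]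

theorem diagonalSeries_succ_sub_X_mul (s : ℕ) :
    diagonalSeries (s + 1) - X * diagonalSeries (s + 2) =
      rankSeries s + X * rankSeries (s + 1) := by
  have hterm (j : ℕ) : X ^ (j + 1) * qDelannoy (s + 1 + (j + 1)) (j + 1) -
      X * (X ^ j * qDelannoy (s + 2 + j) j) =
      X ^ (2 * (j + 1)) * qDelannoy (s + (j + 1)) (j + 1) +
        X * (X ^ (2 * j) * qDelannoy (s + 1 + j) j) := by
    rw [show s + 1 + (j + 1) = s + 1 + j + 1 by ring, show s + 2 + j = s + 1 + j + 1 by ring,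
      show s + (j + 1) = s + 1 + j by ring, qDelannoy_succ_succ']
    ring
  have hT := (summable_rankSeries (s + 1)).mul_left X
  have hD := (summable_diagonalSeries (s + 2)).mul_left X
  simp only [diagonalSeries, rankSeries]
  rw [← (summable_rankSeries (s + 1)).tsum_mul_left,
    ← (summable_diagonalSeries (s + 2)).tsum_mul_left,
    (summable_diagonalSeries (s + 1)).tsum_eq_zero_add, (summable_rankSeries s).tsum_eq_zero_add,
    add_sub_assoc, ← ((summable_nat_add_iff 1).mpr (summable_diagonalSeries (s + 1))).tsum_sub hD,
    add_assoc (_ * _), ← ((summable_nat_add_iff 1).mpr (summable_rankSeries s)).tsum_add hT,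
    tsum_congr hterm]
  simp only [qDelannoy_zero_right, mul_zero]

theorem diagonalSeries_zero_sub_X_mul :
    diagonalSeries 0 - X * diagonalSeries 1 = 1 + X * (rankSeries 0 + X * rankSeries 1) := by
  have hterm (j : ℕ) : X ^ (j + 1) * qDelannoy (0 + (j + 1)) (j + 1) -
      X * (X ^ j * qDelannoy (1 + j) j) =
      X * (X ^ (2 * j) * qDelannoy (0 + j) j + X * (X ^ (2 * j) * qDelannoy (1 + j) j)) := by
    rw [zero_add, zero_add, add_comm 1 j, qDelannoy_succ_succ', qDelannoy_comm j (j + 1)]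
    ring
  have hT := (summable_rankSeries 1).mul_left X
  have hTT := (summable_rankSeries 0).add hT
  have hD := (summable_diagonalSeries 1).mul_left X
  simp only [diagonalSeries, rankSeries]
  rw [← (summable_rankSeries _).tsum_mul_left, ← (summable_diagonalSeries _).tsum_mul_left,
    (summable_diagonalSeries _).tsum_eq_zero_add, add_sub_assoc,
    ← ((summable_nat_add_iff 1).mpr (summable_diagonalSeries _)).tsum_sub hD,
    ← (summable_rankSeries _).tsum_add hT, ← hTT.tsum_mul_left, tsum_congr hterm]
  simp only [qDelannoy_zero_right, pow_zero, mul_one]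

/-- The generating function of all overpartitions: by `diagonalSeries_add_X_pow_mul` and
`overpartitionSeries_mul_theta` it is the inverse of `∑ n : ℤ, (-1) ^ n * X ^ n ^ 2`. -/
noncomputable def overpartitionSeries : ℤ⟦X⟧ := 1 + 2 * X * diagonalSeries 1

theorem diagonalSeries_add_X_pow_mul (r : ℕ) :
    diagonalSeries r + X ^ (r + 2) * diagonalSeries (r + 2) = overpartitionSeries := by
  induction r with
  | zero =>
    rw [overpartitionSeries]
    linear_combination diagonalSeries_zero_sub_X_mul - X * diagonalSeries_succ_sub_X_mul 0
  | succ r ih =>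
    rw [← ih]
    linear_combination diagonalSeries_succ_sub r -
      X ^ (r + 2) * diagonalSeries_succ_sub_X_mul (r + 1)

/-- The partial theta function `∑ n, (-1) ^ n * X ^ (n ^ 2 + n + n * r)`. -/
noncomputable def partialTheta (r : ℕ) : ℤ⟦X⟧ := ∑' n : ℕ, X ^ (n ^ 2 + n + n * r) * (-1) ^ n

theorem summable_partialTheta (r : ℕ) :
    Summable fun n : ℕ ↦ (X : ℤ⟦X⟧) ^ (n ^ 2 + n + n * r) * (-1) ^ n :=
  summable_X_pow_mul (fun n ↦ by nlinarith) _

theorem partialTheta_add_X_pow_mul (r : ℕ) :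
    partialTheta r + X ^ (r + 2) * partialTheta (r + 2) = 1 := by
  have hterm (n : ℕ) : (X : ℤ⟦X⟧) ^ ((n + 1) ^ 2 + (n + 1) + (n + 1) * r) * (-1) ^ (n + 1) =
      -(X ^ (r + 2) * (X ^ (n ^ 2 + n + n * (r + 2)) * (-1) ^ n)) := by ring
  rw [partialTheta, partialTheta, (summable_partialTheta r).tsum_eq_zero_add,
    ← (summable_partialTheta (r + 2)).tsum_mul_left, tsum_congr hterm, tsum_neg]
  ring

theorem diagonalSeries_eq_mul_partialTheta (r : ℕ) :
    diagonalSeries r = overpartitionSeries * partialTheta r := by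
  have hdvd (k r : ℕ) : X ^ k ∣ diagonalSeries r - overpartitionSeries * partialTheta r := by
    induction k generalizing r with
    | zero => simp
    | succ k ih =>
      have hstep : diagonalSeries r - overpartitionSeries * partialTheta r = X ^ (r + 1) *
          (X * -(diagonalSeries (r + 2) - overpartitionSeries * partialTheta (r + 2))) := by
        linear_combination diagonalSeries_add_X_pow_mul r -
          overpartitionSeries * partialTheta_add_X_pow_mul r
      rw [hstep, pow_succ']
      exact (mul_dvd_mul_left _ (ih _).neg_right).mul_left _
  rw [← sub_eq_zero]
  ext n
  exact X_pow_dvd_iff.mp (hdvd (n + 1) r) n n.lt_succ_self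

/-! ### The rank difference modulo 3 -/

local notation "χ" => quadraticChar (ZMod 3)

theorem nbar_sub_nbar_eq_sum_nbarRank (n : ℕ) : (nbar 0 3 (n + 1) : ℤ) - nbar 1 3 (n + 1) =
    nbarRank 0 (n + 1) + ∑ r ∈ range n, (2 - 3 * χ (r + 1) ^ 2) * nbarRank (r + 1) (n + 1) := by
  have hind (a m : ℤ) : (if m ≡ a [ZMOD 3] then (nbarRank m (n + 1) : ℤ) else 0) =
      (if (m - a : ZMod 3) = 0 then 1 else 0) * nbarRank m (n + 1) := by
    rw [ite_zero_mul, one_mul]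
    refine if_congr ?_ rfl rfl
    rw [sub_eq_zero, ZMod.intCast_eq_intCast_iff]
    rfl
  have hweight : ∀ k : ZMod 3, ((if k = 0 then 1 else 0) - (if k - 1 = 0 then 1 else 0) : ℤ) +
      ((if -k = 0 then 1 else 0) - (if -k - 1 = 0 then 1 else 0)) = 2 - 3 * χ k ^ 2 := by decide
  have hneg (m : ℤ) : (nbarRank (-m) (n + 1) : ℤ) = nbarRank m (n + 1) := by
    rw [nbarRank_eq_coeff _ n.succ_pos, nbarRank_eq_coeff _ n.succ_pos, Int.natAbs_neg]
  rw [nbar_eq_sum_nbarRank 0 3 n.succ_pos, nbar_eq_sum_nbarRank 1 3 n.succ_pos]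
  push_cast
  rw [sum_filter, sum_filter, ← sum_sub_distrib, sum_Ioo_neg_succ]
  simp only [hind, ← sub_mul]
  simp only [hneg, ← add_mul, ← hweight]
  simp

theorem two_X_mul_rankSeries_add_sum (M : ℕ) :
    2 * X * rankSeries 0 +
        ∑ r ∈ range M, (2 - 3 * (χ (r + 1) : ℤ⟦X⟧) ^ 2) * (2 * X ^ (r + 2) * rankSeries (r + 1)) =
      2 * X * diagonalSeries 1 -
        6 * ∑ s ∈ range M, X ^ (s + 1) * ((χ s : ℤ⟦X⟧) * diagonalSeries (s + 1)) +
        X ^ (M + 1) * (2 * (2 - 3 * (χ (M + 1) : ℤ⟦X⟧) ^ 2) * diagonalSeries (M + 1) -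
          2 * (2 - 3 * (χ (M + 2) : ℤ⟦X⟧) ^ 2) * rankSeries M) := by
  have hχ : ∀ k : ZMod 3, χ (k + 1) ^ 2 - χ (k + 2) ^ 2 = χ k := by decide
  have hχ' : ∀ k : ZMod 3, χ (k + 1) ^ 2 + χ (k + 2) ^ 2 + χ (k + 3) ^ 2 = 2 := by decide
  induction M with
  | zero =>
    simp only [range_zero, sum_empty, Nat.cast_zero, zero_add, show χ 1 = 1 by decide,
      show χ 2 = -1 by decide]
    push_cast
    ring
  | succ M ih =>
    have h : (χ (M + 1) : ℤ⟦X⟧) ^ 2 - (χ (M + 2) : ℤ⟦X⟧) ^ 2 = χ M := by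
      exact_mod_cast congrArg (Int.cast (R := ℤ⟦X⟧)) (hχ M)
    have h' : (χ (M + 1) : ℤ⟦X⟧) ^ 2 + (χ (M + 2) : ℤ⟦X⟧) ^ 2 + (χ (M + 3) : ℤ⟦X⟧) ^ 2 = 2 := by
      exact_mod_cast congrArg (Int.cast (R := ℤ⟦X⟧)) (hχ' M)
    rw [sum_range_succ, ← add_assoc, ih, sum_range_succ]
    push_cast
    rw [add_assoc (M : ZMod 3) 1 1, add_assoc (M : ZMod 3) 1 2, one_add_one_eq_two,
      show (1 + 2 : ZMod 3) = 3 by norm_num]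
    linear_combination (4 - 6 * (χ (M + 2) : ℤ⟦X⟧) ^ 2) * X ^ (M + 1) *
      diagonalSeries_succ_sub_X_mul M
      - 6 * X ^ (M + 1) * diagonalSeries (M + 1) * h
      - 6 * X ^ (M + 2) * rankSeries (M + 1) * h'

theorem nbar_sub_nbar_eq_coeff_rankSeries (n : ℕ) :
    (nbar 0 3 (n + 1) : ℤ) - nbar 1 3 (n + 1) = coeff (n + 1) (2 * X * rankSeries 0 +
      ∑ r ∈ range (n + 1),
        (2 - 3 * (χ (r + 1) : ℤ⟦X⟧) ^ 2) * (2 * X ^ (r + 2) * rankSeries (r + 1))) := by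
  have hterm (r : ℕ) : (2 - 3 * χ (r + 1) ^ 2) * (nbarRank (r + 1) (n + 1) : ℤ) =
      coeff (n + 1)
        ((2 - 3 * (χ (r + 1) : ℤ⟦X⟧) ^ 2) * (2 * X ^ (r + 2) * rankSeries (r + 1))) := by
    rw [nbarRank_eq_coeff _ n.succ_pos, ← coeff_C_mul]
    simp [show ((r : ℤ) + 1).natAbs = r + 1 by omega]
  have hlast : coeff (n + 1) ((2 - 3 * (χ (n + 1) : ℤ⟦X⟧) ^ 2) *
      (2 * X ^ (n + 2) * rankSeries (n + 1))) = 0 := by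
    rw [show (2 - 3 * (χ (n + 1) : ℤ⟦X⟧) ^ 2) * (2 * X ^ (n + 2) * rankSeries (n + 1)) =
      X ^ (n + 2) * (2 * (2 - 3 * (χ (n + 1) : ℤ⟦X⟧) ^ 2) * rankSeries (n + 1)) by ring]
    exact coeff_X_pow_mul_of_lt (Nat.lt_succ_self _) _
  rw [nbar_sub_nbar_eq_sum_nbarRank, nbarRank_eq_coeff 0 n.succ_pos,
    sum_congr rfl fun r _ ↦ hterm r, map_add, map_sum, sum_range_succ, hlast, add_zero,
    Int.natAbs_zero, zero_add, pow_one]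

/-- The quotient of `∑ n, (N̄(0,3,n) - N̄(1,3,n)) X ^ n` by `overpartitionSeries`, up to the
constant coefficient. -/
noncomputable def rankDiffSeries : ℤ⟦X⟧ :=
  1 - 6 * ∑' r : ℕ, X ^ (r + 1) * ((χ r : ℤ⟦X⟧) * partialTheta (r + 1))

theorem overpartitionSeries_mul_rankDiffSeries : overpartitionSeries * rankDiffSeries =
    1 + 2 * X * diagonalSeries 1 -
      6 * ∑' r : ℕ, X ^ (r + 1) * ((χ r : ℤ⟦X⟧) * diagonalSeries (r + 1)) := by
  have hsum : Summable fun r : ℕ ↦ (X : ℤ⟦X⟧) ^ (r + 1) * ((χ r : ℤ⟦X⟧) * partialTheta (r + 1)) :=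
    summable_X_pow_mul (fun r ↦ r.le_succ) _
  have hterm (r : ℕ) : X ^ (r + 1) * ((χ r : ℤ⟦X⟧) * diagonalSeries (r + 1)) =
      overpartitionSeries * (X ^ (r + 1) * ((χ r : ℤ⟦X⟧) * partialTheta (r + 1))) := by
    rw [diagonalSeries_eq_mul_partialTheta]
    ring
  rw [tsum_congr hterm, hsum.tsum_mul_left, ← overpartitionSeries, rankDiffSeries]
  ring

theorem nbar_sub_nbar_eq_coeff {n : ℕ} (hn : 1 ≤ n) :
    (nbar 0 3 n : ℤ) - nbar 1 3 n = coeff n (overpartitionSeries * rankDiffSeries) := by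
  obtain ⟨n, rfl⟩ := Nat.exists_eq_succ_of_ne_zero (Nat.one_le_iff_ne_zero.mp hn)
  have hsix (f : ℤ⟦X⟧) : coeff (n + 1) (6 * f) = 6 * coeff (n + 1) f := coeff_C_mul _ f 6
  have htail (f : ℤ⟦X⟧) : coeff (n + 1) (X ^ (n + 1 + 1) * f) = 0 :=
    coeff_X_pow_mul_of_lt (Nat.lt_succ_self _) f
  rw [nbar_sub_nbar_eq_coeff_rankSeries, two_X_mul_rankSeries_add_sum,
    overpartitionSeries_mul_rankDiffSeries, map_add, htail, add_zero, add_sub_assoc, map_add,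
    coeff_one, if_neg n.succ_ne_zero, zero_add, map_sub, map_sub, hsix, hsix, map_sum,
    coeff_tsum_X_pow_mul (fun r ↦ r.le_succ) _ (Nat.lt_succ_self _), sum_range_succ _ (n + 1),
    htail, add_zero]

/-! ### A Liouville-type identity over the solutions of `m ^ 2 + u * v = N` -/

local notation "ε(" n ")" => ((Int.negOnePow n : ℤˣ) : ℤ)

theorem coe_negOnePow_congr {a b : ℤ} (h : 2 ∣ a - b) : ε(a) = ε(b) := by
  rw [(Int.negOnePow_eq_iff a b).mpr (even_iff_two_dvd.mpr h)]

theorem coe_negOnePow_eq_neg {a b : ℤ} (h : ¬2 ∣ a - b) : ε(a) = -ε(b) := by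
  rw [coe_negOnePow_congr (show 2 ∣ a - (b + 1) by omega), Int.negOnePow_succ, Units.val_neg]

/-- The triples `(m, u, v)` with `u` and `v` positive and `m ^ 2 + u * v = N`. -/
noncomputable def liouvilleTriples (N : ℤ) : Finset (ℤ × ℤ × ℤ) :=
  {t ∈ Icc (-N) N ×ˢ Icc 1 N ×ˢ Icc 1 N | t.1 ^ 2 + t.2.1 * t.2.2 = N}

theorem mem_liouvilleTriples {N m u v : ℤ} :
    (m, u, v) ∈ liouvilleTriples N ↔ 0 < u ∧ 0 < v ∧ m ^ 2 + u * v = N := by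
  simp only [liouvilleTriples, mem_filter, mem_product, mem_Icc]
  refine ⟨fun ⟨⟨_, _hu, _hv⟩, h⟩ ↦ ⟨by omega, by omega, h⟩, fun ⟨hu, hv, h⟩ ↦ ?_⟩
  refine ⟨⟨⟨?_, ?_⟩, ⟨by omega, ?_⟩, by omega, ?_⟩, h⟩ <;>
    nlinarith [mul_pos hu hv, sq_nonneg m, sq_nonneg (m - 1), sq_nonneg (m + 1)]

/-- The sum of `f m u v` over `liouvilleTriples N`. -/
noncomputable def liouvilleSum (N : ℤ) (f : ℤ → ℤ → ℤ → ℤ) : ℤ :=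
  ∑ t ∈ liouvilleTriples N, f t.1 t.2.1 t.2.2

section LiouvilleSum

variable {N : ℤ} {f g : ℤ → ℤ → ℤ → ℤ}

theorem liouvilleSum_add : (liouvilleSum N fun m u v ↦ f m u v + g m u v) =
    liouvilleSum N f + liouvilleSum N g :=
  sum_add_distrib

theorem liouvilleSum_sub : (liouvilleSum N fun m u v ↦ f m u v - g m u v) =
    liouvilleSum N f - liouvilleSum N g :=
  sum_sub_distrib _ _

theorem liouvilleSum_const_mul (c : ℤ) :
    (liouvilleSum N fun m u v ↦ c * f m u v) = c * liouvilleSum N f :=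
  (mul_sum _ _ _).symm

theorem liouvilleSum_congr_ite {P Q : ℤ → ℤ → ℤ → Prop} [∀ m u v, Decidable (P m u v)]
    [∀ m u v, Decidable (Q m u v)] {i j : ℤ × ℤ × ℤ → ℤ × ℤ × ℤ}
    (hi : ∀ m u v, 0 < u → 0 < v → m ^ 2 + u * v = N → P m u v →
      i (m, u, v) ∈ liouvilleTriples N ∧ Q (i (m, u, v)).1 (i (m, u, v)).2.1 (i (m, u, v)).2.2 ∧
      j (i (m, u, v)) = (m, u, v) ∧
      f m u v = g (i (m, u, v)).1 (i (m, u, v)).2.1 (i (m, u, v)).2.2)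
    (hj : ∀ m u v, 0 < u → 0 < v → m ^ 2 + u * v = N → Q m u v →
      j (m, u, v) ∈ liouvilleTriples N ∧ P (j (m, u, v)).1 (j (m, u, v)).2.1 (j (m, u, v)).2.2 ∧
      i (j (m, u, v)) = (m, u, v)) :
    (liouvilleSum N fun m u v ↦ if P m u v then f m u v else 0) =
      liouvilleSum N fun m u v ↦ if Q m u v then g m u v else 0 := by
  have hi' (t) (ht : t ∈ {t ∈ liouvilleTriples N | P t.1 t.2.1 t.2.2}) := by
    obtain ⟨⟨hu, hv, h⟩, hP⟩ := (mem_filter.trans (and_congr_left' mem_liouvilleTriples)).mp ht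
    exact hi _ _ _ hu hv h hP
  have hj' (t) (ht : t ∈ {t ∈ liouvilleTriples N | Q t.1 t.2.1 t.2.2}) := by
    obtain ⟨⟨hu, hv, h⟩, hQ⟩ := (mem_filter.trans (and_congr_left' mem_liouvilleTriples)).mp ht
    exact hj _ _ _ hu hv h hQ
  simp only [liouvilleSum, ← sum_filter]
  exact sum_nbij' i j (fun t ht ↦ mem_filter.mpr ⟨(hi' t ht).1, (hi' t ht).2.1⟩)
    (fun t ht ↦ mem_filter.mpr ⟨(hj' t ht).1, (hj' t ht).2.1⟩)
    (fun t ht ↦ (hi' t ht).2.2.1) (fun t ht ↦ (hj' t ht).2.2) (fun t ht ↦ (hi' t ht).2.2.2)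

theorem liouvilleSum_neg_left (f : ℤ → ℤ → ℤ → ℤ) :
    (liouvilleSum N fun m u v ↦ f (-m) u v) = liouvilleSum N f := by
  have hmem : ∀ t ∈ liouvilleTriples N, (-t.1, t.2) ∈ liouvilleTriples N := fun t ht ↦
    mem_liouvilleTriples.mpr (by simpa only [neg_sq] using mem_liouvilleTriples.mp ht)
  exact sum_nbij' (fun t ↦ (-t.1, t.2)) (fun t ↦ (-t.1, t.2)) hmem hmem
    (fun t _ ↦ by rw [neg_neg]) (fun t _ ↦ by rw [neg_neg]) fun _ _ ↦ rfl

theorem liouvilleSum_swap (f : ℤ → ℤ → ℤ → ℤ) :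
    (liouvilleSum N fun m u v ↦ f m v u) = liouvilleSum N f := by
  have hmem : ∀ t ∈ liouvilleTriples N, (t.1, t.2.2, t.2.1) ∈ liouvilleTriples N := fun t ht ↦ by
    obtain ⟨hu, hv, h⟩ := mem_liouvilleTriples.mp ht
    exact mem_liouvilleTriples.mpr ⟨hv, hu, by rwa [mul_comm]⟩
  exact sum_nbij' (fun t ↦ (t.1, t.2.2, t.2.1)) (fun t ↦ (t.1, t.2.2, t.2.1)) hmem hmem
    (fun _ _ ↦ rfl) (fun _ _ ↦ rfl) fun _ _ ↦ rfl

theorem liouvilleSum_congr (h : ∀ m u v, f m u v = g m u v) : liouvilleSum N f = liouvilleSum N g :=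
  sum_congr rfl fun _ _ ↦ h _ _ _

end LiouvilleSum

/-- The weight of the Liouville-type identity, as a function of the residues modulo 3. -/
def liouvilleWeight (m u v : ZMod 3) : ℤ := 3 * (χ m ^ 2 - χ (u + v) ^ 2) * χ (u - v)

theorem liouvilleWeight_eq : ∀ m u v : ZMod 3,
    liouvilleWeight m u v = χ v - χ u - χ (u - v - m) - χ (u - v + m) := by
  decide

theorem liouvilleWeight_neg : ∀ m u v, liouvilleWeight (-m) u v = liouvilleWeight m u v := by
  decide

theorem liouvilleWeight_swap : ∀ m u v, liouvilleWeight m v u = -liouvilleWeight m u v := by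
  decide

theorem liouvilleSum_weight_of_odd (N : ℤ) :
    (liouvilleSum N fun m u v ↦
      if u < v ∧ ¬2 ∣ u - v then ε(m + u) * liouvilleWeight m u v else 0) =
    liouvilleSum N fun m u v ↦ if ¬2 ∣ u - v then ε(m + u) * (χ (v - u + 2 * m) - χ u) else 0 := by
  set L := liouvilleSum N fun m u v ↦
    if u < v ∧ ¬2 ∣ u - v then ε(m + u) * liouvilleWeight m u v else 0
  set R := liouvilleSum N fun m u v ↦
    if ¬2 ∣ u - v then ε(m + u) * (χ (v - u + 2 * m) - χ u) else 0
  have hL : (liouvilleSum N fun m u v ↦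
      if v < u ∧ ¬2 ∣ u - v then ε(m + u) * liouvilleWeight m u v else 0) = L := by
    rw [← liouvilleSum_swap]
    refine liouvilleSum_congr fun m u v ↦ ?_
    simp only [dvd_sub_comm (a := (2 : ℤ)) (b := v)]
    split_ifs with h
    · rw [coe_negOnePow_eq_neg (show ¬2 ∣ m + v - (m + u) by omega), liouvilleWeight_swap,
        neg_mul_neg]
    · rfl
  have hR : (liouvilleSum N fun m u v ↦
      if ¬2 ∣ u - v then ε(m + u) * (χ v - χ (u - v - m)) else 0) = R := by
    rw [← liouvilleSum_swap]
    refine liouvilleSum_congr fun m u v ↦ ?_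
    simp only [dvd_sub_comm (a := (2 : ℤ)) (b := v), ite_not]
    split_ifs with h
    · rfl
    · have hχ : ∀ m u v : ZMod 3, χ (v - u - m) = χ (v - u + 2 * m) := by decide
      rw [coe_negOnePow_eq_neg (show ¬2 ∣ m + v - (m + u) by omega), hχ]
      ring
  have hLR : L + L = R + R := by
    nth_rewrite 2 [← hL]
    nth_rewrite 1 [← hR]
    rw [← liouvilleSum_add, ← liouvilleSum_add]
    refine liouvilleSum_congr fun m u v ↦ ?_
    have hχ : ∀ m u v : ZMod 3, χ (v - u + 2 * m) = -χ (u - v + m) := by decide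
    rw [hχ, liouvilleWeight_eq]
    split_ifs <;> first | omega | ring
  omega

theorem liouvilleSum_of_odd (N : ℤ) :
    (liouvilleSum N fun m u v ↦ if ¬2 ∣ u - v then ε(m + u) * χ (v - u + 2 * m) else 0) =
      2 * liouvilleSum N fun m u v ↦ if ¬2 ∣ v ∧ u + 2 * m < v then ε(m) * χ v else 0 := by
  have hpos : (liouvilleSum N fun m u v ↦
      if ¬2 ∣ u - v ∧ 0 < v - u + 2 * m then ε(m + u) * χ (v - u + 2 * m) else 0) =
      liouvilleSum N fun m u v ↦ if ¬2 ∣ v ∧ u + 2 * m < v then ε(m) * χ v else 0 := by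
    refine liouvilleSum_congr_ite (i := fun t ↦ (t.1 - t.2.1, t.2.1, t.2.2 - t.2.1 + 2 * t.1))
      (j := fun t ↦ (t.1 + t.2.1, t.2.1, t.2.2 - t.2.1 - 2 * t.1)) ?_ ?_
    · intro m u v hu hv h hP
      simp only [mem_liouvilleTriples, Prod.mk.injEq, true_and]
      refine ⟨⟨hu, hP.2, by linarith⟩, by omega, by omega, ?_⟩
      rw [coe_negOnePow_congr (show 2 ∣ m + u - (m - u) by omega)]
      push_cast
      rfl
    · intro m u v hu hv h hQ
      simp only [mem_liouvilleTriples, Prod.mk.injEq, true_and]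
      exact ⟨⟨hu, by omega, by linarith⟩, by omega, by omega⟩
  have hneg : (liouvilleSum N fun m u v ↦
      if ¬2 ∣ u - v ∧ v - u + 2 * m < 0 then ε(m + u) * χ (v - u + 2 * m) else 0) =
      liouvilleSum N fun m u v ↦
        if ¬2 ∣ u - v ∧ 0 < v - u + 2 * m then ε(m + u) * χ (v - u + 2 * m) else 0 := by
    rw [← liouvilleSum_swap, ← liouvilleSum_neg_left]
    refine liouvilleSum_congr fun m u v ↦ ?_
    have hiff : (¬2 ∣ v - u ∧ u - v + 2 * -m < 0) ↔ ¬2 ∣ u - v ∧ 0 < v - u + 2 * m := by omega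
    rw [if_congr hiff rfl rfl]
    split_ifs with h
    · have hχ : ∀ m u v : ZMod 3, χ (u - v + 2 * -m) = -χ (v - u + 2 * m) := by decide
      rw [coe_negOnePow_eq_neg (show ¬2 ∣ -m + v - (m + u) by omega), Int.cast_neg, hχ, neg_mul_neg]
    · rfl
  rw [← hpos, two_mul]
  nth_rewrite 2 [← hneg]
  rw [← liouvilleSum_add]
  refine liouvilleSum_congr fun m u v ↦ ?_
  split_ifs <;> omega

theorem liouvilleSum_weight_two_mul_eq_zero (N : ℤ) :
    (liouvilleSum N fun m u v ↦
      if u < v ∧ 2 ∣ u - v ∧ v - u < 2 * m then ε(m + u) * liouvilleWeight m u v else 0) = 0 := by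
  rw [← self_eq_neg, neg_eq_neg_one_mul, ← liouvilleSum_const_mul]
  simp only [mul_ite, mul_zero]
  let i (t : ℤ × ℤ × ℤ) : ℤ × ℤ × ℤ :=
    (t.2.2 + (t.2.1 - t.2.2) / 2, t.1 + (t.2.1 - t.2.2) / 2, t.1 - (t.2.1 - t.2.2) / 2)
  have hψ : ∀ m v k : ZMod 3, liouvilleWeight m (v + 2 * k) v =
      -liouvilleWeight (v + k) (m + k) (m - k) := by decide
  have hi (m u v : ℤ) (hu : 0 < u) (hv : 0 < v) (h : m ^ 2 + u * v = N)
      (hP : u < v ∧ 2 ∣ u - v ∧ v - u < 2 * m) : i (m, u, v) ∈ liouvilleTriples N ∧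
      ((i (m, u, v)).2.1 < (i (m, u, v)).2.2 ∧ 2 ∣ (i (m, u, v)).2.1 - (i (m, u, v)).2.2 ∧
        (i (m, u, v)).2.2 - (i (m, u, v)).2.1 < 2 * (i (m, u, v)).1) ∧
      i (i (m, u, v)) = (m, u, v) ∧ ε(m + u) * liouvilleWeight m u v =
        -1 * (ε((i (m, u, v)).1 + (i (m, u, v)).2.1) *
          liouvilleWeight (i (m, u, v)).1 (i (m, u, v)).2.1 (i (m, u, v)).2.2) := by
    obtain ⟨huv, ⟨k, hk⟩, hm⟩ := hP
    obtain rfl : u = v + 2 * k := by omega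
    have hk' : (v + 2 * k - v) / 2 = k := by omega
    have hk'' : (m + k - (m - k)) / 2 = k := by omega
    simp only [i, hk', hk'', mem_liouvilleTriples, Prod.mk.injEq]
    refine ⟨⟨by omega, by omega, by linarith⟩, by omega, by omega, ?_⟩
    rw [coe_negOnePow_congr (show 2 ∣ m + (v + 2 * k) - (v + k + (m + k)) by omega)]
    push_cast
    rw [hψ]
    ring
  exact liouvilleSum_congr_ite hi fun m u v hu hv h hP ↦
    (hi m u v hu hv h hP).imp_right (And.imp_right And.left)

theorem liouvilleSum_weight_eq_zero (N : ℤ) :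
    (liouvilleSum N fun m u v ↦
      if u < v ∧ 2 ∣ u - v ∧ v - u < 2 * |m| then ε(m + u) * liouvilleWeight m u v else 0) = 0 := by
  have hneg : (liouvilleSum N fun m u v ↦
      if u < v ∧ 2 ∣ u - v ∧ v - u < 2 * -m then ε(m + u) * liouvilleWeight m u v else 0) = 0 := by
    refine Eq.trans ?_ (liouvilleSum_weight_two_mul_eq_zero N)
    rw [← liouvilleSum_neg_left]
    refine liouvilleSum_congr fun m u v ↦ ?_
    rw [neg_neg, coe_negOnePow_congr (show 2 ∣ -m + u - (m + u) by omega), Int.cast_neg,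
      liouvilleWeight_neg]
  refine Eq.trans ?_ (congrArg₂ (· + ·) (liouvilleSum_weight_two_mul_eq_zero N) hneg)
  rw [← liouvilleSum_add]
  refine liouvilleSum_congr fun m u v ↦ ?_
  have hm : v - u < 2 * |m| ↔ v - u < 2 * m ∨ v - u < 2 * -m := by
    rw [abs_eq_max_neg]
    omega
  split_ifs <;> omega

theorem liouvilleSum_ite_sub_add (N : ℤ) :
    (liouvilleSum N fun m u v ↦
      if 2 ∣ u - v ∧ 2 * |m| < v - u then ε(m + u) * χ (u - v + m) else 0) =
      liouvilleSum N fun m u v ↦ if 2 ∣ u ∧ u + 2 * m < v then ε(m) * χ v else 0 := by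
  refine liouvilleSum_congr_ite
    (i := fun t ↦ (t.1 - t.2.1, 2 * t.2.1, t.1 + (t.2.2 - t.2.1) / 2))
    (j := fun t ↦ (t.1 + t.2.1 / 2, t.2.1 / 2, 2 * t.2.2 - t.2.1 / 2 - 2 * t.1)) ?_ ?_
  · rintro m u v hu hv h ⟨⟨k, hk⟩, hm⟩
    obtain rfl : v = u - 2 * k := by omega
    have hk' : (u - 2 * k - u) / 2 = -k := by omega
    have hu' : 2 * u / 2 = u := by omega
    have hm' := abs_lt.mp (show |m| < -k by omega)
    simp only [hk', hu', mem_liouvilleTriples, Prod.mk.injEq, true_and]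
    refine ⟨⟨by omega, by omega, by linarith⟩, by omega, by omega, ?_⟩
    have hχ : ∀ m u k : ZMod 3, u - (u - 2 * k) + m = m + -k := by decide
    rw [coe_negOnePow_congr (show 2 ∣ m + u - (m - u) by omega)]
    push_cast
    rw [hχ]
  · rintro m u v hu hv h ⟨⟨k, rfl⟩, hm⟩
    have hk : 2 * k / 2 = k := by omega
    have hm' := abs_lt.mpr (show -(v - m - k) < m + k ∧ m + k < v - m - k by omega)
    have hk' : (2 * v - k - 2 * m - k) / 2 = v - m - k := by omega
    simp only [hk, hk', mem_liouvilleTriples, Prod.mk.injEq, true_and]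
    exact ⟨⟨by omega, by omega, by linarith⟩, by omega, by omega⟩

theorem liouvilleSum_weight_of_even (N : ℤ) :
    (liouvilleSum N fun m u v ↦
      if 2 ∣ u - v ∧ 2 * |m| < v - u then ε(m + u) * liouvilleWeight m u v else 0) =
    (liouvilleSum N fun m u v ↦
      if 2 ∣ u - v ∧ 2 * |m| < v - u then ε(m + u) * (χ v - χ u) else 0) -
      2 * liouvilleSum N fun m u v ↦ if 2 ∣ u ∧ u + 2 * m < v then ε(m) * χ v else 0 := by
  have hminus : (liouvilleSum N fun m u v ↦
      if 2 ∣ u - v ∧ 2 * |m| < v - u then ε(m + u) * χ (u - v - m) else 0) =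
      liouvilleSum N fun m u v ↦
        if 2 ∣ u - v ∧ 2 * |m| < v - u then ε(m + u) * χ (u - v + m) else 0 := by
    rw [← liouvilleSum_neg_left]
    refine liouvilleSum_congr fun m u v ↦ ?_
    rw [abs_neg, coe_negOnePow_congr (show 2 ∣ -m + u - (m + u) by omega), Int.cast_neg,
      sub_neg_eq_add]
  rw [← liouvilleSum_ite_sub_add, two_mul]
  nth_rewrite 1 [← hminus]
  rw [← liouvilleSum_add, ← liouvilleSum_sub]
  refine liouvilleSum_congr fun m u v ↦ ?_
  rw [liouvilleWeight_eq]
  split_ifs <;> ring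

theorem liouvilleSum_weight_split (N : ℤ) :
    (liouvilleSum N fun m u v ↦ if u < v then ε(m + u) * liouvilleWeight m u v else 0) =
      (liouvilleSum N fun m u v ↦
        if u < v ∧ ¬2 ∣ u - v then ε(m + u) * liouvilleWeight m u v else 0) +
      (liouvilleSum N fun m u v ↦
        if u < v ∧ 2 ∣ u - v ∧ v - u < 2 * |m| then ε(m + u) * liouvilleWeight m u v else 0) +
      (liouvilleSum N fun m u v ↦
        if 2 ∣ u - v ∧ 2 * |m| < v - u then ε(m + u) * liouvilleWeight m u v else 0) +
      liouvilleSum N fun m u v ↦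
        if v - u = 2 * |m| then ε(m + u) * liouvilleWeight m u v else 0 := by
  simp only [← liouvilleSum_add]
  refine liouvilleSum_congr fun m u v ↦ ?_
  obtain rfl | huv := eq_or_ne u v
  · simp [liouvilleWeight]
  · have hm := abs_nonneg m
    split_ifs <;> omega

theorem liouvilleSum_odd_sub_liouvilleSum_even (N : ℤ) :
    (liouvilleSum N fun m u v ↦ if ¬2 ∣ v ∧ u + 2 * m < v then ε(m) * χ v else 0) -
      (liouvilleSum N fun m u v ↦ if 2 ∣ u ∧ u + 2 * m < v then ε(m) * χ v else 0) =
      -liouvilleSum N fun m u v ↦ if 2 ∣ u - v ∧ u + 2 * m < v then ε(m + u) * χ v else 0 := by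
  rw [neg_eq_neg_one_mul, ← liouvilleSum_const_mul, ← liouvilleSum_sub]
  refine liouvilleSum_congr fun m u v ↦ ?_
  by_cases hu : 2 ∣ u
  · rw [coe_negOnePow_congr (show 2 ∣ m + u - m by omega)]
    split_ifs <;> omega
  · rw [coe_negOnePow_eq_neg (show ¬2 ∣ m + u - m by omega)]
    split_ifs <;> first | omega | ring

theorem liouvilleSum_of_even (N : ℤ) :
    2 * (liouvilleSum N fun m u v ↦ if ¬2 ∣ v ∧ u + 2 * m < v then ε(m) * χ v else 0) -
      2 * (liouvilleSum N fun m u v ↦ if 2 ∣ u ∧ u + 2 * m < v then ε(m) * χ v else 0) +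
      (liouvilleSum N fun m u v ↦
        if 2 ∣ u - v ∧ 2 * |m| < v - u then ε(m + u) * (χ v - χ u) else 0) =
    (liouvilleSum N fun m u v ↦ if v - u = 2 * |m| then ε(m + u) * χ u else 0) -
      liouvilleSum N fun m u v ↦ if 2 ∣ u - v then ε(m + u) * χ u else 0 := by
  have hmerge := liouvilleSum_odd_sub_liouvilleSum_even N
  have hneg : (liouvilleSum N fun m u v ↦
      if 2 ∣ u - v ∧ u - 2 * m < v then ε(m + u) * χ v else 0) =
      liouvilleSum N fun m u v ↦ if 2 ∣ u - v ∧ u + 2 * m < v then ε(m + u) * χ v else 0 := by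
    rw [← liouvilleSum_neg_left]
    refine liouvilleSum_congr fun m u v ↦ ?_
    rw [coe_negOnePow_congr (show 2 ∣ -m + u - (m + u) by omega), mul_neg, sub_neg_eq_add]
  have hswap : (liouvilleSum N fun m u v ↦
      if 2 ∣ u - v ∧ u - v < 2 * |m| then ε(m + u) * χ v else 0) =
      liouvilleSum N fun m u v ↦ if 2 ∣ u - v ∧ v - u < 2 * |m| then ε(m + u) * χ u else 0 := by
    rw [← liouvilleSum_swap]
    refine liouvilleSum_congr fun m u v ↦ ?_
    simp only [dvd_sub_comm (a := (2 : ℤ)) (b := v)]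
    split_ifs with h
    · rw [coe_negOnePow_congr (show 2 ∣ m + v - (m + u) by omega)]
    · rfl
  have hcombine :
      (liouvilleSum N fun m u v ↦
        if 2 ∣ u - v ∧ 2 * |m| < v - u then ε(m + u) * (χ v - χ u) else 0) -
      (liouvilleSum N fun m u v ↦ if 2 ∣ u - v ∧ u + 2 * m < v then ε(m + u) * χ v else 0) -
      (liouvilleSum N fun m u v ↦ if 2 ∣ u - v ∧ u - 2 * m < v then ε(m + u) * χ v else 0) +
      (liouvilleSum N fun m u v ↦ if 2 ∣ u - v ∧ u - v < 2 * |m| then ε(m + u) * χ v else 0) -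
      (liouvilleSum N fun m u v ↦ if 2 ∣ u - v ∧ v - u < 2 * |m| then ε(m + u) * χ u else 0) =
      (liouvilleSum N fun m u v ↦ if v - u = 2 * |m| then ε(m + u) * χ u else 0) -
      liouvilleSum N fun m u v ↦ if 2 ∣ u - v then ε(m + u) * χ u else 0 := by
    simp only [← liouvilleSum_add, ← liouvilleSum_sub]
    refine liouvilleSum_congr fun m u v ↦ ?_
    rw [mul_sub]
    rcases abs_cases m with ⟨hm, _⟩ | ⟨hm, _⟩ <;> rw [hm] <;> split_ifs <;> omega
  linarith

theorem liouvilleSum_weight_eq (N : ℤ) :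
    (liouvilleSum N fun m u v ↦ if u < v then ε(m + u) * liouvilleWeight m u v else 0) =
      -(liouvilleSum N fun m u _ ↦ ε(m + u) * χ u) +
      (liouvilleSum N fun m u v ↦ if v - u = 2 * |m| then ε(m + u) * χ u else 0) +
      liouvilleSum N fun m u v ↦
        if v - u = 2 * |m| then ε(m + u) * liouvilleWeight m u v else 0 := by
  have hodd : (liouvilleSum N fun m u v ↦
      if ¬2 ∣ u - v then ε(m + u) * (χ (v - u + 2 * m) - χ u) else 0) =
      (liouvilleSum N fun m u v ↦ if ¬2 ∣ u - v then ε(m + u) * χ (v - u + 2 * m) else 0) +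
      (liouvilleSum N fun m u v ↦ if 2 ∣ u - v then ε(m + u) * χ u else 0) -
      liouvilleSum N fun m u _ ↦ ε(m + u) * χ u := by
    rw [← liouvilleSum_add, ← liouvilleSum_sub]
    refine liouvilleSum_congr fun m u v ↦ ?_
    rw [mul_sub]
    split_ifs <;> omega
  have heven := liouvilleSum_of_even N
  rw [liouvilleSum_weight_split, liouvilleSum_weight_of_odd, hodd, liouvilleSum_of_odd,
    liouvilleSum_weight_eq_zero, liouvilleSum_weight_of_even]
  linarith

theorem liouvilleSum_boundary (N : ℤ) (f : ℤ → ℤ → ℤ → ℤ) :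
    (liouvilleSum N fun m u v ↦ if v - u = 2 * |m| then f m u v else 0) =
      ∑ R ∈ Icc 1 N with R ^ 2 = N, ∑ m ∈ Ioo (-R) R, f m (R - |m|) (R + |m|) := by
  rw [liouvilleSum, ← sum_filter, sum_sigma']
  refine sum_nbij' (fun t ↦ ⟨t.2.1 + |t.1|, t.1⟩)
    (fun p ↦ (p.2, p.1 - |p.2|, p.1 + |p.2|)) ?_ ?_ ?_ ?_ ?_
  · rintro ⟨m, u, v⟩ ht
    obtain ⟨ht, hm⟩ := mem_filter.mp ht
    obtain ⟨hu, hv, h⟩ := mem_liouvilleTriples.mp ht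
    obtain rfl : v = u + 2 * |m| := by dsimp only at hm; omega
    have hR : (u + |m|) ^ 2 = N := by linarith [sq_abs m]
    have hm := abs_nonneg m
    simp only [mem_sigma, mem_filter, mem_Icc, mem_Ioo, ← abs_lt]
    exact ⟨⟨⟨by omega, by nlinarith⟩, hR⟩, by omega⟩
  · rintro ⟨R, m⟩ hp
    simp only [mem_sigma, mem_filter, mem_Icc, mem_Ioo, ← abs_lt] at hp
    obtain ⟨⟨_, h⟩, hm⟩ := hp
    have hm' := abs_nonneg m
    dsimp only
    exact mem_filter.mpr ⟨mem_liouvilleTriples.mpr ⟨by omega, by omega, by linarith [sq_abs m]⟩,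
      by dsimp only; ring⟩
  · rintro ⟨m, u, v⟩ ht
    have hm := (mem_filter.mp ht).2
    dsimp only at hm ⊢
    rw [add_sub_cancel_right, Prod.mk.injEq, Prod.mk.injEq]
    exact ⟨rfl, rfl, by omega⟩
  · rintro ⟨R, m⟩ -
    simp
  · rintro ⟨m, u, v⟩ ht
    have hm := (mem_filter.mp ht).2
    dsimp only at hm ⊢
    rw [add_sub_cancel_right, show u + |m| + |m| = v by omega]

theorem two_mul_sum_range_χ_succ (n : ℕ) : 2 * ∑ r ∈ range n, χ (r + 1) = χ n + χ n ^ 2 := by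
  induction n with
  | zero => simp
  | succ n ih =>
    have hχ : ∀ k : ZMod 3, χ k + χ k ^ 2 + 2 * χ (k + 1) = χ (k + 1) + χ (k + 1) ^ 2 := by decide
    rw [sum_range_succ, mul_add, ih, hχ, Nat.cast_succ]

theorem sum_Ioo_neg_abs (h : ℤ → ℤ) (n : ℕ) :
    ∑ m ∈ Ioo (-(n + 1) : ℤ) (n + 1), h |m| = h 0 + 2 * ∑ r ∈ range n, h (r + 1) := by
  have hr (r : ℕ) : |(r : ℤ) + 1| = r + 1 := abs_of_nonneg (by positivity)
  rw [sum_Ioo_neg_succ]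
  simp only [abs_neg, hr, abs_zero, ← two_mul, mul_sum]

theorem sum_Ioo_weight_eq_zero {R : ℤ} (hR : 0 < R) :
    ∑ m ∈ Ioo (-R) R, ε(m + (R - |m|)) * liouvilleWeight m (R - |m| : ℤ) (R + |m| : ℤ) = 0 := by
  obtain ⟨n, rfl⟩ : ∃ n : ℕ, R = n + 1 := ⟨(R - 1).toNat, by omega⟩
  have hterm (m : ℤ) : ε(m + (n + 1 - |m|)) *
      liouvilleWeight m (n + 1 - |m| : ℤ) (n + 1 + |m| : ℤ) =
      3 * ε(n + 1) * (1 - χ (n + 1) ^ 2) * χ (|m| : ℤ) := by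
    have hχ : ∀ R m : ZMod 3, liouvilleWeight m (R - m) (R + m) = 3 * (1 - χ R ^ 2) * χ m := by
      decide
    have habs : liouvilleWeight m (n + 1 - |m| : ℤ) (n + 1 + |m| : ℤ) =
        liouvilleWeight (|m| : ℤ) (n + 1 - |m| : ℤ) (n + 1 + |m| : ℤ) := by
      rcases abs_choice m with h | h <;> rw [h]
      rw [Int.cast_neg, liouvilleWeight_neg]
    rw [habs, coe_negOnePow_congr (show 2 ∣ m + (n + 1 - |m|) - (n + 1) by
      rcases abs_choice m with h | h <;> omega)]
    push_cast
    rw [hχ]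
    ring
  have hzero : ∀ k : ZMod 3, (1 - χ (k + 1) ^ 2) * (χ k + χ k ^ 2) = 0 := by decide
  have hsum := two_mul_sum_range_χ_succ n
  rw [sum_congr rfl fun m _ ↦ hterm m, ← mul_sum, sum_Ioo_neg_abs fun m ↦ χ m]
  push_cast
  rw [hsum, MulChar.map_zero, zero_add, mul_assoc, hzero, mul_zero]

theorem sum_Ioo_χ {R : ℤ} (hR : 0 < R) :
    ∑ m ∈ Ioo (-R) R, ε(m + (R - |m|)) * χ (R - |m| : ℤ) = ε(R) * χ R ^ 2 := by
  obtain ⟨n, rfl⟩ : ∃ n : ℕ, R = n + 1 := ⟨(R - 1).toNat, by omega⟩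
  have hterm (m : ℤ) : ε(m + (n + 1 - |m|)) * χ (n + 1 - |m| : ℤ) =
      ε(n + 1) * χ (n + 1 - |m| : ℤ) := by
    rw [coe_negOnePow_congr (show 2 ∣ m + (n + 1 - |m|) - (n + 1) by
      rcases abs_choice m with h | h <;> omega)]
  have hreflect : ∑ r ∈ range n, χ (n + 1 - (r + 1)) = ∑ r ∈ range n, χ (r + 1) := by
    rw [← sum_range_reflect fun r : ℕ ↦ χ (r + 1)]
    refine sum_congr rfl fun r hr ↦ ?_
    obtain ⟨k, rfl⟩ := Nat.exists_eq_add_of_lt (mem_range.mp hr)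
    rw [show r + k + 1 - 1 - r = k by omega]
    push_cast
    ring_nf
  have hχ : ∀ k : ZMod 3, χ (k + 1) + (χ k + χ k ^ 2) = χ (k + 1) ^ 2 := by decide
  rw [sum_congr rfl fun m _ ↦ hterm m, ← mul_sum, sum_Ioo_neg_abs fun m ↦ χ (n + 1 - m : ℤ)]
  push_cast
  rw [hreflect, two_mul_sum_range_χ_succ, sub_zero, hχ]

theorem liouville_identity (N : ℤ) :
    (liouvilleSum N fun m u v ↦ if u < v then ε(m + u) * liouvilleWeight m u v else 0) =
      -(liouvilleSum N fun m u _ ↦ ε(m + u) * χ u) +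
        ∑ R ∈ Icc 1 N with R ^ 2 = N, ε(R) * χ R ^ 2 := by
  have hpos (R) (hR : R ∈ {R ∈ Icc 1 N | R ^ 2 = N}) : 0 < R :=
    (mem_Icc.mp (mem_filter.mp hR).1).1
  rw [liouvilleSum_weight_eq, liouvilleSum_boundary N fun m u _ ↦ ε(m + u) * χ u,
    liouvilleSum_boundary N fun m u v ↦ ε(m + u) * liouvilleWeight m u v,
    sum_eq_zero fun R hR ↦ sum_Ioo_weight_eq_zero (hpos R hR), add_zero,
    sum_congr rfl fun R hR ↦ sum_Ioo_χ (hpos R hR)]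

/-! ### Theta series and Lambert series -/

/-- The theta series `∑ m : ℤ, a m * X ^ m ^ 2`, encoded by its coefficients. -/
noncomputable def thetaSeries (a : ℤ → ℤ) : ℤ⟦X⟧ :=
  PowerSeries.mk fun n ↦ ∑ m ∈ Ioo (-(n + 1) : ℤ) (n + 1) with m ^ 2 = (n : ℤ), a m

/-- The Lambert series `∑ u v, f u v * X ^ (u * v)` over the pairs of positive integers, encoded by
its coefficients. -/
noncomputable def lambertSeries (f : ℤ → ℤ → ℤ) : ℤ⟦X⟧ :=
  PowerSeries.mk fun n ↦ ∑ p ∈ n.divisorsAntidiagonal, f p.1 p.2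

theorem mem_Ioo_of_sq_eq {m n : ℤ} (h : m ^ 2 = n) : m ∈ Ioo (-(n + 1)) (n + 1) := by
  rw [mem_Ioo]
  constructor <;> nlinarith [sq_nonneg (m - 1), sq_nonneg (m + 1)]

theorem coeff_thetaSeries_mul_lambertSeries (a : ℤ → ℤ) (f : ℤ → ℤ → ℤ) (N : ℕ) :
    coeff N (thetaSeries a * lambertSeries f) = liouvilleSum N fun m u v ↦ a m * f u v := by
  simp only [coeff_mul, thetaSeries, lambertSeries, coeff_mk, sum_mul_sum, ← sum_product',
    sum_sigma']
  refine sum_bij' (fun x _ ↦ (x.2.1, (x.2.2.1 : ℤ), (x.2.2.2 : ℤ)))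
    (fun t _ ↦ ⟨(t.1.natAbs ^ 2, t.2.1.natAbs * t.2.2.natAbs), t.1, t.2.1.natAbs, t.2.2.natAbs⟩)
    ?_ ?_ ?_ ?_ fun _ _ ↦ rfl
  · rintro ⟨⟨i, j⟩, m, u, v⟩ h
    simp only [mem_sigma, HasAntidiagonal.mem_antidiagonal, mem_product, mem_filter,
      Nat.mem_divisorsAntidiagonal] at h
    obtain ⟨rfl, ⟨_, hm⟩, rfl, huv⟩ := h
    rw [mem_liouvilleTriples, hm]
    exact ⟨mod_cast Nat.pos_of_ne_zero (left_ne_zero_of_mul huv),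
      mod_cast Nat.pos_of_ne_zero (right_ne_zero_of_mul huv), by push_cast; ring⟩
  · rintro ⟨m, u, v⟩ h
    obtain ⟨hu, hv, h⟩ := mem_liouvilleTriples.mp h
    lift u to ℕ using hu.le
    lift v to ℕ using hv.le
    have hm : m ^ 2 = ((m.natAbs ^ 2 : ℕ) : ℤ) := by simp
    simp only [mem_sigma, HasAntidiagonal.mem_antidiagonal, mem_product, mem_filter,
      Nat.mem_divisorsAntidiagonal, Int.natAbs_natCast]
    exact ⟨by rw [hm] at h; exact_mod_cast h, ⟨mem_Ioo_of_sq_eq hm, hm⟩, trivial,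
      mul_ne_zero (by omega) (by omega)⟩
  · rintro ⟨⟨i, j⟩, m, u, v⟩ h
    simp only [mem_sigma, HasAntidiagonal.mem_antidiagonal, mem_product, mem_filter,
      Nat.mem_divisorsAntidiagonal] at h
    obtain ⟨_, ⟨_, hm⟩, rfl, _⟩ := h
    have hi : m.natAbs ^ 2 = i := by zify; rw [sq_abs, hm]
    simp [hi]
  · rintro ⟨m, u, v⟩ h
    obtain ⟨hu, hv, -⟩ := mem_liouvilleTriples.mp h
    simp [hu.le, hv.le]

theorem coeff_thetaSeries_of_even {a : ℤ → ℤ} (ha : ∀ m, a (-m) = a m) (n : ℕ) :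
    coeff n (thetaSeries a) = (if n = 0 then a 0 else 0) +
      2 * ∑ r ∈ range n, if (r + 1) ^ 2 = n then a (r + 1) else 0 := by
  have habs (m : ℤ) :
      (if m ^ 2 = n then a m else 0) = if |m| ^ 2 = n then a |m| else 0 := by
    rw [sq_abs]
    rcases abs_choice m with h | h <;> rw [h]
    rw [ha]
  rw [thetaSeries, coeff_mk, sum_filter, sum_congr rfl fun m _ ↦ habs m,
    sum_Ioo_neg_abs (fun m ↦ if m ^ 2 = (n : ℤ) then a m else 0) n]
  norm_cast
  simp [eq_comm]

theorem coeff_thetaSeries_of_even_of_zero {a : ℤ → ℤ} (ha : ∀ m, a (-m) = a m) (ha₀ : a 0 = 0)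
    (n : ℕ) : coeff n (thetaSeries a) = 2 * ∑ R ∈ Icc 1 (n : ℤ) with R ^ 2 = (n : ℤ), a R := by
  rw [coeff_thetaSeries_of_even ha, ha₀, ite_self, zero_add, sum_filter]
  refine congrArg _ (sum_nbij' (fun r ↦ (r : ℤ) + 1) (fun R ↦ (R - 1).toNat) ?_ ?_ ?_ ?_ ?_)
  · simp only [mem_range, mem_Icc]; omega
  · simp only [mem_range, mem_Icc]; omega
  · simp
  · simp only [mem_Icc]; omega
  · intro r _
    norm_cast

theorem expand_thetaSeries {p : ℕ} (hp : p ≠ 0) (a : ℤ → ℤ) :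
    expand (p ^ 2) (pow_ne_zero 2 hp) (thetaSeries a) =
      thetaSeries fun m ↦ if (p : ℤ) ∣ m then a (m / p) else 0 := by
  have hp' : (p : ℤ) ≠ 0 := mod_cast hp
  ext n
  rw [thetaSeries, thetaSeries, coeff_mk, ← sum_filter, filter_filter]
  by_cases h : p ^ 2 ∣ n
  · obtain ⟨n, rfl⟩ := h
    rw [coeff_expand_mul, coeff_mk]
    refine sum_bij' (fun m _ ↦ p * m) (fun m _ ↦ m / p) ?_ ?_ ?_ ?_ ?_
    · intro m hm
      have hsq : ((p : ℤ) * m) ^ 2 = (p ^ 2 * n : ℕ) := by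
        rw [mul_pow, (mem_filter.mp hm).2]
        push_cast
        rfl
      exact mem_filter.mpr ⟨mem_Ioo_of_sq_eq hsq, hsq, dvd_mul_right _ _⟩
    · intro m hm
      obtain ⟨-, hsq, m, rfl⟩ := mem_filter.mp hm
      rw [mul_pow, Nat.cast_mul, Nat.cast_pow, mul_right_inj' (pow_ne_zero 2 hp')] at hsq
      rw [Int.mul_ediv_cancel_left _ hp']
      exact mem_filter.mpr ⟨mem_Ioo_of_sq_eq hsq, hsq⟩
    · exact fun m _ ↦ Int.mul_ediv_cancel_left _ hp'
    · exact fun m hm ↦ Int.mul_ediv_cancel' (mem_filter.mp hm).2.2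
    · exact fun m _ ↦ by rw [Int.mul_ediv_cancel_left _ hp']
  · rw [coeff_expand_of_not_dvd _ _ _ h, filter_false_of_mem, sum_empty]
    rintro _ - ⟨hsq, m, rfl⟩
    refine h ((Int.natCast_dvd_natCast).mp ⟨m ^ 2, ?_⟩)
    rw [← hsq]
    push_cast
    ring

theorem thetaSeries_negOnePow : (thetaSeries fun m ↦ ε(m)) = 1 - 2 * X * partialTheta 1 := by
  have hterm (k : ℕ) : (X : ℤ⟦X⟧) * (X ^ (k ^ 2 + k + k * 1) * (-1) ^ k) =
      X ^ (k + 1) ^ 2 * C ((-1) ^ k) := by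
    rw [map_pow, map_neg, map_one]
    ring
  ext n
  have htwo (f : ℤ⟦X⟧) : coeff n (2 * f) = 2 * coeff n f := coeff_C_mul _ f 2
  rw [coeff_thetaSeries_of_even fun m ↦ by rw [Int.negOnePow_neg], partialTheta, mul_assoc,
    ← (summable_partialTheta 1).tsum_mul_left, tsum_congr hterm, map_sub, htwo,
    coeff_tsum_X_pow_mul (fun k ↦ by nlinarith) _ n.lt_succ_self, sum_range_succ,
    coeff_X_pow_mul_of_lt (by nlinarith), add_zero, coeff_one, Int.negOnePow_zero, Units.val_one,
    sub_eq_add_neg, ← mul_neg, ← sum_neg_distrib]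
  refine congrArg _ (congrArg _ (sum_congr rfl fun k _ ↦ ?_))
  rw [coeff_mul_C, coeff_X_pow, Int.negOnePow_succ]
  simp [Int.coe_negOnePow_natCast, eq_comm, apply_ite Neg.neg]

theorem overpartitionSeries_mul_theta :
    overpartitionSeries * (thetaSeries fun m ↦ ε(m)) = 1 := by
  rw [thetaSeries_negOnePow]
  have hP : overpartitionSeries = 1 + 2 * X * diagonalSeries 1 := rfl
  linear_combination hP + 2 * X * diagonalSeries_eq_mul_partialTheta 1

theorem lambertSeries_eq_tsum (f : ℤ → ℤ → ℤ) {a : ℕ → ℕ} {e u v : ℕ → ℕ → ℕ}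
    (ha : ∀ r, r < a r) (he : ∀ r n, n ≤ e r n) (huv : ∀ r n, u r n * v r n = a r + e r n)
    (hinj : ∀ r n r' n', u r n = u r' n' → v r n = v r' n' → r = r' ∧ n = n')
    (hf : ∀ x y : ℕ, 0 < x → 0 < y → f x y ≠ 0 → ∃ r n, u r n = x ∧ v r n = y) :
    lambertSeries f = ∑' r, X ^ a r * ∑' n, X ^ e r n * (f (u r n) (v r n) : ℤ⟦X⟧) := by
  have hpow (r n : ℕ) (g : ℤ⟦X⟧) : X ^ a r * (X ^ e r n * g) = X ^ (a r + e r n) * g := by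
    rw [← mul_assoc, ← pow_add]
  ext N
  have hterm (r : ℕ) : coeff N (X ^ a r * ∑' n, X ^ e r n * (f (u r n) (v r n) : ℤ⟦X⟧)) =
      ∑ n ∈ range (N + 1), if u r n * v r n = N then f (u r n) (v r n) else 0 := by
    have hsum : Summable fun n ↦ (X : ℤ⟦X⟧) ^ e r n * (f (u r n) (v r n) : ℤ⟦X⟧) :=
      summable_X_pow_mul (he r) fun n ↦ (f (u r n) (v r n) : ℤ⟦X⟧)
    rw [← hsum.tsum_mul_left, tsum_congr fun n ↦ hpow r n _,
      coeff_tsum_X_pow_mul (e := fun n ↦ a r + e r n) (fun n ↦ (he r n).trans le_add_self)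
        (fun n ↦ (f (u r n) (v r n) : ℤ⟦X⟧)) N.lt_succ_self]
    refine sum_congr rfl fun n _ ↦ ?_
    rw [← eq_intCast (C : ℤ →+* ℤ⟦X⟧), coeff_mul_C, coeff_X_pow, huv, ite_mul, one_mul, zero_mul]
    exact if_congr eq_comm rfl rfl
  rw [coeff_tsum_X_pow_mul (e := a) (fun r ↦ (ha r).le) _ N.lt_succ_self,
    sum_congr rfl fun r _ ↦ hterm r, ← sum_product', ← sum_filter, lambertSeries, coeff_mk]
  symm
  refine sum_of_injOn (fun x ↦ (u x.1 x.2, v x.1 x.2)) ?_ ?_ ?_ fun _ _ ↦ rfl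
  · exact fun x _ y _ h ↦ Prod.ext_iff.mpr
      (hinj _ _ _ _ (congrArg Prod.fst h) (congrArg Prod.snd h))
  · rintro ⟨r, n⟩ h
    have hN : u r n * v r n = N := (mem_filter.mp h).2
    have := ha r
    have := huv r n
    exact Nat.mem_divisorsAntidiagonal.mpr ⟨hN, by omega⟩
  · rintro ⟨x, y⟩ h hnot
    by_contra hne
    obtain ⟨hxy, hN⟩ := Nat.mem_divisorsAntidiagonal.mp h
    obtain ⟨r, n, rfl, rfl⟩ := hf x y (Nat.pos_of_ne_zero fun h ↦ hN (by simp [← hxy, h]))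
      (Nat.pos_of_ne_zero fun h ↦ hN (by simp [← hxy, h])) hne
    have := ha r
    have := he r n
    have := (huv r n).symm.trans hxy
    refine hnot ⟨(r, n), mem_filter.mpr ⟨mem_product.mpr ⟨?_, ?_⟩, hxy⟩, rfl⟩ <;>
      simp only [mem_range] <;> omega

/-! ### The 9-dissection of the rank difference -/

theorem expand_theta_negOnePow : expand 9 (by norm_num) (thetaSeries fun m ↦ ε(m)) =
    thetaSeries fun m ↦ if (m : ZMod 3) = 0 then ε(m) else 0 := by
  have h := expand_thetaSeries (p := 3) (by norm_num) fun m ↦ ε(m)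
  norm_num at h
  rw [h]
  refine congrArg _ (funext fun m ↦ ?_)
  have hdvd : (m : ZMod 3) = 0 ↔ 3 ∣ m := ZMod.intCast_zmod_eq_zero_iff_dvd m 3
  simp only [hdvd]
  split_ifs
  · exact coe_negOnePow_congr (by omega)
  · rfl

theorem rankDiffSeries_eq_lambertSeries : rankDiffSeries =
    1 + 6 * lambertSeries fun u v ↦ if u < v then ε(u) * χ (v - u) else 0 := by
  rw [lambertSeries_eq_tsum _ (a := fun r ↦ r + 1) (e := fun r n ↦ n ^ 2 + n + n * (r + 1))
    (u := fun _ n ↦ n + 1) (v := fun r n ↦ n + 1 + r) (fun r ↦ by omega) (fun r n ↦ by nlinarith)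
    (fun r n ↦ by ring) (fun r n r' n' ↦ by omega), rankDiffSeries, sub_eq_add_neg, ← mul_neg,
    ← tsum_neg]
  · refine congrArg _ (congrArg _ (tsum_congr fun r ↦ ?_))
    rw [partialTheta, ← (summable_partialTheta _).tsum_mul_left, ← mul_neg, ← tsum_neg]
    refine congrArg _ (tsum_congr fun n ↦ ?_)
    rcases Nat.eq_zero_or_pos r with rfl | hr
    · simp
    · rw [if_pos (by omega)]
      push_cast
      rw [Int.negOnePow_succ]
      simp [Int.coe_negOnePow_natCast]
      ring
  · intro x y hx _ hne
    have hxy : (x : ℤ) < y := by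
      by_contra h
      exact hne (if_neg h)
    exact ⟨y - x, x - 1, by omega, by omega⟩

/-- The Eisenstein series `1 - 2 * ∑ u v, (-1) ^ u * (u / 3) * X ^ (u * v)` of weight one. -/
noncomputable def eisensteinLambertSeries : ℤ⟦X⟧ := 1 - 2 * lambertSeries fun u _ ↦ ε(u) * χ u

theorem liouvilleWeight_eq_ite : ∀ m u v : ZMod 3, liouvilleWeight m u v =
    3 * ((if m = 0 then 1 else 0) - (if u * v = 2 then 1 else 0)) * χ (v - u) := by
  decide

theorem coeff_theta_sub_coeff_theta_ite (N : ℕ) : coeff N (thetaSeries fun m ↦ ε(m)) -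
    coeff N (thetaSeries fun m ↦ if (m : ZMod 3) = 0 then ε(m) else 0) =
    2 * ∑ R ∈ Icc 1 (N : ℤ) with R ^ 2 = (N : ℤ), ε(R) * χ R ^ 2 := by
  have hχ : ∀ k : ZMod 3, χ k ^ 2 = 1 - if k = 0 then 1 else 0 := by decide
  rw [← coeff_thetaSeries_of_even_of_zero (a := fun R ↦ ε(R) * χ R ^ 2) _ _ N]
  · simp only [thetaSeries, coeff_mk, ← sum_sub_distrib]
    refine sum_congr rfl fun m _ ↦ ?_
    rw [hχ]
    split_ifs <;> ring
  · intro m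
    simp only [Int.cast_neg, hχ, neg_eq_zero, Int.negOnePow_neg]
  · simp

theorem theta_ite_mul_rankDiffSeries :
    (thetaSeries fun m ↦ if (m : ZMod 3) = 0 then ε(m) else 0) * rankDiffSeries =
      (thetaSeries fun m ↦ ε(m)) * (eisensteinLambertSeries + 6 * lambertSeries fun u v ↦
        if u < v ∧ (u * v : ZMod 3) = 2 then ε(u) * χ (v - u) else 0) := by
  set θ := thetaSeries fun m ↦ ε(m)
  set θ₃ := thetaSeries fun m ↦ if (m : ZMod 3) = 0 then ε(m) else 0
  set F := lambertSeries fun u v ↦ if u < v then ε(u) * χ (v - u) else 0 with hF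
  set G := lambertSeries fun u v ↦
    if u < v ∧ (u * v : ZMod 3) = 2 then ε(u) * χ (v - u) else 0 with hG
  set E := lambertSeries fun u _ ↦ ε(u) * χ u with hE
  rw [rankDiffSeries_eq_lambertSeries, ← hF, eisensteinLambertSeries, ← hE]
  ext N
  have htwo (f : ℤ⟦X⟧) : coeff N (2 * f) = 2 * coeff N f := coeff_C_mul _ f 2
  have hsix (f : ℤ⟦X⟧) : coeff N (6 * f) = 6 * coeff N f := coeff_C_mul _ f 6
  have hweight : (liouvilleSum N fun m u v ↦
      if u < v then ε(m + u) * liouvilleWeight m u v else 0) =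
      3 * (coeff N (θ₃ * F) - coeff N (θ * G)) := by
    rw [coeff_thetaSeries_mul_lambertSeries, coeff_thetaSeries_mul_lambertSeries,
      ← liouvilleSum_sub, ← liouvilleSum_const_mul]
    refine liouvilleSum_congr fun m u v ↦ ?_
    rw [liouvilleWeight_eq_ite, Int.negOnePow_add, Units.val_mul]
    split_ifs <;> simp_all <;> ring
  have hcoeff : (liouvilleSum N fun m u _ ↦ ε(m + u) * χ u) = coeff N (θ * E) := by
    rw [coeff_thetaSeries_mul_lambertSeries]
    refine liouvilleSum_congr fun m u v ↦ ?_
    rw [Int.negOnePow_add, Units.val_mul, mul_assoc]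
  have hliouville := liouville_identity N
  have hsquares := coeff_theta_sub_coeff_theta_ite N
  rw [hweight, hcoeff] at hliouville
  rw [show θ₃ * (1 + 6 * F) = θ₃ + 6 * (θ₃ * F) by ring,
    show θ * (1 - 2 * E + 6 * G) = θ - 2 * (θ * E) + 6 * (θ * G) by ring, map_add, map_add,
    map_sub, hsix, htwo, hsix]
  linarith

theorem overpartitionSeries_mul_rankDiffSeries_eq_expand_mul :
    overpartitionSeries * rankDiffSeries = expand 9 (by norm_num) overpartitionSeries *
      (eisensteinLambertSeries + 6 * lambertSeries fun u v ↦
        if u < v ∧ (u * v : ZMod 3) = 2 then ε(u) * χ (v - u) else 0) := by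
  have hexpand : expand 9 (by norm_num) overpartitionSeries *
      (thetaSeries fun m ↦ if (m : ZMod 3) = 0 then ε(m) else 0) = 1 := by
    rw [← expand_theta_negOnePow, ← map_mul, overpartitionSeries_mul_theta, map_one]
  linear_combination (expand 9 (by norm_num) overpartitionSeries * overpartitionSeries) *
    theta_ite_mul_rankDiffSeries - overpartitionSeries * rankDiffSeries * hexpand +
    expand 9 (by norm_num) overpartitionSeries *
      (eisensteinLambertSeries + 6 * lambertSeries fun u v ↦
        if u < v ∧ (u * v : ZMod 3) = 2 then ε(u) * χ (v - u) else 0) *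
      overpartitionSeries_mul_theta

theorem expand_tsum_X_pow_mul {R : Type*} [CommRing R] [TopologicalSpace R] [T2Space R] {p : ℕ}
    (hp : p ≠ 0) {e : ℕ → ℕ} (he : ∀ i, i ≤ e i) (f : ℕ → R⟦X⟧) :
    expand p hp (∑' i, X ^ e i * f i) = ∑' i, X ^ (p * e i) * expand p hp (f i) := by
  have hterm (i : ℕ) : X ^ (p * e i) * expand p hp (f i) = expand p hp (X ^ e i * f i) := by
    rw [map_mul, map_pow, expand_X, pow_mul]
  ext N
  rw [coeff_tsum_X_pow_mul (fun i ↦ (he i).trans (Nat.le_mul_of_pos_left _ (by omega)))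
    (fun i ↦ expand p hp (f i)) N.lt_succ_self, sum_congr rfl fun i _ ↦ by rw [hterm i]]
  by_cases h : p ∣ N
  · obtain ⟨M, rfl⟩ := h
    simp only [coeff_expand_mul]
    exact coeff_tsum_X_pow_mul he f (Nat.lt_succ_of_le (Nat.le_mul_of_pos_left _ (by omega)))
  · simp only [coeff_expand_of_not_dvd _ _ _ h, sum_const_zero]

theorem expand_partialTheta {p : ℕ} (hp : p ≠ 0) (r : ℕ) : expand p hp (partialTheta r) =
    ∑' n : ℕ, X ^ (p * (n ^ 2 + n + n * r)) * (-1) ^ n := by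
  rw [partialTheta, expand_tsum_X_pow_mul hp (fun n ↦ by nlinarith)]
  simp only [map_pow, map_neg, map_one]

theorem lambertSeries_mod_three_one_two :
    (lambertSeries fun u v ↦ if u < v ∧ u % 3 = 1 ∧ v % 3 = 2 then ε(u) else 0) =
      -∑' r, X ^ (3 * r + 2) * expand 9 (by norm_num) (partialTheta r) := by
  rw [lambertSeries_eq_tsum _ (a := fun r ↦ 3 * r + 2) (e := fun r n ↦ 9 * (n ^ 2 + n + n * r))
    (u := fun _ n ↦ 3 * n + 1) (v := fun r n ↦ 3 * (n + r) + 2) (fun r ↦ by omega)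
    (fun r n ↦ by nlinarith) (fun r n ↦ by ring) (fun r n r' n' ↦ by omega), ← tsum_neg]
  · refine tsum_congr fun r ↦ ?_
    rw [expand_partialTheta, ← mul_neg, ← tsum_neg]
    refine congrArg _ (tsum_congr fun n ↦ ?_)
    have hsign : (-1 : ℤ) ^ (3 * n + 1) = -(-1) ^ n := by rw [pow_succ, pow_mul]; norm_num
    rw [if_pos (by omega), Int.coe_negOnePow_natCast, hsign]
    push_cast
    ring
  · intro x y _ _ hne
    have h := (ite_ne_right_iff.mp hne).1
    exact ⟨y / 3 - x / 3, x / 3, by omega, by omega⟩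

theorem lambertSeries_mod_three_two_one :
    (lambertSeries fun u v ↦ if u < v ∧ u % 3 = 2 ∧ v % 3 = 1 then ε(u) else 0) =
      ∑' s, X ^ (6 * s + 8) * expand 9 (by norm_num) (partialTheta (s + 1)) := by
  rw [lambertSeries_eq_tsum _ (a := fun s ↦ 6 * s + 8)
    (e := fun s n ↦ 9 * (n ^ 2 + n + n * (s + 1))) (u := fun _ n ↦ 3 * n + 2)
    (v := fun s n ↦ 3 * (n + s + 1) + 1) (fun s ↦ by omega) (fun s n ↦ by nlinarith)
    (fun s n ↦ by ring) (fun s n s' n' ↦ by omega)]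
  · refine tsum_congr fun s ↦ ?_
    rw [expand_partialTheta]
    refine congrArg _ (tsum_congr fun n ↦ ?_)
    have hsign : (-1 : ℤ) ^ (3 * n + 2) = (-1) ^ n := by rw [pow_add, pow_mul]; norm_num
    rw [if_pos (by omega), Int.coe_negOnePow_natCast, hsign]
    push_cast
    rfl
  · intro x y _ _ hne
    have h := (ite_ne_right_iff.mp hne).1
    exact ⟨y / 3 - x / 3 - 1, x / 3, by omega, by omega⟩

theorem lambertSeries_mul_eq_two_eq_sub :
    (lambertSeries fun u v ↦ if u < v ∧ (u * v : ZMod 3) = 2 then ε(u) * χ (v - u) else 0) =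
      (lambertSeries fun u v ↦ if u < v ∧ u % 3 = 1 ∧ v % 3 = 2 then ε(u) else 0) -
        lambertSeries fun u v ↦ if u < v ∧ u % 3 = 2 ∧ v % 3 = 1 then ε(u) else 0 := by
  have hχ : ∀ a b : ZMod 3, (if a * b = 2 then χ (b - a) else 0) =
      (if a = 1 ∧ b = 2 then 1 else 0) - if a = 2 ∧ b = 1 then 1 else 0 := by decide
  have hone (a : ℤ) : (a : ZMod 3) = 1 ↔ a % 3 = 1 := by
    rw [← Int.cast_one, ZMod.intCast_eq_intCast_iff']; rfl
  have htwo (a : ℤ) : (a : ZMod 3) = 2 ↔ a % 3 = 2 := by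
    rw [← Int.cast_ofNat, ZMod.intCast_eq_intCast_iff']; rfl
  ext n
  simp only [lambertSeries, map_sub, coeff_mk, ← sum_sub_distrib]
  refine sum_congr rfl fun p _ ↦ ?_
  have h := hχ (p.1 : ℤ) (p.2 : ℤ)
  simp only [hone, htwo] at h
  by_cases huv : (p.1 : ℤ) < p.2
  · simp only [huv, true_and]
    rw [← mul_ite_zero, h, mul_sub, mul_ite_zero, mul_ite_zero, mul_one]
  · simp only [huv, false_and, if_false, sub_self]

/-- The deviation of `overpartitionSeries * rankDiffSeries` from
`expand 9 overpartitionSeries * eisensteinLambertSeries`, up to a factor `-6`. -/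
noncomputable def dissectionSeries : ℤ⟦X⟧ := ∑' r : ℕ, X ^ (3 * r + 2) * expand 9 (by norm_num)
  (diagonalSeries r + if 2 ∣ r ∧ r ≠ 0 then diagonalSeries (r / 2) else 0)

theorem dissectionSeries_eq_add : dissectionSeries =
    ∑' r, X ^ (3 * r + 2) * expand 9 (by norm_num) (diagonalSeries r) +
      ∑' s, X ^ (6 * s + 8) * expand 9 (by norm_num) (diagonalSeries (s + 1)) := by
  have hinj : Function.Injective fun s : ℕ ↦ 2 * (s + 1) := fun s t h ↦ by simpa using h
  have hterm (s : ℕ) : X ^ (6 * s + 8) * expand 9 (by norm_num) (diagonalSeries (s + 1)) =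
      (fun r : ℕ ↦ X ^ (3 * r + 2) * expand 9 (by norm_num)
        (if 2 ∣ r ∧ r ≠ 0 then diagonalSeries (r / 2) else 0)) (2 * (s + 1)) := by
    simp only
    rw [if_pos (by omega), Nat.mul_div_cancel_left _ two_pos]
    ring
  have hsupp : Function.support (fun r : ℕ ↦ (X : ℤ⟦X⟧) ^ (3 * r + 2) * expand 9 (by norm_num)
      (if 2 ∣ r ∧ r ≠ 0 then diagonalSeries (r / 2) else 0)) ⊆
      Set.range fun s : ℕ ↦ 2 * (s + 1) := fun r hr ↦ by
    have h : 2 ∣ r ∧ r ≠ 0 := by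
      by_contra h
      exact hr (by simp only [if_neg h, map_zero, mul_zero])
    exact ⟨r / 2 - 1, by simp only; omega⟩
  have hsum (f : ℕ → ℤ⟦X⟧) : Summable fun r ↦ X ^ (3 * r + 2) * f r :=
    summable_X_pow_mul (e := fun r ↦ 3 * r + 2) (fun r ↦ by omega) f
  rw [tsum_congr hterm, hinj.tsum_eq hsupp, dissectionSeries,
    ← (hsum fun r ↦ expand 9 (by norm_num) (diagonalSeries r)).tsum_add (hsum _)]
  simp only [map_add, mul_add]

theorem expand_overpartitionSeries_mul_lambertSeries :
    expand 9 (by norm_num) overpartitionSeries * (lambertSeries fun u v ↦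
      if u < v ∧ (u * v : ZMod 3) = 2 then ε(u) * χ (v - u) else 0) = -dissectionSeries := by
  have hterm (e r : ℕ) : X ^ e * expand 9 (by norm_num) (diagonalSeries r) =
      expand 9 (by norm_num) overpartitionSeries *
        (X ^ e * expand 9 (by norm_num) (partialTheta r)) := by
    rw [diagonalSeries_eq_mul_partialTheta, map_mul]
    ring
  have hsum₁ (f : ℕ → ℤ⟦X⟧) : Summable fun r ↦ X ^ (3 * r + 2) * f r :=
    summable_X_pow_mul (e := fun r ↦ 3 * r + 2) (fun r ↦ by omega) f
  have hsum₂ (f : ℕ → ℤ⟦X⟧) : Summable fun s ↦ X ^ (6 * s + 8) * f s :=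
    summable_X_pow_mul (e := fun s ↦ 6 * s + 8) (fun s ↦ by omega) f
  simp only [dissectionSeries_eq_add, hterm]
  rw [(hsum₁ fun r ↦ expand 9 (by norm_num) (partialTheta r)).tsum_mul_left,
    (hsum₂ fun s ↦ expand 9 (by norm_num) (partialTheta (s + 1))).tsum_mul_left,
    lambertSeries_mul_eq_two_eq_sub, lambertSeries_mod_three_one_two,
    lambertSeries_mod_three_two_one]
  ring

theorem overpartitionSeries_mul_rankDiffSeries_eq_sub :
    overpartitionSeries * rankDiffSeries =
      expand 9 (by norm_num) overpartitionSeries * eisensteinLambertSeries -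
        6 * dissectionSeries := by
  rw [overpartitionSeries_mul_rankDiffSeries_eq_expand_mul]
  linear_combination 6 * expand_overpartitionSeries_mul_lambertSeries

/-! ### Coefficientwise inequalities -/

section nonnegSeries

variable {R : Type*} [CommRing R] [PartialOrder R] [IsOrderedRing R]

variable (R) in
/-- The power series with nonnegative coefficients; `g - f ∈ nonnegSeries R` expresses the
coefficientwise inequality `f ≤ g`. -/
def nonnegSeries : Subsemiring R⟦X⟧ where
  carrier := {f | ∀ n, 0 ≤ coeff n f}
  mul_mem' hf hg n := by
    rw [coeff_mul]
    exact sum_nonneg fun p _ ↦ mul_nonneg (hf p.1) (hg p.2)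
  one_mem' n := by rw [coeff_one]; split_ifs <;> simp
  add_mem' hf hg n := by rw [map_add]; exact add_nonneg (hf n) (hg n)
  zero_mem' n := by rw [map_zero]

theorem X_mem_nonnegSeries : X ∈ nonnegSeries R := fun n ↦ by
  rw [coeff_X]
  split_ifs <;> simp

theorem expand_mem_nonnegSeries {p : ℕ} (hp : p ≠ 0) {f : R⟦X⟧} (hf : f ∈ nonnegSeries R) :
    expand p hp f ∈ nonnegSeries R := fun n ↦ by
  rw [coeff_expand]
  split_ifs
  exacts [hf _, le_rfl]

theorem tsum_X_pow_mul_mem_nonnegSeries [TopologicalSpace R] [T2Space R] {e : ℕ → ℕ}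
    (he : ∀ i, i ≤ e i) {f : ℕ → R⟦X⟧} (hf : ∀ i, f i ∈ nonnegSeries R) :
    ∑' i, X ^ e i * f i ∈ nonnegSeries R := fun n ↦ by
  rw [coeff_tsum_X_pow_mul he f n.lt_succ_self]
  exact sum_nonneg fun i _ ↦ mul_mem (pow_mem X_mem_nonnegSeries _) (hf i) n

theorem monotone_coeff_of_sub_X_mul_mem {f : R⟦X⟧} (hf : f - X * f ∈ nonnegSeries R) :
    Monotone fun n ↦ coeff n f := monotone_nat_of_le_succ fun n ↦ by
  have h := hf (n + 1)
  rwa [map_sub, coeff_succ_X_mul, sub_nonneg] at h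

end nonnegSeries

theorem qDelannoy_mem_nonnegSeries (m j : ℕ) : qDelannoy m j ∈ nonnegSeries ℤ := by
  induction m generalizing j with
  | zero => rw [qDelannoy_zero_left]; exact one_mem _
  | succ m ihm =>
    induction j with
    | zero => rw [qDelannoy_zero_right]; exact one_mem _
    | succ j ih =>
      rw [qDelannoy_succ_succ]
      exact add_mem (add_mem (mul_mem (pow_mem X_mem_nonnegSeries _) ih) (ihm _))
        (mul_mem (pow_mem X_mem_nonnegSeries _) (ihm _))

theorem qDelannoy_succ_left_sub_mem (m j : ℕ) :
    qDelannoy (m + 1) j - qDelannoy m j ∈ nonnegSeries ℤ := by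
  cases j with
  | zero => simp only [qDelannoy_zero_right, sub_self]; exact zero_mem _
  | succ j =>
    have h : qDelannoy (m + 1) (j + 1) - qDelannoy m (j + 1) =
        X ^ (m + 1) * qDelannoy (m + 1) j + X ^ m * qDelannoy m j := by
      rw [qDelannoy_succ_succ]; ring
    rw [h]
    exact add_mem (mul_mem (pow_mem X_mem_nonnegSeries _) (qDelannoy_mem_nonnegSeries _ _))
      (mul_mem (pow_mem X_mem_nonnegSeries _) (qDelannoy_mem_nonnegSeries _ _))

theorem qDelannoy_succ_right_sub_mem (m j : ℕ) :
    qDelannoy m (j + 1) - qDelannoy m j ∈ nonnegSeries ℤ := by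
  rw [qDelannoy_comm, qDelannoy_comm m]
  exact qDelannoy_succ_left_sub_mem _ _

theorem rankSeries_mem_nonnegSeries (r : ℕ) : rankSeries r ∈ nonnegSeries ℤ :=
  tsum_X_pow_mul_mem_nonnegSeries (fun j ↦ by omega) fun _ ↦ qDelannoy_mem_nonnegSeries _ _

theorem diagonalSeries_mem_nonnegSeries (r : ℕ) : diagonalSeries r ∈ nonnegSeries ℤ :=
  tsum_X_pow_mul_mem_nonnegSeries (fun _ ↦ le_rfl) fun _ ↦ qDelannoy_mem_nonnegSeries _ _

theorem rankSeries_add_X_mul_mem (r : ℕ) :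
    rankSeries r + X * rankSeries (r + 1) ∈ nonnegSeries ℤ :=
  add_mem (rankSeries_mem_nonnegSeries _)
    (mul_mem X_mem_nonnegSeries (rankSeries_mem_nonnegSeries _))

theorem diagonalSeries_succ_sub_mem (r : ℕ) :
    diagonalSeries (r + 1) - diagonalSeries r ∈ nonnegSeries ℤ := by
  rw [diagonalSeries_succ_sub]
  exact mul_mem (pow_mem X_mem_nonnegSeries _) (rankSeries_add_X_mul_mem _)

theorem diagonalSeries_sub_X_mul_succ_mem (r : ℕ) :
    diagonalSeries r - X * diagonalSeries (r + 1) ∈ nonnegSeries ℤ := by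
  cases r with
  | zero =>
    rw [diagonalSeries_zero_sub_X_mul]
    exact add_mem (one_mem _) (mul_mem X_mem_nonnegSeries (rankSeries_add_X_mul_mem _))
  | succ r =>
    rw [diagonalSeries_succ_sub_X_mul]
    exact rankSeries_add_X_mul_mem _

theorem diagonalSeries_sub_X_mul_mem (r : ℕ) :
    diagonalSeries r - X * diagonalSeries r ∈ nonnegSeries ℤ := by
  have hterm (j : ℕ) : X ^ (j + 1) * qDelannoy (r + (j + 1)) (j + 1) -
      X * (X ^ j * qDelannoy (r + j) j) = X ^ (j + 1) *
      ((qDelannoy (r + j + 1) (j + 1) - qDelannoy (r + j) (j + 1)) +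
        (qDelannoy (r + j) (j + 1) - qDelannoy (r + j) j)) := by
    rw [← add_assoc]; ring
  have hK := summable_diagonalSeries r
  rw [diagonalSeries, ← hK.tsum_mul_left, hK.tsum_eq_zero_add, add_sub_assoc,
    ← ((summable_nat_add_iff 1).mpr hK).tsum_sub (hK.mul_left X), tsum_congr hterm,
    pow_zero, one_mul, qDelannoy_zero_right]
  exact add_mem (one_mem _) (tsum_X_pow_mul_mem_nonnegSeries (fun j ↦ j.le_succ) fun j ↦
    add_mem (qDelannoy_succ_left_sub_mem _ _) (qDelannoy_succ_right_sub_mem _ _))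

theorem two_mul_diagonalSeries_sub_mem (r : ℕ) :
    2 * diagonalSeries r - overpartitionSeries ∈ nonnegSeries ℤ := by
  induction r with
  | zero =>
    have h : 2 * diagonalSeries 0 - overpartitionSeries =
        (diagonalSeries 0 - X * diagonalSeries 1) +
          X * (diagonalSeries 1 - X * diagonalSeries 2) := by
      rw [← diagonalSeries_add_X_pow_mul 0]; ring
    rw [h]
    exact add_mem (diagonalSeries_sub_X_mul_succ_mem 0)
      (mul_mem X_mem_nonnegSeries (diagonalSeries_sub_X_mul_succ_mem 1))
  | succ r ih =>
    have h : 2 * diagonalSeries (r + 1) - overpartitionSeries =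
        2 * diagonalSeries r - overpartitionSeries +
          2 * (diagonalSeries (r + 1) - diagonalSeries r) := by ring
    rw [h]
    exact add_mem ih (mul_mem (ofNat_mem _ 2) (diagonalSeries_succ_sub_mem r))

theorem diagonalSeries_zero_add_X_mul_sub_mem :
    diagonalSeries 0 + X * diagonalSeries 3 - overpartitionSeries ∈ nonnegSeries ℤ := by
  have h : diagonalSeries 0 + X * diagonalSeries 3 - overpartitionSeries =
      X * (diagonalSeries 3 - diagonalSeries 2) +
        X * (diagonalSeries 2 - X * diagonalSeries 2) := by
    rw [← diagonalSeries_add_X_pow_mul 0]; ring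
  rw [h]
  exact add_mem (mul_mem X_mem_nonnegSeries (diagonalSeries_succ_sub_mem 2))
    (mul_mem X_mem_nonnegSeries (diagonalSeries_sub_X_mul_mem 2))

theorem monotone_coeff_overpartitionSeries : Monotone fun n ↦ coeff n overpartitionSeries := by
  refine monotone_coeff_of_sub_X_mul_mem ?_
  have h : overpartitionSeries - X * overpartitionSeries =
      (diagonalSeries 0 - X * diagonalSeries 0) +
        X ^ 2 * (diagonalSeries 2 - X * diagonalSeries 2) := by
    rw [← diagonalSeries_add_X_pow_mul 0]; ring
  rw [h]
  exact add_mem (diagonalSeries_sub_X_mul_mem 0)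
    (mul_mem (pow_mem X_mem_nonnegSeries _) (diagonalSeries_sub_X_mul_mem 2))

theorem coeff_zero_overpartitionSeries : coeff 0 overpartitionSeries = 1 := by
  simp [overpartitionSeries, mul_assoc]

/-- The coefficient of `X ^ (3 * r + 2)` in `minorantSeries`. The terms `r = 0` and `r = 3` of
`dissectionSeries` are only bounded jointly, which is why `0` sits at `r = 3` and `6` at `r = 0`. -/
def minorantCoeff (r : ℕ) : ℤ := if r = 3 then 0 else if 2 ∣ r then 6 else 3

/-- A minorant, coefficient by coefficient, of
`6 * dissectionSeries / expand 9 overpartitionSeries`. -/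
noncomputable def minorantSeries : ℤ⟦X⟧ := ∑' r : ℕ, X ^ (3 * r + 2) * C (minorantCoeff r)

theorem six_mul_add_sub_C_mul_mem {r : ℕ} (hr : r ≠ 0) :
    6 * (diagonalSeries r + if 2 ∣ r ∧ r ≠ 0 then diagonalSeries (r / 2) else 0) -
      C (minorantCoeff r) * overpartitionSeries ∈ nonnegSeries ℤ := by
  have hK (s : ℕ) : 3 * (2 * diagonalSeries s - overpartitionSeries) ∈ nonnegSeries ℤ :=
    mul_mem (ofNat_mem _ 3) (two_mul_diagonalSeries_sub_mem s)
  unfold minorantCoeff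
  by_cases heven : 2 ∣ r
  · convert add_mem (hK r) (hK (r / 2)) using 1
    rw [if_pos ⟨heven, hr⟩, if_neg (by omega), if_pos heven, map_ofNat]
    ring
  · rw [if_neg (by tauto), if_neg heven, add_zero]
    split_ifs
    · rw [map_zero, zero_mul, sub_zero]
      exact mul_mem (ofNat_mem _ 6) (diagonalSeries_mem_nonnegSeries r)
    · convert hK r using 1
      rw [map_ofNat]
      ring

theorem six_mul_dissectionSeries_sub_mem :
    6 * dissectionSeries - expand 9 (by norm_num) overpartitionSeries * minorantSeries ∈
      nonnegSeries ℤ := by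
  let d (r : ℕ) : ℤ⟦X⟧ :=
    6 * (diagonalSeries r + if 2 ∣ r ∧ r ≠ 0 then diagonalSeries (r / 2) else 0) -
      C (minorantCoeff r) * overpartitionSeries
  have hd (r : ℕ) (hr : r ≠ 0) : expand 9 (by norm_num) (d r) ∈ nonnegSeries ℤ :=
    expand_mem_nonnegSeries _ (six_mul_add_sub_C_mul_mem hr)
  have hsum (f : ℕ → ℤ⟦X⟧) : Summable fun r ↦ X ^ (3 * r + 2) * f r :=
    summable_X_pow_mul (e := fun r ↦ 3 * r + 2) (fun r ↦ by omega) f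
  have hsplit : 6 * dissectionSeries - expand 9 (by norm_num) overpartitionSeries * minorantSeries =
      ∑' r, X ^ (3 * r + 2) * expand 9 (by norm_num) (d r) := by
    rw [dissectionSeries, minorantSeries, ← (hsum _).tsum_mul_left, ← (hsum _).tsum_mul_left,
      ← ((hsum _).mul_left _).tsum_sub ((hsum _).mul_left _)]
    refine tsum_congr fun r ↦ ?_
    simp only [d, map_sub, map_mul, map_ofNat, expand_C]
    ring
  have hends : X ^ 2 * expand 9 (by norm_num) (d 0) + X ^ 11 * expand 9 (by norm_num) (d 3) =
      X ^ 2 * expand 9 (by norm_num)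
        (6 * (diagonalSeries 0 + X * diagonalSeries 3 - overpartitionSeries)) := by
    have hX : (X : ℤ⟦X⟧) ^ 11 = X ^ 2 * expand 9 (by norm_num) X := by rw [expand_X]; ring
    rw [hX, mul_assoc, ← mul_add, ← map_mul, ← map_add]
    norm_num [d, minorantCoeff]
    ring
  rw [hsplit, ← (hsum _).sum_add_tsum_nat_add 4]
  refine add_mem ?_ (tsum_X_pow_mul_mem_nonnegSeries (fun r ↦ by omega) fun r ↦ hd _ (by omega))
  have hfour : ∑ r ∈ range 4, X ^ (3 * r + 2) * expand 9 (by norm_num) (d r) =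
      (X ^ 2 * expand 9 (by norm_num) (d 0) + X ^ 11 * expand 9 (by norm_num) (d 3)) +
        (X ^ 5 * expand 9 (by norm_num) (d 1) + X ^ 8 * expand 9 (by norm_num) (d 2)) := by
    simp only [sum_range_succ, sum_range_zero]
    ring
  rw [hfour, hends]
  exact add_mem (mul_mem (pow_mem X_mem_nonnegSeries _) (expand_mem_nonnegSeries _
    (mul_mem (ofNat_mem _ 6) diagonalSeries_zero_add_X_mul_sub_mem)))
    (add_mem (mul_mem (pow_mem X_mem_nonnegSeries _) (hd 1 one_ne_zero))
      (mul_mem (pow_mem X_mem_nonnegSeries _) (hd 2 two_ne_zero)))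

/-! ### Coefficients of the Eisenstein series -/

/-- The arithmetic function `d ↦ (-1) ^ (d - 1) * (d / 3)`, whose divisor sums are half the
coefficients of `eisensteinLambertSeries`. -/
def twistedChar : ArithmeticFunction ℤ := ⟨fun d ↦ -(ε(d) * χ d), by decide⟩

theorem twistedChar_apply (d : ℕ) : twistedChar d = -(ε(d) * χ d) := rfl

theorem twistedChar_of_even {d : ℕ} (h : Even d) : twistedChar d = -χ d := by
  rw [twistedChar_apply, Int.negOnePow_even _ ((Int.even_coe_nat d).mpr h), Units.val_one, one_mul]

theorem twistedChar_of_odd {d : ℕ} (h : Odd d) : twistedChar d = χ d := by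
  rw [twistedChar_apply, Int.negOnePow_odd _ ((Int.odd_coe_nat d).mpr h), Units.val_neg,
    Units.val_one, neg_one_mul, neg_neg]

theorem twistedChar_six_mul_add (k r : ℕ) : twistedChar (6 * k + r) = twistedChar r := by
  have hε : ε((6 * k + r : ℕ)) = ε(r) := coe_negOnePow_congr (by push_cast; omega)
  have hmod : ((6 * k + r : ℕ) : ZMod 3) = r := by
    push_cast
    rw [show (6 : ZMod 3) = 0 by decide, zero_mul, zero_add]
  rw [twistedChar_apply, twistedChar_apply, hε, hmod]

theorem isMultiplicative_twistedChar : twistedChar.IsMultiplicative := by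
  refine ⟨by decide, fun {m n} h ↦ ?_⟩
  rcases m.even_or_odd with hm | hm
  · have hn : Odd n := n.not_even_iff_odd.mp fun hn ↦
      Nat.not_coprime_of_dvd_of_dvd one_lt_two hm.two_dvd hn.two_dvd h
    rw [twistedChar_of_even (hm.mul_right n), twistedChar_of_even hm, twistedChar_of_odd hn]
    push_cast
    rw [map_mul, neg_mul]
  · rcases n.even_or_odd with hn | hn
    · rw [twistedChar_of_even (hn.mul_left m), twistedChar_of_odd hm, twistedChar_of_even hn]
      push_cast
      rw [map_mul, mul_neg]
    · rw [twistedChar_of_odd (hm.mul hn), twistedChar_of_odd hm, twistedChar_of_odd hn]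
      push_cast
      rw [map_mul]

theorem sum_pow_nonneg_of_mem {x : ℤ} (hx : x = 0 ∨ x = 1 ∨ x = -1) (k : ℕ) :
    0 ≤ ∑ i ∈ range k, x ^ i := by
  rcases hx with rfl | rfl | rfl
  · positivity
  · positivity
  · rw [neg_one_geom_sum]
    split_ifs <;> norm_num

theorem sum_twistedChar_prime_pow_nonneg {p : ℕ} (hp : p.Prime) (k : ℕ) :
    0 ≤ ∑ i ∈ range (k + 1), twistedChar (p ^ i) := by
  rcases hp.eq_two_or_odd' with rfl | hodd
  · have hpow (i : ℕ) : twistedChar (2 ^ (i + 1)) = (-1) ^ i := by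
      rw [twistedChar_of_even (Nat.even_pow.mpr ⟨even_two, i.succ_ne_zero⟩)]
      push_cast
      rw [map_pow, show χ 2 = -1 by decide, pow_succ]
      ring
    rw [sum_range_succ', sum_congr rfl fun i _ ↦ hpow i, pow_zero, isMultiplicative_twistedChar.1]
    exact add_nonneg (sum_pow_nonneg_of_mem (by simp) k) zero_le_one
  · rw [sum_congr rfl fun i _ ↦ show twistedChar (p ^ i) = χ (p : ZMod 3) ^ i by
      rw [twistedChar_of_odd hodd.pow, Nat.cast_pow, map_pow]]
    have hχ : ∀ a : ZMod 3, χ a = 0 ∨ χ a = 1 ∨ χ a = -1 := by decide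
    exact sum_pow_nonneg_of_mem (hχ p) _

theorem sum_divisors_twistedChar_nonneg (j : ℕ) : 0 ≤ ∑ d ∈ j.divisors, twistedChar d := by
  rcases eq_or_ne j 0 with rfl | hj
  · simp
  have hmul : (twistedChar * (ArithmeticFunction.zeta : ArithmeticFunction ℕ)).IsMultiplicative :=
    isMultiplicative_twistedChar.mul ArithmeticFunction.isMultiplicative_zeta.natCast
  rw [← ArithmeticFunction.coe_mul_zeta_apply, hmul.multiplicative_factorization _ hj]
  refine prod_nonneg fun p hp ↦ ?_
  beta_reduce
  have hp := Nat.prime_of_mem_primeFactors hp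
  rw [ArithmeticFunction.coe_mul_zeta_apply, Nat.sum_divisors_prime_pow hp]
  exact sum_twistedChar_prime_pow_nonneg hp _

theorem coeff_eisensteinLambertSeries {j : ℕ} (hj : j ≠ 0) :
    coeff j eisensteinLambertSeries = 2 * ∑ d ∈ j.divisors, twistedChar d := by
  rw [eisensteinLambertSeries, map_sub, coeff_one, if_neg hj, show (2 : ℤ⟦X⟧) = C (2 : ℤ) by simp,
    coeff_C_mul, lambertSeries, coeff_mk,
    Nat.sum_divisorsAntidiagonal (f := fun u _ ↦ ε((u : ℤ)) * χ ((u : ℤ) : ZMod 3))]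
  simp only [twistedChar_apply, sum_neg_distrib, Int.cast_natCast]
  ring

theorem coeff_zero_eisensteinLambertSeries : coeff 0 eisensteinLambertSeries = 1 := by
  simp [eisensteinLambertSeries, lambertSeries]

theorem eisensteinLambertSeries_mem_nonnegSeries : eisensteinLambertSeries ∈ nonnegSeries ℤ := by
  intro j
  rcases eq_or_ne j 0 with rfl | hj
  · rw [coeff_zero_eisensteinLambertSeries]
    exact zero_le_one
  · rw [coeff_eisensteinLambertSeries hj]
    exact mul_nonneg zero_le_two (sum_divisors_twistedChar_nonneg j)

theorem sum_divisors_eq_sum_filter_lt {M : Type*} [AddCommMonoid M] {j : ℕ} (hj : ¬IsSquare j)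
    (f : ℕ → M) : ∑ d ∈ j.divisors, f d =
      ∑ p ∈ j.divisorsAntidiagonal with p.1 < p.2, (f p.1 + f p.2) := by
  have hswap : ∑ p ∈ j.divisorsAntidiagonal with p.1 < p.2, f p.2 =
      ∑ p ∈ j.divisorsAntidiagonal with ¬p.1 < p.2, f p.1 := by
    rw [sum_filter, ← Nat.map_swap_divisorsAntidiagonal, sum_map, ← sum_filter,
      Nat.map_swap_divisorsAntidiagonal]
    refine sum_congr (filter_congr fun p hp ↦ ?_) fun _ _ ↦ rfl
    have hne : p.1 ≠ p.2 := fun h ↦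
      hj ⟨p.1, by rw [← (Nat.mem_divisorsAntidiagonal.mp hp).1, ← h]⟩
    simp only [Function.Embedding.coeFn_mk, Equiv.prodComm_apply,
      Prod.fst_swap, Prod.snd_swap]
    omega
  rw [sum_add_distrib, hswap, sum_filter_add_sum_filter_not,
    Nat.sum_divisorsAntidiagonal (f := fun d _ ↦ f d)]

theorem sum_divisors_twistedChar_eq {j : ℕ} (hj : j % 3 = 2) :
    ∑ d ∈ j.divisors, twistedChar d = 2 * ∑ p ∈ j.divisorsAntidiagonal with
      p.1 < p.2 ∧ ¬2 ∣ p.1 + p.2, twistedChar p.1 := by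
  have hj' : (j : ZMod 3) = 2 := (ZMod.natCast_eq_natCast_iff j 2 3).mpr hj
  have hsq : ¬IsSquare j := fun ⟨a, ha⟩ ↦ by
    have h : ∀ b : ZMod 3, b * b ≠ 2 := by decide
    exact h a (by rw [← Nat.cast_mul, ← ha, hj'])
  have hχ : ∀ a b : ZMod 3, a * b = 2 → χ b = -χ a := by decide
  rw [sum_divisors_eq_sum_filter_lt hsq, ← filter_filter,
    sum_filter (fun p : ℕ × ℕ ↦ ¬2 ∣ p.1 + p.2), mul_sum]
  refine sum_congr rfl fun p hp ↦ ?_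
  have hmul := (Nat.mem_divisorsAntidiagonal.mp (mem_filter.mp hp).1).1
  have hneg : χ (p.2 : ZMod 3) = -χ (p.1 : ZMod 3) := hχ _ _ (by rw [← Nat.cast_mul, hmul, hj'])
  rw [twistedChar_apply, twistedChar_apply, hneg]
  split_ifs with hpar
  · rw [coe_negOnePow_congr (show (2 : ℤ) ∣ p.2 - p.1 by omega)]
    ring
  · rw [coe_negOnePow_eq_neg (show ¬(2 : ℤ) ∣ p.2 - p.1 by omega)]
    ring

/-! ### Partial sums along a residue class modulo 9 -/

theorem mul_card_Ioc_filter_modEq {r : ℕ} (hr : 0 < r) {a b : ℕ} (hab : a ≤ b) (v : ℕ) :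
    r * #{x ∈ Ioc a b | x ≡ v [MOD r]} < b - a + r ∧
      b - a < r * #{x ∈ Ioc a b | x ≡ v [MOD r]} + r := by
  have hcard := Nat.Ioc_filter_modEq_card a b hr v
  have hfloor (c : ℕ) : ⌊((c : ℚ) - v) / (r : ℚ)⌋ = ((c : ℤ) - v) / r := by
    have h := Rat.floor_intCast_div_natCast ((c : ℤ) - v) r
    push_cast at h
    exact h
  rw [hfloor, hfloor] at hcard
  have ha := Int.mul_ediv_add_emod ((a : ℤ) - v) r
  have hb := Int.mul_ediv_add_emod ((b : ℤ) - v) r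
  have hr' : (0 : ℤ) < r := by exact_mod_cast hr
  have ha₀ := Int.emod_nonneg ((a : ℤ) - v) hr'.ne'
  have hb₀ := Int.emod_nonneg ((b : ℤ) - v) hr'.ne'
  have ha₁ := Int.emod_lt_of_pos ((a : ℤ) - v) hr'
  have hb₁ := Int.emod_lt_of_pos ((b : ℤ) - v) hr'
  have hle : ((a : ℤ) - v) / r ≤ ((b : ℤ) - v) / r := Int.ediv_le_ediv hr' (by omega)
  rw [max_eq_left (by omega)] at hcard
  zify [hab]
  rw [hcard, mul_sub]
  constructor <;> linarith

/-- The number of `e` with `d < e`, `d * e ≤ n`, `d * e ≡ n [MOD r]` and `d + e` odd. -/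
def numCofactors (r n d : ℕ) : ℕ := #{e ∈ Ioc d (n / d) | d * e ≡ n [MOD r] ∧ ¬2 ∣ d + e}

section numCofactors

variable {r : ℕ}

theorem numCofactors_eq_zero (r : ℕ) {n d : ℕ} (h : n ≤ d * d) : numCofactors r n d = 0 := by
  have hdiv : n / d ≤ d := Nat.div_le_of_le_mul h
  rw [numCofactors, Ioc_eq_empty_of_le hdiv, filter_empty, card_empty]

theorem exists_mul_modEq_and_iff_modEq (hr : Odd r) {d : ℕ} (hd : d.Coprime r) (n : ℕ) :
    ∃ v, ∀ e, d * e ≡ n [MOD r] ∧ ¬2 ∣ d + e ↔ e ≡ v [MOD r * 2] := by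
  obtain ⟨w, -, hw⟩ := Nat.exists_mul_mod_eq_of_coprime n hd hr.pos.ne'
  have hcop : r.Coprime 2 := Nat.coprime_two_right.mpr hr
  obtain ⟨v, hvw, hvd⟩ := Nat.chineseRemainder hcop w (d + 1)
  refine ⟨v, fun e ↦ ?_⟩
  rw [← Nat.modEq_and_modEq_iff_modEq_mul hcop]
  refine and_congr ⟨fun h ↦ ?_, fun h ↦ ?_⟩ ?_
  · exact (Nat.ModEq.cancel_left_of_coprime (by rwa [Nat.gcd_comm]) (h.trans hw.symm)).trans
      hvw.symm
  · exact ((h.trans hvw).mul_left d).trans hw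
  · simp only [Nat.ModEq] at hvd ⊢
    omega

theorem mul_numCofactors (hr : Odd r) {n d : ℕ} (hd : d.Coprime r) (h : d ≤ n / d) :
    r * 2 * numCofactors r n d < n / d - d + r * 2 ∧
      n / d - d < r * 2 * numCofactors r n d + r * 2 := by
  obtain ⟨v, hv⟩ := exists_mul_modEq_and_iff_modEq hr hd n
  rw [numCofactors, filter_congr fun e _ ↦ hv e]
  exact mul_card_Ioc_filter_modEq (by have := hr.pos; omega) h v

theorem numCofactors_le_add_one (hr : Odd r) {n d d' : ℕ} (hpos : 0 < d) (hle : d ≤ d')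
    (hd : d.Coprime r) (hd' : d'.Coprime r) :
    numCofactors r n d' ≤ numCofactors r n d + 1 := by
  rcases le_total n (d' * d') with h | h
  · rw [numCofactors_eq_zero r h]
    exact Nat.zero_le _
  · have hdiv' : d' ≤ n / d' := (Nat.le_div_iff_mul_le (hpos.trans_le hle)).mpr h
    have hdiv : n / d' ≤ n / d := Nat.div_le_div_left hle hpos
    have hupper := (mul_numCofactors hr hd' hdiv').1
    have hlower := (mul_numCofactors hr hd (by omega : d ≤ n / d)).2
    have hlt : r * 2 * numCofactors r n d' < r * 2 * (numCofactors r n d + 2) := by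
      rw [mul_add]
      omega
    have := lt_of_mul_lt_mul_left hlt (Nat.zero_le _)
    omega

theorem sum_sum_divisorsAntidiagonal_filter {ρ D : ℕ} (hρ : ρ < r) (I : ℕ)
    (hD : r * I + ρ ≤ D * D) (f : ℕ → ℤ) :
    ∑ k ∈ range (I + 1), ∑ p ∈ (r * k + ρ).divisorsAntidiagonal with
      p.1 < p.2 ∧ ¬2 ∣ p.1 + p.2, f p.1 =
      ∑ d ∈ range D, f d * numCofactors r (r * I + ρ) d := by
  have hcard (d : ℕ) : f d * (numCofactors r (r * I + ρ) d : ℤ) =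
      ∑ e ∈ Ioc d ((r * I + ρ) / d) with d * e ≡ r * I + ρ [MOD r] ∧ ¬2 ∣ d + e, f d := by
    rw [sum_const, numCofactors, nsmul_eq_mul, mul_comm]
  have hclass (m : ℕ) : m ≡ r * I + ρ [MOD r] ↔ r * (m / r) + ρ = m := by
    rw [Nat.ModEq, Nat.mul_add_mod, Nat.mod_eq_of_lt hρ]
    have := Nat.div_add_mod m r
    omega
  have hquot (k : ℕ) : (r * k + ρ) / r = k := by
    rw [Nat.mul_add_div (by omega), Nat.div_eq_of_lt hρ, add_zero]
  simp only [hcard, hclass]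
  rw [sum_sigma', sum_sigma']
  refine sum_bij' (fun x _ ↦ ⟨x.2.1, x.2.2⟩) (fun y _ ↦ ⟨y.1 * y.2 / r, (y.1, y.2)⟩)
    ?_ ?_ ?_ (fun _ _ ↦ rfl) (fun _ _ ↦ rfl)
  · rintro ⟨k, d, e⟩ h
    simp only [mem_sigma, mem_range, mem_filter, Nat.mem_divisorsAntidiagonal, mem_Ioc] at h ⊢
    obtain ⟨hk, ⟨hde, hne⟩, hlt, hodd⟩ := h
    have hd : 0 < d := Nat.pos_of_ne_zero fun h ↦ hne (by rw [← hde, h, zero_mul])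
    have hle : d * e ≤ r * I + ρ := by
      rw [hde]
      exact Nat.add_le_add_right (Nat.mul_le_mul_left r (by omega)) ρ
    exact ⟨by nlinarith, ⟨hlt, (Nat.le_div_iff_mul_le hd).mpr (by linarith)⟩,
      by rw [hde, hquot], hodd⟩
  · rintro ⟨d, e⟩ h
    simp only [mem_sigma, mem_range, mem_filter, Nat.mem_divisorsAntidiagonal, mem_Ioc] at h ⊢
    obtain ⟨-, ⟨hlt, he⟩, hde, hodd⟩ := h
    have hd : 0 < d := Nat.pos_of_ne_zero fun h ↦ by
      rw [h, Nat.div_zero] at he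
      omega
    have hle : d * e ≤ r * I + ρ := by
      rw [mul_comm]
      exact Nat.mul_le_of_le_div _ _ _ he
    have hdiv : d * e / r ≤ I := by
      rw [← hde] at hle
      exact Nat.le_of_mul_le_mul_left (by omega) (by omega : 0 < r)
    exact ⟨by omega, ⟨hde.symm, by rw [hde]; exact (Nat.mul_pos hd (by omega)).ne'⟩, hlt, hodd⟩
  · rintro ⟨k, d, e⟩ h
    simp only [mem_sigma, mem_range, mem_filter, Nat.mem_divisorsAntidiagonal] at h ⊢
    rw [h.2.1.1, hquot]

end numCofactors

theorem sum_twistedChar_mul_add_le {c : ℕ → ℤ} (hc : ∀ d, ¬3 ∣ d → c (d + 3) ≤ c d + 1) (q : ℕ) :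
    ∑ d ∈ range (6 * q + 7), twistedChar d * c d + c (6 * q + 4) + c (6 * q + 5) ≤
      c 1 + c 2 + 2 * q := by
  have hvalues : twistedChar 1 = 1 ∧ twistedChar 2 = 1 ∧ twistedChar 3 = 0 ∧ twistedChar 4 = -1 ∧
      twistedChar 5 = -1 ∧ twistedChar 6 = 0 := by decide
  obtain ⟨h₁, h₂, h₃, h₄, h₅, h₆⟩ := hvalues
  induction q with
  | zero =>
    simp only [mul_zero, zero_add, sum_range_succ, sum_range_zero, ArithmeticFunction.map_zero,
      h₁, h₂, h₃, h₄, h₅, h₆, zero_mul, one_mul, Nat.cast_zero]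
    linarith
  | succ q ih =>
    have hblock : ∑ s ∈ range 6, twistedChar (6 * q + 7 + s) * c (6 * q + 7 + s) =
        c (6 * q + 7) + c (6 * q + 8) - c (6 * q + 10) - c (6 * q + 11) := by
      have hperiod (s : ℕ) : twistedChar (6 * q + 7 + s) = twistedChar (s + 1) := by
        rw [show 6 * q + 7 + s = 6 * (q + 1) + (s + 1) by ring, twistedChar_six_mul_add]
      simp only [hperiod, sum_range_succ, sum_range_zero, Nat.reduceAdd, h₁, h₂, h₃, h₄, h₅, h₆]
      ring
    have hstep₁ := hc (6 * q + 4) (by omega)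
    have hstep₂ := hc (6 * q + 5) (by omega)
    rw [show 6 * (q + 1) + 7 = 6 * q + 7 + 6 by ring, sum_range_add, hblock]
    push_cast
    simp only [mul_add, mul_one, add_assoc, Nat.reduceAdd] at *
    linarith

theorem sum_divisors_twistedChar_le {ρ : ℕ} (hρ : ρ < 9) (hρ' : ρ % 3 = 2) (I q : ℕ)
    (hq : 9 * I + ρ ≤ (6 * q + 7) * (6 * q + 7)) :
    ∑ k ∈ range (I + 1), ∑ d ∈ (9 * k + ρ).divisors, twistedChar d ≤
      2 * (numCofactors 9 (9 * I + ρ) 1 + numCofactors 9 (9 * I + ρ) 2 + 2 * q : ℕ) := by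
  have hstep (d : ℕ) (hd : ¬3 ∣ d) : (numCofactors 9 (9 * I + ρ) (d + 3) : ℤ) ≤
      numCofactors 9 (9 * I + ρ) d + 1 := by
    have hcop (e : ℕ) (he : ¬3 ∣ e) : e.Coprime 9 :=
      (((Nat.Prime.coprime_iff_not_dvd Nat.prime_three).mpr he).pow_left 2).symm
    exact_mod_cast numCofactors_le_add_one (by decide)
      (Nat.pos_of_ne_zero (by rintro rfl; simp at hd)) (Nat.le_add_right d 3)
      (hcop d hd) (hcop _ (by omega))
  have hsum := sum_twistedChar_mul_add_le hstep q
  rw [sum_congr rfl fun k _ ↦ sum_divisors_twistedChar_eq (by omega : (9 * k + ρ) % 3 = 2),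
    ← mul_sum, sum_sum_divisorsAntidiagonal_filter hρ I hq]
  push_cast
  linarith

theorem exists_six_mul_add_sq_bounds {n : ℕ} (hn : 2 ≤ n) :
    ∃ q, (6 * q + 1) * (6 * q + 1) < n ∧ n ≤ (6 * q + 7) * (6 * q + 7) := by
  have hpos : 0 < (n - 1).sqrt := Nat.sqrt_pos.mpr (by omega)
  have hle := Nat.sqrt_le (n - 1)
  have hlt := Nat.lt_succ_sqrt (n - 1)
  rw [Nat.succ_eq_add_one] at hlt
  refine ⟨((n - 1).sqrt - 1) / 6, ?_, ?_⟩
  · have h : 6 * (((n - 1).sqrt - 1) / 6) + 1 ≤ (n - 1).sqrt := by omega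
    have := Nat.mul_le_mul h h
    omega
  · have h : (n - 1).sqrt + 1 ≤ 6 * (((n - 1).sqrt - 1) / 6) + 7 := by omega
    have := Nat.mul_le_mul h h
    omega

theorem le_two_mul_sum_minorantCoeff {t : ℕ} (ht : t < 3) (I : ℕ) :
    9 * I + 3 ≤ 2 * ∑ k ∈ range (I + 1), minorantCoeff (3 * k + t) := by
  rcases I with _ | I
  · interval_cases t <;> decide
  -- Stepping by 3 alternates between even and odd arguments, so the slack has to be recorded.
  suffices h : 9 * ((I + 1 : ℕ) : ℤ) + 3 + (if 2 ∣ 3 * (I + 1) + t then 3 else 0) ≤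
      2 * ∑ k ∈ range (I + 1 + 1), minorantCoeff (3 * k + t) by
    split_ifs at h <;> linarith
  induction I with
  | zero => interval_cases t <;> decide
  | succ I ih =>
    have hnext : minorantCoeff (3 * (I + 1 + 1) + t) =
        if 2 ∣ 3 * (I + 1 + 1) + t then 6 else 3 := if_neg (by omega)
    rw [sum_range_succ _ (I + 1 + 1), hnext, mul_add 2]
    split_ifs at ih ⊢ <;> push_cast at ih ⊢ <;> omega

theorem sum_minorantCoeff_sub_pos_of_le {t : ℕ} (ht : t < 3) {I : ℕ} (hI : 12 ≤ I) :
    0 < ∑ k ∈ range (I + 1),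
      (minorantCoeff (3 * k + t) - 2 * ∑ d ∈ (9 * k + (3 * t + 2)).divisors, twistedChar d) := by
  obtain ⟨q, hq, hq'⟩ := exists_six_mul_add_sq_bounds (by omega : 2 ≤ 9 * I + (3 * t + 2))
  have hminorant := le_two_mul_sum_minorantCoeff ht I
  have hchar := sum_divisors_twistedChar_le (by omega : 3 * t + 2 < 9) (by omega) I q hq'
  have hcop₁ := (mul_numCofactors (r := 9) (by decide) (n := 9 * I + (3 * t + 2)) (d := 1)
    (by decide) (by omega)).1
  have hcop₂ := (mul_numCofactors (r := 9) (by decide) (n := 9 * I + (3 * t + 2)) (d := 2)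
    (by decide) (by omega)).1
  have hlinear : 48 * q + 57 ≤ 9 * I + (3 * t + 2) := by
    rcases lt_or_ge q 2 with h | h
    · omega
    · nlinarith
  rw [sum_sub_distrib, ← mul_sum]
  omega

theorem sum_minorantCoeff_sub_pos_of_lt : ∀ t < 3, ∀ I < 12, 0 < ∑ k ∈ range (I + 1),
    (minorantCoeff (3 * k + t) - 2 * ∑ d ∈ (9 * k + (3 * t + 2)).divisors, twistedChar d) := by
  decide +kernel

theorem sum_minorantCoeff_sub_pos {t : ℕ} (ht : t < 3) (I : ℕ) : 0 < ∑ k ∈ range (I + 1),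
    (minorantCoeff (3 * k + t) - 2 * ∑ d ∈ (9 * k + (3 * t + 2)).divisors, twistedChar d) := by
  rcases lt_or_ge I 12 with hI | hI
  · exact sum_minorantCoeff_sub_pos_of_lt t ht I hI
  · exact sum_minorantCoeff_sub_pos_of_le ht hI

/-! ### Signs of the coefficients -/

theorem coeff_expand_mul_eq_sum {R : Type*} [CommRing R] {p : ℕ} (hp : p ≠ 0) (f g : R⟦X⟧)
    {ρ : ℕ} (hρ : ρ < p) (I : ℕ) : coeff (p * I + ρ) (expand p hp f * g) =
      ∑ k ∈ range (I + 1), coeff (I - k) f * coeff (p * k + ρ) g := by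
  rw [coeff_mul]
  simp only [coeff_expand, ite_mul, zero_mul]
  rw [← sum_filter]
  symm
  refine sum_bij (fun k _ ↦ (p * (I - k), p * k + ρ)) (fun k hk ↦ ?_) (fun k _ l _ h ↦ ?_) ?_
    fun k _ ↦ by rw [Nat.mul_div_cancel_left _ hp.pos]
  · rw [mem_range] at hk
    rw [mem_filter, HasAntidiagonal.mem_antidiagonal, ← add_assoc, ← mul_add,
      Nat.sub_add_cancel (by omega)]
    exact ⟨rfl, dvd_mul_right p _⟩
  · exact Nat.eq_of_mul_eq_mul_left hp.pos (Nat.add_right_cancel (Prod.ext_iff.mp h).2)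
  · rintro ⟨x, b⟩ h
    obtain ⟨hsum, a, rfl⟩ := mem_filter.mp h
    rw [HasAntidiagonal.mem_antidiagonal] at hsum
    have ha : a ≤ I := by
      by_contra! hlt
      have := Nat.mul_le_mul_left p hlt
      rw [Nat.mul_succ] at this
      omega
    have hI : p * I = p * a + p * (I - a) := by rw [← mul_add, Nat.add_sub_cancel' ha]
    exact ⟨I - a, mem_range.mpr (by omega), by rw [Nat.sub_sub_self ha, Prod.mk_inj]; omega⟩

theorem mul_sum_range_le_sum_mul_of_monotone {R : Type*} [CommRing R] [PartialOrder R]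
    [IsOrderedRing R] {c w : ℕ → R} (hc : Monotone c) (I : ℕ)
    (hw : ∀ k < I, 0 ≤ ∑ i ∈ range (k + 1), w i) :
    c 0 * ∑ i ∈ range (I + 1), w i ≤ ∑ k ∈ range (I + 1), c (I - k) * w k := by
  induction I generalizing c with
  | zero => simp
  | succ I ih =>
    have hshift := ih (c := fun i ↦ c (i + 1)) (fun a b hab ↦ hc (by omega))
      fun k hk ↦ hw k (by omega)
    have hfirst := mul_le_mul_of_nonneg_right (hc zero_le_one) (hw I I.lt_succ_self)
    rw [sum_range_succ _ (I + 1), sum_range_succ _ (I + 1), Nat.sub_self, mul_add]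
    refine add_le_add_left ((hfirst.trans hshift).trans_eq (sum_congr rfl fun k hk ↦ ?_)) _
    rw [Nat.sub_add_comm (mem_range_succ_iff.mp hk)]

theorem coeff_expand_mul_pos {p : ℕ} (hp : p ≠ 0) {f g : ℤ⟦X⟧} (hf : Monotone fun n ↦ coeff n f)
    (hf₀ : 0 < coeff 0 f) {ρ : ℕ} (hρ : ρ < p)
    (hg : ∀ k, 0 < ∑ i ∈ range (k + 1), coeff (p * i + ρ) g) (I : ℕ) :
    0 < coeff (p * I + ρ) (expand p hp f * g) := by
  rw [coeff_expand_mul_eq_sum hp f g hρ]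
  exact (mul_pos hf₀ (hg I)).trans_le
    (mul_sum_range_le_sum_mul_of_monotone hf I fun k _ ↦ (hg k).le)

theorem coeff_minorantSeries (r : ℕ) : coeff (3 * r + 2) minorantSeries = minorantCoeff r := by
  rw [minorantSeries, coeff_tsum_X_pow_mul (e := fun r ↦ 3 * r + 2) (fun r ↦ by omega) _
    (by omega : 3 * r + 2 < 3 * r + 3), sum_eq_single_of_mem r (mem_range.mpr (by omega))]
  · rw [coeff_X_pow_mul', if_pos le_rfl, Nat.sub_self, coeff_zero_C]
  · intro s _ hs
    rw [coeff_X_pow_mul', coeff_C]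
    split_ifs <;> first | rfl | omega

theorem coeff_dissectionSeries_eq_zero {n : ℕ} (hn : n % 3 ≠ 2) : coeff n dissectionSeries = 0 := by
  rw [dissectionSeries, coeff_tsum_X_pow_mul (e := fun r ↦ 3 * r + 2) (fun r ↦ by omega) _
    n.lt_succ_self]
  refine sum_eq_zero fun r _ ↦ ?_
  rw [coeff_X_pow_mul']
  refine ite_eq_right_iff.mpr fun h ↦ coeff_expand_of_not_dvd _ _ _ ?_
  omega

theorem coeff_overpartitionSeries_mul_rankDiffSeries_pos {n : ℕ} (hn : n % 3 ≠ 2) :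
    0 < coeff n (overpartitionSeries * rankDiffSeries) := by
  have hfirst : ∀ ρ < 9, ρ % 3 ≠ 2 → 0 < coeff ρ eisensteinLambertSeries := by
    intro ρ hρ hρ'
    rcases eq_or_ne ρ 0 with rfl | hne
    · rw [coeff_zero_eisensteinLambertSeries]
      exact zero_lt_one
    · rw [coeff_eisensteinLambertSeries hne]
      revert ρ
      decide
  have hsum (k : ℕ) :
      0 < ∑ i ∈ range (k + 1), coeff (9 * i + n % 9) eisensteinLambertSeries :=
    sum_pos' (fun i _ ↦ eisensteinLambertSeries_mem_nonnegSeries _)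
      ⟨0, by simp, by simpa using hfirst (n % 9) (by omega) (by omega)⟩
  have hpos := coeff_expand_mul_pos (by norm_num) monotone_coeff_overpartitionSeries
    (coeff_zero_overpartitionSeries ▸ zero_lt_one) (by omega) hsum (n / 9)
  rw [Nat.div_add_mod] at hpos
  have hsix : coeff n (6 * dissectionSeries) = 6 * coeff n dissectionSeries := coeff_C_mul n _ 6
  rwa [overpartitionSeries_mul_rankDiffSeries_eq_sub, map_sub, hsix,
    coeff_dissectionSeries_eq_zero hn, mul_zero, sub_zero]

theorem coeff_overpartitionSeries_mul_rankDiffSeries_neg {n : ℕ} (hn : n % 3 = 2) :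
    coeff n (overpartitionSeries * rankDiffSeries) < 0 := by
  obtain ⟨t, I, ht, rfl⟩ : ∃ t I, t < 3 ∧ n = 9 * I + (3 * t + 2) :=
    ⟨n % 9 / 3, n / 9, by omega, by omega⟩
  have hsum (k : ℕ) : 0 < ∑ i ∈ range (k + 1),
      coeff (9 * i + (3 * t + 2)) (minorantSeries - eisensteinLambertSeries) := by
    refine (sum_minorantCoeff_sub_pos ht k).trans_eq (sum_congr rfl fun i _ ↦ ?_)
    rw [map_sub, coeff_eisensteinLambertSeries (by omega), ← coeff_minorantSeries]
    congr 3
    ring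
  have hpos := coeff_expand_mul_pos (by norm_num) monotone_coeff_overpartitionSeries
    (coeff_zero_overpartitionSeries ▸ zero_lt_one) (by omega) hsum I
  have hnonneg := six_mul_dissectionSeries_sub_mem (9 * I + (3 * t + 2))
  rw [mul_sub, map_sub] at hpos
  rw [map_sub] at hnonneg
  rw [overpartitionSeries_mul_rankDiffSeries_eq_sub, map_sub]
  linarith

theorem stmt9 (n : ℕ) (hn : 1 ≤ n) :
    ((n % 3 = 0 ∨ n % 3 = 1) → nbar 1 3 n < nbar 0 3 n) ∧
    (n % 3 = 2 → nbar 0 3 n < nbar 1 3 n) := by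
  have hdiff := nbar_sub_nbar_eq_coeff hn
  constructor
  · intro h
    have := coeff_overpartitionSeries_mul_rankDiffSeries_pos (n := n) (by omega)
    omega
  · intro h
    have := coeff_overpartitionSeries_mul_rankDiffSeries_neg h
    omega
end

section
/- For every integer n ≥ 1: if n is odd then N̄(0,4,n) > N̄(1,4,n), and if n is even then N̄(0,4,n) < N̄(1,4,n). -/
/-!
Splitting overpartitions of `n` by their largest part writes `∑ z ^ rank` as the coefficient of
`q ^ n` in `2 q ∑ (z q) ^ m (-q / z; q)_m / (q / z; q)_{m + 1}`. The classes modulo 4 are separated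
by evaluating at `z = i` and `z = -1`.

At `z = i` the series satisfies a functional equation under `w ↦ w q`, where `w = q / z`, and
iterating it gives a theta series: the coefficient is twice the indicator of squares. At `z = -1` a
finite form of Gauss's identity `∑ (-1) ^ j q ^ (j ^ 2) = (q; q)_∞ / (-q; q)_∞` expands the products
into ratios of Gaussian binomials, and a telescoping recurrence in `j` turns the sum over `m` into
Lambert series whose coefficients count the positive solutions of `ab = n` and of
`ab + bc + ca = n`, weighted by signs `(-1) ^ a`.

Hence `nbar 0 4 n - nbar 1 4 n` is the indicator of squares minus this signed count. After
symmetrizing in `a, b, c`, the parity of `n` determines the sign of every summand, because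
`ab + bc + ca` is odd exactly when at least two of `a, b, c` are.
-/

open Finset PowerSeries

theorem coeff_eq_of_X_pow_dvd_sub {R : Type*} [Ring R] {f g : R⟦X⟧} {n : ℕ}
    (h : X ^ (n + 1) ∣ f - g) :
    coeff n f = coeff n g :=
  sub_eq_zero.mp <| by rw [← map_sub, X_pow_dvd_iff.mp h n n.lt_succ_self]

section QSeries

variable {K : Type*} [Field K]

theorem one_sub_mul_inv_cancel {a : K⟦X⟧} (ha : constantCoeff a = 0) :
    (1 - a) * (1 - a)⁻¹ = 1 :=
  PowerSeries.mul_inv_cancel _ (by simp [ha])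

theorem one_sub_X_pow_mul_inv_cancel {k : ℕ} (hk : k ≠ 0) :
    (1 - X ^ k) * (1 - X ^ k)⁻¹ = (1 : K⟦X⟧) :=
  one_sub_mul_inv_cancel (by simp [hk])

/-- The quotient `(-w; q)_m / (w; q)_m` of `q`-Pochhammer symbols, with `q = X`. -/
noncomputable def qQuotient (w : K⟦X⟧) (m : ℕ) : K⟦X⟧ :=
  ∏ l ∈ range m, (1 + w * X ^ l) * (1 - w * X ^ l)⁻¹

@[simp]
theorem qQuotient_zero (w : K⟦X⟧) : qQuotient w 0 = 1 := rfl

theorem qQuotient_succ (w : K⟦X⟧) (m : ℕ) :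
    qQuotient w (m + 1) = qQuotient w m * ((1 + w * X ^ m) * (1 - w * X ^ m)⁻¹) :=
  prod_range_succ ..

theorem qQuotient_succ' (w : K⟦X⟧) (m : ℕ) :
    qQuotient w (m + 1) = qQuotient (w * X) m * ((1 + w) * (1 - w)⁻¹) := by
  simp only [qQuotient, prod_range_succ', pow_zero, mul_one, pow_succ', mul_assoc]

theorem qQuotient_succ_sub {w : K⟦X⟧} (hw : constantCoeff w = 0) (m : ℕ) :
    qQuotient w (m + 1) - qQuotient w m =
      2 * w * X ^ m * qQuotient w m * (1 - w * X ^ m)⁻¹ := by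
  rw [qQuotient_succ]
  linear_combination qQuotient w m * one_sub_mul_inv_cancel (a := w * X ^ m) (by simp [hw])

/-- The first `M` terms of Fine's series `∑ (-w; q)_m / (w; q)_{m+1} * t ^ m`, with `q = X`. -/
noncomputable def fineSum (w t : K⟦X⟧) (M : ℕ) : K⟦X⟧ :=
  ∑ m ∈ range M, t ^ m * qQuotient w m * (1 - w * X ^ m)⁻¹

end QSeries

namespace Overpartition

/-- The largest part of an overpartition, with value `0` for the empty one. -/
def largestPart {n : ℕ} (P : Overpartition n) : ℕ := P.1.1.parts.sup

/-- The number of parts of an overpartition, counted with multiplicity. -/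
def numParts {n : ℕ} (P : Overpartition n) : ℕ := P.1.1.parts.card

theorem rank_eq {n : ℕ} (P : Overpartition n) : P.rank = P.largestPart - P.numParts := rfl

theorem largestPart_le {n : ℕ} (P : Overpartition n) : P.largestPart ≤ n :=
  Multiset.sup_le.mpr fun _ hb => P.1.1.le_of_mem_parts hb

theorem largestPart_pos {n : ℕ} (hn : n ≠ 0) (P : Overpartition n) : 0 < P.largestPart := by
  obtain ⟨b, hb⟩ : ∃ b, b ∈ P.1.1.parts :=
    Multiset.exists_mem_of_ne_zero fun h => hn <| by simpa [h] using P.1.1.parts_sum.symm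
  exact (P.1.1.parts_pos hb).trans_le (Multiset.le_sup hb)

/-- Overpartitions of `n` as pairs of a partition and a subset of its distinct part sizes. -/
def equivSigma (n : ℕ) :
    Overpartition n ≃ Σ p : n.Partition, {s : Finset ℕ // s ∈ p.parts.toFinset.powerset} where
  toFun P := ⟨P.1.1, P.1.2, mem_powerset.mpr P.2⟩
  invFun Q := ⟨(Q.1, Q.2.1), mem_powerset.mp Q.2.2⟩

noncomputable instance (n : ℕ) : Fintype (Overpartition n) :=
  Fintype.ofEquiv _ (equivSigma n).symm

theorem sum_partition {M : Type*} [AddCommMonoid M] (n : ℕ) (g : n.Partition → M) :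
    ∑ P : Overpartition n, g P.1.1 = ∑ p : n.Partition, 2 ^ #p.parts.toFinset • g p := by
  rw [Fintype.sum_equiv (equivSigma n) (fun P => g P.1.1) (fun Q => g Q.1) fun _ => rfl,
    Fintype.sum_sigma]
  simp [card_powerset]

section GeneratingFunction

/-- The weight that turns `Nat.Partition.genFun` into the generating function of overpartitions
with parts at most `L`, counted by their number of parts: a part size occurring `c` times
contributes `w ^ c`, and `2` for the choice of overlining it. -/
def boundedWeight {R : Type*} [CommSemiring R] (w : R) (L k c : ℕ) : R :=
  if k ≤ L then 2 * w ^ c else 0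

theorem prod_boundedWeight {R : Type*} [CommSemiring R] (w : R) (L : ℕ) {n : ℕ}
    (p : n.Partition) :
    p.parts.toFinsupp.prod (boundedWeight w L) =
      if p.parts.sup ≤ L then 2 ^ #p.parts.toFinset * w ^ p.parts.card else 0 := by
  simp only [Finsupp.prod, Multiset.toFinsupp_support, Multiset.toFinsupp_apply, boundedWeight,
    prod_ite_zero, Multiset.mem_toFinset, Multiset.sup_le, prod_mul_distrib, prod_const,
    prod_pow_eq_pow_sum, Multiset.toFinset_sum_count_eq]

variable {K : Type*} [Field K]

open PowerSeries.WithPiTopology in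
theorem one_add_tsum_two_mul_pow [TopologicalSpace K] [IsTopologicalRing K] [T2Space K]
    (w : K) (k : ℕ) :
    1 + ∑' j : ℕ, (2 * w ^ (j + 1)) • (X : K⟦X⟧) ^ ((k + 1) * (j + 1)) =
      (1 + C w * X ^ (k + 1)) * (1 - C w * X ^ (k + 1))⁻¹ := by
  set a : K⟦X⟧ := C w * X ^ (k + 1)
  have ha : constantCoeff a = 0 := by simp [a]
  have hterm (j : ℕ) : (2 * w ^ (j + 1)) • (X : K⟦X⟧) ^ ((k + 1) * (j + 1)) = 2 * a * a ^ j := by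
    simp only [smul_eq_C_mul, map_mul, map_ofNat, map_pow, a]
    ring
  have hgeom := tsum_pow_mul_one_sub_of_constantCoeff_eq_zero ha
  rw [PowerSeries.eq_mul_inv_iff_mul_eq (by simp [ha]), tsum_congr hterm,
    (summable_pow_of_constantCoeff_eq_zero ha).tsum_mul_left]
  linear_combination 2 * a * hgeom

open PowerSeries.WithPiTopology in
theorem genFun_boundedWeight (w : K) (L : ℕ) :
    Nat.Partition.genFun (boundedWeight w L) = qQuotient (C w * X) L := by
  let _ : TopologicalSpace K := ⊥
  have : DiscreteTopology K := ⟨rfl⟩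
  rw [Nat.Partition.genFun_eq_tprod, tprod_eq_prod (s := range L), qQuotient]
  · refine prod_congr rfl fun k hk => ?_
    simp only [boundedWeight, if_pos (Nat.succ_le_of_lt (mem_range.mp hk)),
      one_add_tsum_two_mul_pow]
    rw [mul_assoc, ← pow_succ']
  · intro k hk
    simp [boundedWeight, mem_range.not.mp hk]

theorem coeff_qQuotient (w : K) (L n : ℕ) :
    coeff n (qQuotient (C w * X) L) =
      ∑ P : Overpartition n with P.largestPart ≤ L, w ^ P.numParts := by
  rw [← genFun_boundedWeight, Nat.Partition.coeff_genFun, sum_filter]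
  refine Eq.trans (sum_congr rfl fun p _ => ?_)
    (sum_partition n fun p => if p.parts.sup ≤ L then w ^ p.parts.card else 0).symm
  rw [prod_boundedWeight]
  simp

theorem coeff_qQuotient_succ_sub (w : K) (L n : ℕ) :
    coeff n (qQuotient (C w * X) (L + 1) - qQuotient (C w * X) L) =
      ∑ P : Overpartition n with P.largestPart = L + 1, w ^ P.numParts := by
  simp only [map_sub, coeff_qQuotient, sum_filter]
  rw [← sum_sub_distrib]
  refine sum_congr rfl fun P _ => ?_
  split_ifs <;> first | omega | simp

theorem sum_zpow_rank {n : ℕ} (hn : n ≠ 0) {z : K} (hz : z ≠ 0) :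
    ∑ P : Overpartition n, z ^ P.rank = coeff n (2 * X * fineSum (C z⁻¹ * X) (C z * X) n) := by
  have hfiber (L : ℕ) : 2 * X * ((C z * X) ^ L * qQuotient (C z⁻¹ * X) L *
      (1 - C z⁻¹ * X * X ^ L)⁻¹) =
        C (z ^ (L + 1)) * (qQuotient (C z⁻¹ * X) (L + 1) - qQuotient (C z⁻¹ * X) L) := by
    have hzz : C z * C z⁻¹ = (1 : K⟦X⟧) := by rw [← map_mul, mul_inv_cancel₀ hz, map_one]
    rw [qQuotient_succ_sub (w := C z⁻¹ * X) (by simp), map_pow]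
    linear_combination (-2 * X * (C z) ^ L * X ^ L * qQuotient (C z⁻¹ * X) L *
      (1 - C z⁻¹ * X * X ^ L)⁻¹) * hzz
  have hpred (P : Overpartition n) (L : ℕ) : P.largestPart - 1 = L ↔ P.largestPart = L + 1 := by
    have := P.largestPart_pos hn
    omega
  have hmaps : ∀ P ∈ (univ : Finset (Overpartition n)), P.largestPart - 1 ∈ range n :=
    fun P _ => mem_range.mpr (by have := P.largestPart_le; omega)
  rw [fineSum, mul_sum, map_sum, ← sum_fiberwise_of_maps_to hmaps]
  refine sum_congr rfl fun L _ => ?_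
  rw [hfiber, coeff_C_mul, coeff_qQuotient_succ_sub, mul_sum]
  simp only [hpred]
  refine sum_congr rfl fun P hP => ?_
  rw [rank_eq, zpow_sub₀ hz, zpow_natCast, zpow_natCast, (mem_filter.mp hP).2, inv_pow,
    div_eq_mul_inv]

end GeneratingFunction

end Overpartition

section Square

variable {K : Type*} [Field K]

theorem qQuotient_mul_X {w : K⟦X⟧} (hw : constantCoeff w = 0) (m : ℕ) :
    qQuotient (w * X) m =
      qQuotient w m * ((1 - w) * (1 + w)⁻¹ * ((1 + w * X ^ m) * (1 - w * X ^ m)⁻¹)) := by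
  have hadd : (1 + w) * (1 + w)⁻¹ = 1 := PowerSeries.mul_inv_cancel _ (by simp [hw])
  have hsub : (1 - w) * (1 - w)⁻¹ = 1 := one_sub_mul_inv_cancel hw
  have hshift := (qQuotient_succ' w m).symm.trans (qQuotient_succ w m)
  linear_combination (1 - w) * (1 + w)⁻¹ * hshift -
    qQuotient (w * X) m * ((1 + w) * (1 + w)⁻¹ * hsub + hadd)

theorem fineSum_neg_self {w : K⟦X⟧} (hw : constantCoeff w = 0) (M : ℕ) :
    fineSum w (-w) M + w ^ 2 * X * fineSum (w * X) (-(w * X)) M =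
      1 - (-w) ^ M * qQuotient w M * (1 - w ^ 2 * X ^ M) * (1 + w)⁻¹ * (1 - w * X ^ M)⁻¹ := by
  have hadd : (1 + w) * (1 + w)⁻¹ = 1 := PowerSeries.mul_inv_cancel _ (by simp [hw])
  induction M with
  | zero =>
    simp only [fineSum, range_zero, sum_empty, pow_zero, mul_one, qQuotient_zero]
    linear_combination (1 - w) * (1 - w)⁻¹ * hadd + one_sub_mul_inv_cancel hw
  | succ M ih =>
    have hlast : (1 - w * X ^ (M + 1)) * (1 - w * X ^ (M + 1))⁻¹ = 1 :=
      one_sub_mul_inv_cancel (by simp [hw])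
    simp only [fineSum, sum_range_succ] at ih ⊢
    rw [qQuotient_succ, qQuotient_mul_X hw, mul_assoc w X (X ^ M), ← pow_succ']
    linear_combination ih + (-w) ^ M * qQuotient w M * (1 - w * X ^ M)⁻¹ *
      ((1 - w ^ 2 * X ^ M - (1 + w)) * (1 + w)⁻¹ * hlast - hadd)

theorem X_pow_dvd_fineSum_neg_self_sub {L M : ℕ} (hLM : L ≤ M) {w : K⟦X⟧} (hw : X ∣ w) :
    X ^ L ∣ fineSum w (-w) M - ∑ k ∈ range L, (-1) ^ k * w ^ (2 * k) * X ^ k ^ 2 := by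
  induction L generalizing w with
  | zero => simp
  | succ L ih =>
    have hrec := fineSum_neg_self (X_dvd_iff.mp hw) M
    have htail : X ^ (L + 1) ∣ (-w) ^ M :=
      (pow_dvd_pow X hLM).trans (pow_dvd_pow_of_dvd (dvd_neg.mpr hw) M)
    have hsplit : ∑ k ∈ range (L + 1), (-1) ^ k * w ^ (2 * k) * X ^ k ^ 2 =
        1 - w ^ 2 * X * ∑ k ∈ range L, (-1) ^ k * (w * X) ^ (2 * k) * X ^ k ^ 2 := by
      rw [sum_range_succ', mul_sum, sub_eq_add_neg, ← sum_neg_distrib, add_comm]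
      congr 1
      · simp
      · exact sum_congr rfl fun k _ => by ring
    obtain ⟨u, hu⟩ := ih (by omega) (hw.mul_right X)
    obtain ⟨v, hv⟩ := htail
    rw [hsplit]
    refine ⟨-(w ^ 2 * u) - v * qQuotient w M * (1 - w ^ 2 * X ^ M) * (1 + w)⁻¹ *
      (1 - w * X ^ M)⁻¹, ?_⟩
    linear_combination hrec - w ^ 2 * X * hu - qQuotient w M * (1 - w ^ 2 * X ^ M) * (1 + w)⁻¹ *
      (1 - w * X ^ M)⁻¹ * hv

theorem sum_range_ite_eq_succ_sq {R : Type*} [AddCommMonoidWithOne R] {n : ℕ} (hn : n ≠ 0) :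
    ∑ k ∈ range n, (if n = (k + 1) ^ 2 then (1 : R) else 0) = if IsSquare n then 1 else 0 := by
  split_ifs with hsq
  · obtain ⟨r, rfl⟩ := (isSquare_iff_exists_sq n).mp hsq
    obtain ⟨k, rfl⟩ := Nat.exists_eq_succ_of_ne_zero ((pow_ne_zero_iff two_ne_zero).mp hn)
    rw [sum_eq_single k]
    · simp
    · intro j _ hjk
      exact if_neg fun h => hjk (by simpa [Nat.pow_left_inj] using h.symm)
    · intro hk
      exact absurd (mem_range.mpr (by nlinarith)) hk
  · refine sum_eq_zero fun k _ => if_neg ?_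
    rintro rfl
    exact hsq (IsSquare.sq _)

theorem Overpartition.sum_zpow_rank_of_sq_eq_neg_one {n : ℕ} (hn : n ≠ 0) {i : K}
    (hi : i ^ 2 = -1) :
    ∑ P : Overpartition n, i ^ P.rank = 2 * if IsSquare n then 1 else 0 := by
  have hi0 : i ≠ 0 := by rintro rfl; simp at hi
  have hinv : i⁻¹ = -i := inv_eq_of_mul_eq_one_right (by linear_combination -hi)
  have hw : (C i⁻¹ * X : K⟦X⟧) ^ 2 = -X ^ 2 := by
    rw [hinv, mul_pow, ← map_pow, neg_sq, hi]
    simp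
  have hneg : (C i * X : K⟦X⟧) = -(C i⁻¹ * X) := by simp [hinv]
  obtain ⟨u, hu⟩ := X_pow_dvd_fineSum_neg_self_sub le_rfl (M := n) (dvd_mul_left X (C i⁻¹))
  have hdvd : X ^ (n + 1) ∣ 2 * X * fineSum (C i⁻¹ * X) (C i * X) n -
      C 2 * ∑ k ∈ range n, X ^ (k + 1) ^ 2 := by
    refine ⟨2 * u, ?_⟩
    have hterm : X * ∑ k ∈ range n, (-1) ^ k * (C i⁻¹ * X : K⟦X⟧) ^ (2 * k) * X ^ k ^ 2 =
        ∑ k ∈ range n, X ^ (k + 1) ^ 2 := by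
      rw [mul_sum]
      refine sum_congr rfl fun k _ => ?_
      rw [pow_mul, hw, ← mul_pow]
      ring
    rw [hneg, ← hterm, map_ofNat]
    linear_combination 2 * X * hu
  rw [sum_zpow_rank hn hi0, coeff_eq_of_X_pow_dvd_sub hdvd, coeff_C_mul, map_sum]
  simp only [coeff_X_pow, sum_range_ite_eq_succ_sq hn]

end Square

section GaussRatio

variable {K : Type*} [Field K]

variable (K) in
/-- The ratio of Gaussian binomial coefficients `[2N choose N + j] / [2N choose N]`, with `q = X`.
For `j > N` it vanishes because the exponent `N - i` is truncated. -/
noncomputable def gaussRatio (N j : ℕ) : K⟦X⟧ :=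
  ∏ i ∈ range j, (1 - X ^ (N - i)) * (1 - X ^ (N + 1 + i))⁻¹

@[simp]
theorem gaussRatio_zero (N : ℕ) : gaussRatio K N 0 = 1 := rfl

theorem gaussRatio_succ (N j : ℕ) :
    gaussRatio K N (j + 1) =
      gaussRatio K N j * ((1 - X ^ (N - j)) * (1 - X ^ (N + 1 + j))⁻¹) :=
  prod_range_succ ..

theorem gaussRatio_eq_zero {N j : ℕ} (h : N < j) : gaussRatio K N j = 0 :=
  prod_eq_zero (mem_range.mpr h) (by simp)

theorem gaussRatio_succ_mul (N j : ℕ) :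
    gaussRatio K N (j + 1) * (1 - X ^ (N + 1 + j)) = gaussRatio K N j * (1 - X ^ (N - j)) := by
  rw [gaussRatio_succ]
  linear_combination gaussRatio K N j * (1 - X ^ (N - j)) *
    one_sub_X_pow_mul_inv_cancel (K := K) (k := N + 1 + j) (by omega)

theorem gaussRatio_succ_left (N j : ℕ) :
    gaussRatio K (N + 1) j * ((1 - X ^ (N + 1 - j)) * (1 - X ^ (N + 1 + j))) =
      gaussRatio K N j * (1 - X ^ (N + 1)) ^ 2 := by
  induction j with
  | zero => simp [pow_two]
  | succ j ih =>
    have hsucc := gaussRatio_succ_mul (K := K) (N + 1) j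
    rw [gaussRatio_succ N, Nat.add_sub_add_right, ← add_assoc, ← add_right_comm (N + 1) 1 j]
    have hinv := one_sub_X_pow_mul_inv_cancel (K := K) (k := N + 1 + j) (by omega)
    linear_combination (1 - X ^ (N - j)) * hsucc + (1 - X ^ (N - j)) * (1 - X ^ (N + 1 + j))⁻¹ * ih
      - gaussRatio K (N + 1) j * (1 - X ^ (N + 1 - j)) * (1 - X ^ (N - j)) * hinv

theorem gaussRatio_add_gaussRatio_succ_left (N j : ℕ) :
    gaussRatio K (N + 1) (j + 1) * (1 - X ^ (2 * (N + 1))) +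
        gaussRatio K N (j + 1) * (1 - X ^ (N + 1)) ^ 2 =
      gaussRatio K (N + 1) (j + 1) * (1 - X ^ (N + 1 - (j + 1))) +
        gaussRatio K (N + 1) j * (1 - X ^ (N + 1 - j)) := by
  rw [← gaussRatio_succ_left, ← gaussRatio_succ_mul (N + 1) j]
  rcases le_or_gt j N with hj | hj
  · obtain ⟨d, rfl⟩ := Nat.exists_eq_add_of_le hj
    rw [show j + d + 1 - (j + 1) = d by omega]
    ring
  · rw [gaussRatio_eq_zero (show N + 1 < j + 1 by omega)]
    ring

/-- A finite form of Gauss's theta identity. With `T N` the bracket on the right and `q = X`, it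
amounts to `(1 + q ^ (N + 1)) * T (N + 1) + (1 - q ^ (N + 1)) * T N = 0`, whose left-hand side
telescopes. -/
theorem qQuotient_neg_X {N J : ℕ} (hNJ : N ≤ J) :
    qQuotient (-X : K⟦X⟧) N =
      (-1) ^ N * (1 + 2 * ∑ j ∈ range J, (-1) ^ (j + 1) * gaussRatio K N (j + 1)) := by
  induction N with
  | zero => simp [gaussRatio_eq_zero]
  | succ N ih =>
    set Y : K⟦X⟧ := X ^ (N + 1) with hY
    have hsub : (1 - Y) * (1 - Y)⁻¹ = 1 := one_sub_X_pow_mul_inv_cancel (by omega)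
    have hadd : (1 + Y) * (1 + Y)⁻¹ = 1 := PowerSeries.mul_inv_cancel _ (by simp [hY])
    have htelescope : ∑ j ∈ range J, (-1) ^ (j + 1) *
        (gaussRatio K (N + 1) (j + 1) * (1 + Y) + gaussRatio K N (j + 1) * (1 - Y)) = -1 := by
      calc
        _ = ∑ j ∈ range J, ((-1) ^ (j + 1) * (gaussRatio K (N + 1) (j + 1) *
              (1 - X ^ (N + 1 - (j + 1)))) * (1 - Y)⁻¹ -
            (-1) ^ j * (gaussRatio K (N + 1) j * (1 - X ^ (N + 1 - j))) * (1 - Y)⁻¹) := by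
          refine sum_congr rfl fun j _ => ?_
          have hstep := gaussRatio_add_gaussRatio_succ_left (K := K) N j
          rw [pow_mul', ← hY] at hstep
          linear_combination (-1) ^ (j + 1) * (1 - Y)⁻¹ * hstep -
            (-1) ^ (j + 1) * (gaussRatio K (N + 1) (j + 1) * (1 + Y) +
              gaussRatio K N (j + 1) * (1 - Y)) * hsub
        _ = -1 := by
          rw [sum_range_sub fun j =>
            (-1) ^ j * (gaussRatio K (N + 1) j * (1 - X ^ (N + 1 - j))) * (1 - Y)⁻¹]
          simp [Nat.sub_eq_zero_of_le hNJ, ← hY, hsub]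
    simp only [mul_add, sum_add_distrib, ← mul_assoc, ← sum_mul] at htelescope
    rw [qQuotient_succ, ih (by omega), show -X * X ^ N = -Y by rw [hY]; ring, sub_neg_eq_add,
      ← sub_eq_add_neg]
    linear_combination 2 * (-1) ^ N * (1 + Y)⁻¹ * htelescope - (-1) ^ N *
      (1 + 2 * ∑ j ∈ range J, (-1) ^ (j + 1) * gaussRatio K (N + 1) (j + 1)) * hadd

theorem X_pow_dvd_mul_sub_one {a : K⟦X⟧} {d p q : ℕ} (ha : X ^ d ∣ a - 1) (hp : d ≤ p)
    (hq : d ≤ q) (hq0 : q ≠ 0) : X ^ d ∣ a * ((1 - X ^ p) * (1 - X ^ q)⁻¹) - 1 := by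
  have hinv := one_sub_X_pow_mul_inv_cancel (K := K) hq0
  have hsplit : a * ((1 - X ^ p) * (1 - X ^ q)⁻¹) - 1 =
      (a - 1) - X ^ p * a + X ^ q * (a * (1 - X ^ p) * (1 - X ^ q)⁻¹) := by
    linear_combination a * (1 - X ^ p) * hinv
  rw [hsplit]
  exact (ha.sub ((pow_dvd_pow X hp).mul_right _)).add ((pow_dvd_pow X hq).mul_right _)

theorem X_pow_dvd_gaussRatio_sub_one (N j : ℕ) : X ^ (N + 1 - j) ∣ gaussRatio K N j - 1 := by
  induction j with
  | zero => simp
  | succ j ih =>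
    rw [gaussRatio_succ]
    exact X_pow_dvd_mul_sub_one ((pow_dvd_pow X (by omega)).trans ih) (by omega) (by omega)
      (by omega)

end GaussRatio

section Lambert

variable {K : Type*} [Field K]

variable (K) in
/-- The series `q ^ k / (1 - q ^ k)`, with `q = X`; its junk value at `k = 0` is `0`. -/
noncomputable def lambertTerm (k : ℕ) : K⟦X⟧ := X ^ k * (1 - X ^ k)⁻¹

variable (K) in
/-- The Lambert series `∑ q ^ N / (1 - q ^ N)` over `1 ≤ N ≤ M`, weighted by `gaussRatio K N j`. -/
noncomputable def gaussLambert (j M : ℕ) : K⟦X⟧ :=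
  ∑ N ∈ range M, lambertTerm K (N + 1) * gaussRatio K (N + 1) j

variable (K) in
/-- The first `L` terms of the series `∑ q ^ (j * x) * q ^ (j + x) / (1 - q ^ (j + x))` over `x`,
which is the limit of `gaussLambert K j M` as `M → ∞` when `j ≠ 0`. -/
noncomputable def shiftedLambert (j L : ℕ) : K⟦X⟧ :=
  ∑ x ∈ range L, X ^ (j * x) * lambertTerm K (j + x)

theorem lambertTerm_mul {k : ℕ} (hk : k ≠ 0) : lambertTerm K k * (1 - X ^ k) = X ^ k := by
  rw [lambertTerm]
  linear_combination X ^ k * one_sub_X_pow_mul_inv_cancel (K := K) hk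

/-- The increment in `M` of the last summand in `gaussLambert_eq`. -/
theorem lambertTerm_mul_gaussRatio_sub {j M : ℕ} (hj : j ≠ 0) (hjM : j ≤ M + 1) :
    lambertTerm K j * (1 - X ^ (j + 1))⁻¹ *
        (gaussRatio K (M + 1) j * ((1 - X ^ (M + 1 + 1)) * (1 - X ^ (M + 1 + 1 + j))⁻¹) -
          gaussRatio K M j * ((1 - X ^ (M + 1)) * (1 - X ^ (M + 1 + j))⁻¹)) =
      lambertTerm K (M + 1) * (1 - X ^ (M + 1 + 1 + j))⁻¹ * gaussRatio K (M + 1) j := by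
  have hprev := gaussRatio_succ_left (K := K) M j
  obtain ⟨d, hd⟩ := Nat.exists_eq_add_of_le hjM
  rw [hd, Nat.add_sub_cancel_left] at hprev
  rw [hd, lambertTerm, lambertTerm]
  have hj0 := one_sub_X_pow_mul_inv_cancel (K := K) (k := j) hj
  have hj1 := one_sub_X_pow_mul_inv_cancel (K := K) (k := j + 1) (by omega)
  have hM := one_sub_X_pow_mul_inv_cancel (K := K) (k := j + d) (by omega)
  have hMj := one_sub_X_pow_mul_inv_cancel (K := K) (k := j + d + j) (by omega)
  have hMj1 := one_sub_X_pow_mul_inv_cancel (K := K) (k := j + d + 1 + j) (by omega)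
  have hA : gaussRatio K M j * ((1 - X ^ (j + d)) * (1 - X ^ (j + d + j))⁻¹) =
      gaussRatio K (j + d) j * ((1 - X ^ d) * (1 - X ^ (j + d))⁻¹) := by
    linear_combination (1 - X ^ (j + d))⁻¹ * (gaussRatio K (j + d) j * (1 - X ^ d) * hMj -
      (1 - X ^ (j + d + j))⁻¹ * hprev) -
      gaussRatio K M j * (1 - X ^ (j + d)) * (1 - X ^ (j + d + j))⁻¹ * hM
  have hbracket : (1 - X ^ (j + d + 1)) * (1 - X ^ (j + d + 1 + j))⁻¹ -
      (1 - X ^ d) * (1 - X ^ (j + d))⁻¹ = (X ^ d * (1 - X ^ j) * (1 - X ^ (j + 1)) *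
        (1 - X ^ (j + d))⁻¹ * (1 - X ^ (j + d + 1 + j))⁻¹ : K⟦X⟧) := by
    linear_combination (1 - X ^ d) * (1 - X ^ (j + d))⁻¹ * hMj1 -
      (1 - X ^ (j + d + 1)) * (1 - X ^ (j + d + 1 + j))⁻¹ * hM
  rw [hA]
  linear_combination X ^ j * (1 - X ^ j)⁻¹ * (1 - X ^ (j + 1))⁻¹ * gaussRatio K (j + d) j *
    hbracket + X ^ (j + d) * (1 - X ^ (j + d))⁻¹ * (1 - X ^ (j + d + 1 + j))⁻¹ *
      gaussRatio K (j + d) j * ((1 - X ^ j) * (1 - X ^ j)⁻¹ * hj1 + hj0)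

theorem gaussLambert_eq {j : ℕ} (hj : j ≠ 0) (M : ℕ) :
    gaussLambert K j M = X ^ (2 * j + 1) * gaussLambert K (j + 1) M +
      (1 - X ^ (2 * j + 1)) * (lambertTerm K j * (1 - X ^ (j + 1))⁻¹ *
        (gaussRatio K M j * ((1 - X ^ (M + 1)) * (1 - X ^ (M + 1 + j))⁻¹))) := by
  induction M with
  | zero => simp [gaussLambert, gaussRatio_eq_zero (Nat.pos_of_ne_zero hj)]
  | succ M ih =>
    simp only [gaussLambert, sum_range_succ] at ih ⊢
    rcases lt_or_ge (M + 1) j with hlt | hle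
    · rw [gaussRatio_eq_zero (show M < j by omega)] at ih
      rw [gaussRatio_eq_zero hlt, gaussRatio_eq_zero (show M + 1 < j + 1 by omega)]
      linear_combination ih
    · have hinv := one_sub_X_pow_mul_inv_cancel (K := K) (k := M + 1 + 1 + j) (by omega)
      have hpow : (X : K⟦X⟧) ^ (2 * j + 1) * X ^ (M + 1 - j) = X ^ (M + 1 + 1 + j) := by
        rw [← pow_add]
        congr 1
        omega
      rw [gaussRatio_succ]
      linear_combination ih -
        (1 - X ^ (2 * j + 1)) * lambertTerm_mul_gaussRatio_sub (K := K) hj hle +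
        lambertTerm K (M + 1) * gaussRatio K (M + 1) j *
          ((1 - X ^ (M + 1 + 1 + j))⁻¹ * hpow - hinv)

theorem X_pow_dvd_gaussLambert_sub {j : ℕ} (hj : j ≠ 0) (M : ℕ) :
    X ^ (M + 1) ∣ gaussLambert K j M - (lambertTerm K j +
      X ^ (2 * j + 1) * (gaussLambert K (j + 1) M + (1 - X ^ (j + 1))⁻¹)) := by
  obtain ⟨u, hu⟩ := X_pow_dvd_mul_sub_one (X_pow_dvd_gaussRatio_sub_one (K := K) M j)
    (show M + 1 - j ≤ M + 1 by omega) (show M + 1 - j ≤ M + 1 + j by omega) (by omega)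
  have hpow : (X : K⟦X⟧) ^ (M + 1) ∣ X ^ j * X ^ (M + 1 - j) := by
    rw [← pow_add]
    exact pow_dvd_pow X (by omega)
  have hj0 := one_sub_X_pow_mul_inv_cancel (K := K) hj
  have hj1 := one_sub_X_pow_mul_inv_cancel (K := K) (k := j + 1) (by omega)
  refine hpow.trans ⟨(1 - X ^ (2 * j + 1)) * (1 - X ^ j)⁻¹ * (1 - X ^ (j + 1))⁻¹ * u, ?_⟩
  rw [gaussLambert_eq hj, lambertTerm]
  linear_combination (1 - X ^ (2 * j + 1)) * X ^ j * (1 - X ^ j)⁻¹ * (1 - X ^ (j + 1))⁻¹ * hu +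
    X ^ j * (1 - X ^ j)⁻¹ * hj1 + X ^ (2 * j + 1) * (1 - X ^ (j + 1))⁻¹ * hj0

theorem shiftedLambert_succ {j : ℕ} (L : ℕ) :
    shiftedLambert K j (L + 1) = lambertTerm K j + X ^ (2 * j + 1) *
      (shiftedLambert K (j + 1) L + (1 - X ^ ((j + 1) * L)) * (1 - X ^ (j + 1))⁻¹) := by
  have hgeom : ∑ x ∈ range L, (X : K⟦X⟧) ^ ((j + 1) * x) =
      (1 - X ^ ((j + 1) * L)) * (1 - X ^ (j + 1))⁻¹ := by
    rw [PowerSeries.eq_mul_inv_iff_mul_eq (by simp)]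
    simp only [pow_mul, geom_sum_mul_neg]
  have hterm (x : ℕ) : X ^ (j * (x + 1)) * lambertTerm K (j + (x + 1)) =
      X ^ (2 * j + 1) * (X ^ ((j + 1) * x) * lambertTerm K (j + 1 + x) + X ^ ((j + 1) * x)) := by
    rw [add_right_comm j 1 x, ← add_assoc]
    have := lambertTerm_mul (K := K) (k := j + x + 1) (by omega)
    linear_combination X ^ (j * (x + 1)) * this
  rw [shiftedLambert, sum_range_succ', sum_congr rfl fun x _ => hterm x, ← mul_sum,
    sum_add_distrib, hgeom, shiftedLambert, mul_zero, pow_zero, one_mul, add_zero, add_comm]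

theorem X_pow_dvd_gaussLambert_sub_shiftedLambert {L M : ℕ} (hL : L ≤ M + 1) {j : ℕ} (hj : j ≠ 0) :
    X ^ L ∣ gaussLambert K j M - shiftedLambert K j L := by
  induction L generalizing j with
  | zero => simp
  | succ L ih =>
    obtain ⟨u, hu⟩ := (pow_dvd_pow X hL).trans (X_pow_dvd_gaussLambert_sub (K := K) hj M)
    obtain ⟨v, hv⟩ := ih (by omega) j.succ_ne_zero
    obtain ⟨e, he⟩ : ∃ e, (j + 1) * L = L + e := ⟨j * L, by ring⟩
    rw [shiftedLambert_succ, he]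
    refine ⟨u + X ^ (2 * j) * v + X ^ (2 * j + e) * (1 - X ^ (j + 1))⁻¹, ?_⟩
    linear_combination hu + X ^ (2 * j + 1) * hv

end Lambert

section Counting

theorem sum_range_succ_eq_sum_Ioc {M : Type*} [AddCommMonoid M] (f : ℕ → M) (n : ℕ) :
    ∑ k ∈ range n, f (k + 1) = ∑ k ∈ Ioc 0 n, f k := by
  induction n with
  | zero => simp
  | succ n ih => rw [sum_range_succ, ih, sum_Ioc_succ_top n.zero_le]

theorem sum_filter_product_fst {R ι κ : Type*} [Semiring R] (s : Finset ι) (t : Finset κ)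
    (p : ι × κ → Prop) [DecidablePred p] (f : ι → R) :
    ∑ x ∈ s ×ˢ t with p x, f x.1 = ∑ a ∈ s, f a * #{b ∈ t | p (a, b)} := by
  simp only [sum_filter, sum_product, card_filter, Nat.cast_sum, mul_sum, Nat.cast_ite,
    Nat.cast_one, Nat.cast_zero, mul_ite, mul_one, mul_zero]

theorem sum_divisorsAntidiagonal_fst {R : Type*} [Semiring R] {n : ℕ} (hn : n ≠ 0) (f : ℕ → R) :
    ∑ p ∈ n.divisorsAntidiagonal, f p.1 = ∑ a ∈ Ioc 0 n, f a * #{b ∈ Ioc 0 n | a * b = n} := by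
  rw [Nat.divisorsAntidiagonal_eq_prod_filter_of_le hn le_rfl, sum_filter_product_fst]

/-- The positive solutions `(a, b, c)` of `ab + bc + ca = n`. -/
def esymmTriples (n : ℕ) : Finset (ℕ × ℕ × ℕ) :=
  {t ∈ Ioc 0 n ×ˢ Ioc 0 n ×ˢ Ioc 0 n | t.1 * t.2.1 + t.2.1 * t.2.2 + t.2.2 * t.1 = n}

/-- The number of solutions of `ab = n` and of `ab + bc + ca = n` in positive integers, counted
with the weights `1 + 2 (-1) ^ a` and `2 (-1) ^ a` in which the rank generating function at `-1`
produces them. -/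
def signedCount (n : ℕ) : ℤ :=
  ∑ p ∈ n.divisorsAntidiagonal, (1 + 2 * (-1) ^ p.1) + 2 * ∑ t ∈ esymmTriples n, (-1) ^ t.1

end Counting

section MinusOne

variable {K : Type*} [Field K]

theorem coeff_X_pow_mul_lambertTerm {k : ℕ} (hk : k ≠ 0) (m n : ℕ) :
    coeff n (X ^ m * lambertTerm K k) = (#{z ∈ Ioc 0 n | m + k * z = n} : K) := by
  have hdvd : (X : K⟦X⟧) ^ (n + 1) ∣
      X ^ m * lambertTerm K k - ∑ z ∈ range n, X ^ (m + k * (z + 1)) := by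
    have hgeom := geom_sum_mul_neg ((X : K⟦X⟧) ^ k) n
    have hinv := one_sub_X_pow_mul_inv_cancel (K := K) hk
    have hsum : ∑ z ∈ range n, (X : K⟦X⟧) ^ (m + k * (z + 1)) =
        X ^ m * X ^ k * ∑ z ∈ range n, (X ^ k) ^ z := by
      rw [mul_sum]
      exact sum_congr rfl fun z _ => by ring
    have hdiff : X ^ m * lambertTerm K k - ∑ z ∈ range n, X ^ (m + k * (z + 1)) =
        X ^ (k * (n + 1)) * (X ^ m * (1 - X ^ k)⁻¹) := by
      rw [hsum, lambertTerm]
      linear_combination (-X ^ m * X ^ k * (1 - X ^ k)⁻¹ : K⟦X⟧) * hgeom +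
        X ^ m * X ^ k * (∑ z ∈ range n, (X ^ k) ^ z) * hinv
    rw [hdiff]
    exact (pow_dvd_pow X (Nat.le_mul_of_pos_left _ (Nat.pos_of_ne_zero hk))).mul_right _
  rw [coeff_eq_of_X_pow_dvd_sub hdvd, map_sum, card_filter, Nat.cast_sum,
    sum_range_succ_eq_sum_Ioc fun z => coeff n (X ^ (m + k * z) : K⟦X⟧)]
  exact sum_congr rfl fun z _ => by simp [coeff_X_pow, eq_comm]

theorem coeff_gaussLambert_zero (n : ℕ) :
    coeff n (gaussLambert K 0 n) = ∑ a ∈ Ioc 0 n, (#{b ∈ Ioc 0 n | a * b = n} : K) := by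
  rw [gaussLambert, map_sum, ← sum_range_succ_eq_sum_Ioc]
  refine sum_congr rfl fun a _ => ?_
  simpa using coeff_X_pow_mul_lambertTerm (K := K) a.succ_ne_zero 0 n

theorem coeff_gaussLambert {j : ℕ} (hj : j ≠ 0) (n : ℕ) :
    coeff n (gaussLambert K j n) = #{z ∈ Ioc 0 n | j * z = n} +
      #{y ∈ Ioc 0 n ×ˢ Ioc 0 n | j * y.1 + y.1 * y.2 + y.2 * j = n} := by
  have hterm (x : ℕ) := coeff_X_pow_mul_lambertTerm (K := K) (k := j + x) (by omega) (j * x) n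
  have hcomm (x z : ℕ) : j * x + x * z + z * j = j * x + (j + x) * z := by ring
  rw [coeff_eq_of_X_pow_dvd_sub (X_pow_dvd_gaussLambert_sub_shiftedLambert le_rfl hj),
    shiftedLambert, map_sum, sum_congr rfl fun x _ => hterm x, sum_range_succ',
    sum_range_succ_eq_sum_Ioc fun x => (#{z ∈ Ioc 0 n | j * x + (j + x) * z = n} : K), add_comm]
  have hpairs := sum_filter_product_fst (R := K) (Ioc 0 n) (Ioc 0 n)
    (fun y => j * y.1 + y.1 * y.2 + y.2 * j = n) fun _ => 1
  simp only [sum_const, nsmul_eq_mul, mul_one, one_mul, hcomm] at hpairs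
  simp only [hcomm, hpairs, mul_zero, zero_add, add_zero]

theorem X_mul_fineSum_neg_X (n : ℕ) :
    X * fineSum (-X : K⟦X⟧) (-X) n =
      -(gaussLambert K 0 n + 2 * ∑ j ∈ range n, (-1) ^ (j + 1) * gaussLambert K (j + 1) n) := by
  have hterm : ∀ N ∈ range n, X * ((-X : K⟦X⟧) ^ N * qQuotient (-X) N * (1 - -X * X ^ N)⁻¹) =
      -(lambertTerm K (N + 1) *
        (1 + 2 * ∑ j ∈ range n, (-1) ^ (j + 1) * gaussRatio K (N + 1) (j + 1))) := by
    intro N hN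
    have htheta := qQuotient_neg_X (K := K) (N := N + 1) (mem_range.mp hN)
    have hinv := one_sub_X_pow_mul_inv_cancel (K := K) (k := N + 1) (by omega)
    have hsign : (-1 : K⟦X⟧) ^ N * (-1) ^ N = 1 := by rw [← mul_pow]; simp
    rw [qQuotient_succ, neg_mul, sub_neg_eq_add, ← sub_eq_add_neg, ← pow_succ'] at htheta
    rw [neg_mul, sub_neg_eq_add, ← pow_succ', neg_pow, lambertTerm]
    generalize 1 + 2 * ∑ j ∈ range n, (-1) ^ (j + 1) * gaussRatio K (N + 1) (j + 1) = T at *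
    linear_combination (-1) ^ N * X ^ (N + 1) * (1 - X ^ (N + 1))⁻¹ * htheta -
      (-1) ^ N * X ^ (N + 1) * qQuotient (-X) N * (1 + X ^ (N + 1))⁻¹ * hinv -
      X ^ (N + 1) * (1 - X ^ (N + 1))⁻¹ * T * hsign
  rw [fineSum, mul_sum, sum_congr rfl hterm, sum_neg_distrib]
  simp only [gaussLambert, gaussRatio_zero, mul_sum, mul_add, sum_add_distrib]
  congr 2
  rw [sum_comm]
  exact sum_congr rfl fun j _ => sum_congr rfl fun N _ => by ring

theorem Overpartition.sum_neg_one_zpow_rank {n : ℕ} (hn : n ≠ 0) :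
    ∑ P : Overpartition n, (-1 : K) ^ P.rank = -2 * (signedCount n : K) := by
  have hneg : C (-1 : K) * X = -X := by simp
  have hcoeff (j : ℕ) : coeff n ((-1 : K⟦X⟧) ^ (j + 1) * gaussLambert K (j + 1) n) =
      (-1) ^ (j + 1) * (#{z ∈ Ioc 0 n | (j + 1) * z = n} : K) +
        (-1) ^ (j + 1) * (#{y ∈ Ioc 0 n ×ˢ Ioc 0 n |
          (j + 1) * y.1 + y.1 * y.2 + y.2 * (j + 1) = n} : K) := by
    rw [← mul_add, ← coeff_gaussLambert j.succ_ne_zero, ← coeff_C_mul]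
    simp
  have hpairs := sum_divisorsAntidiagonal_fst (R := K) hn
  have htriples := sum_filter_product_fst (R := K) (Ioc 0 n) (Ioc 0 n ×ˢ Ioc 0 n)
    (fun t => t.1 * t.2.1 + t.2.1 * t.2.2 + t.2.2 * t.1 = n) fun a => (-1) ^ a
  calc
    _ = coeff n (C (-2) * (gaussLambert K 0 n +
          C 2 * ∑ j ∈ range n, (-1) ^ (j + 1) * gaussLambert K (j + 1) n)) := by
      rw [sum_zpow_rank hn (by simp), inv_neg_one, hneg, mul_assoc, X_mul_fineSum_neg_X,
        map_neg, map_ofNat, neg_mul, mul_neg]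
    _ = -2 * (∑ p ∈ n.divisorsAntidiagonal, 1 + 2 * (∑ p ∈ n.divisorsAntidiagonal, (-1) ^ p.1 +
          ∑ t ∈ esymmTriples n, (-1) ^ t.1)) := by
      rw [hpairs fun _ => 1, hpairs fun a => (-1) ^ a, esymmTriples, htriples, coeff_C_mul,
        map_add, coeff_C_mul, map_sum, coeff_gaussLambert_zero]
      simp only [hcoeff, sum_add_distrib, one_mul]
      rw [sum_range_succ_eq_sum_Ioc fun j => (-1 : K) ^ j * #{z ∈ Ioc 0 n | j * z = n},
        sum_range_succ_eq_sum_Ioc fun j => (-1 : K) ^ j * #{y ∈ Ioc 0 n ×ˢ Ioc 0 n |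
          j * y.1 + y.1 * y.2 + y.2 * j = n}]
    _ = -2 * (signedCount n : K) := by
      rw [signedCount, sum_add_distrib, ← mul_sum]
      push_cast
      ring

end MinusOne

section Sign

theorem sum_esymmTriples_rotate {M : Type*} [AddCommMonoid M] (n : ℕ) (f : ℕ × ℕ × ℕ → M) :
    ∑ t ∈ esymmTriples n, f (t.2.1, t.2.2, t.1) = ∑ t ∈ esymmTriples n, f t := by
  refine sum_nbij' (fun t => (t.2.1, t.2.2, t.1)) (fun t => (t.2.2, t.1, t.2.1)) ?_ ?_ ?_ ?_ ?_
  · simp only [esymmTriples, mem_filter, mem_product]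
    rintro t ⟨⟨ha, hb, hc⟩, ht⟩
    exact ⟨⟨hb, hc, ha⟩, by linarith⟩
  · simp only [esymmTriples, mem_filter, mem_product]
    rintro t ⟨⟨ha, hb, hc⟩, ht⟩
    exact ⟨⟨hc, ha, hb⟩, by linarith⟩
  all_goals exact fun _ _ => rfl

theorem three_mul_signedCount (n : ℕ) :
    3 * signedCount n = 3 * ∑ p ∈ n.divisorsAntidiagonal, (1 + (-1) ^ p.1 + (-1) ^ p.2) +
      2 * ∑ t ∈ esymmTriples n, ((-1) ^ t.1 + (-1) ^ t.2.1 + (-1) ^ t.2.2) := by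
  have hpairs : ∑ p ∈ n.divisorsAntidiagonal, (-1 : ℤ) ^ p.2 =
      ∑ p ∈ n.divisorsAntidiagonal, (-1) ^ p.1 := by
    conv_rhs => rw [← Nat.map_swap_divisorsAntidiagonal, sum_map]
    rfl
  have hb := sum_esymmTriples_rotate n fun t => (-1 : ℤ) ^ t.1
  have hc := sum_esymmTriples_rotate n fun t => (-1 : ℤ) ^ t.2.1
  rw [signedCount]
  simp only [sum_add_distrib, ← mul_sum]
  linarith

theorem neg_one_pow_add_add_nonpos {a b c : ℕ} (h : Odd (a * b + b * c + c * a)) :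
    ((-1) ^ a + (-1) ^ b + (-1) ^ c : ℤ) ≤ 0 := by
  simp only [neg_one_pow_eq_ite]
  simp only [← Nat.not_even_iff_odd, Nat.even_add, Nat.even_mul] at h
  split_ifs <;> simp_all

theorem neg_one_pow_add_add_nonneg {a b c : ℕ} (h : Even (a * b + b * c + c * a)) :
    0 ≤ ((-1) ^ a + (-1) ^ b + (-1) ^ c : ℤ) := by
  simp only [neg_one_pow_eq_ite]
  simp only [Nat.even_add, Nat.even_mul] at h
  split_ifs <;> simp_all

theorem signedCount_neg_of_odd {n : ℕ} (hn : Odd n) : signedCount n < 0 := by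
  have hpair : ∀ p ∈ n.divisorsAntidiagonal, (1 + (-1) ^ p.1 + (-1) ^ p.2 : ℤ) = -1 := by
    intro p hp
    obtain ⟨ha, hb⟩ := Nat.odd_mul.mp ((Nat.mem_divisorsAntidiagonal.mp hp).1 ▸ hn)
    simp [ha.neg_one_pow, hb.neg_one_pow]
  have htriple : ∑ t ∈ esymmTriples n, ((-1) ^ t.1 + (-1) ^ t.2.1 + (-1) ^ t.2.2 : ℤ) ≤ 0 :=
    sum_nonpos fun t ht => neg_one_pow_add_add_nonpos (by rwa [(mem_filter.mp ht).2])
  have hcard : 0 < #n.divisorsAntidiagonal := card_pos.mpr ⟨(1, n), by simp [hn.pos.ne']⟩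
  have hsymm := three_mul_signedCount n
  rw [sum_congr rfl hpair, sum_const, nsmul_eq_mul] at hsymm
  omega

theorem two_le_signedCount_of_even {n : ℕ} (hn0 : n ≠ 0) (hn : Even n) : 2 ≤ signedCount n := by
  have hpair : ∀ p ∈ n.divisorsAntidiagonal, (1 : ℤ) ≤ 1 + (-1) ^ p.1 + (-1) ^ p.2 := by
    intro p hp
    have hab : Even p.1 ∨ Even p.2 :=
      Nat.even_mul.mp ((Nat.mem_divisorsAntidiagonal.mp hp).1 ▸ hn)
    simp only [neg_one_pow_eq_ite]
    split_ifs <;> simp_all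
  have htriple : 0 ≤ ∑ t ∈ esymmTriples n, ((-1) ^ t.1 + (-1) ^ t.2.1 + (-1) ^ t.2.2 : ℤ) :=
    sum_nonneg fun t ht => neg_one_pow_add_add_nonneg (by rwa [(mem_filter.mp ht).2])
  have hcard : 1 < #n.divisorsAntidiagonal := by
    refine one_lt_card.mpr ⟨(1, n), by simp [hn0], (n, 1), by simp [hn0], ?_⟩
    rintro ⟨⟩
    exact Nat.not_even_one hn
  have hsymm := three_mul_signedCount n
  have hsum := card_nsmul_le_sum _ _ 1 hpair
  rw [nsmul_eq_mul] at hsum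
  omega

end Sign

theorem sum_zpow_rank_eq_sum_nbar {K : Type*} [Field K] (n : ℕ) {c : ℕ} (hc : c ≠ 0) {z : K}
    (hz : z ^ c = 1) :
    ∑ P : Overpartition n, z ^ P.rank = ∑ a ∈ range c, (nbar a c n : K) * z ^ a := by
  have hc' : (c : ℤ) ≠ 0 := Int.natCast_ne_zero.mpr hc
  have hcast (P : Overpartition n) : ((P.rank % c).toNat : ℤ) = P.rank % c :=
    Int.toNat_of_nonneg (Int.emod_nonneg _ hc')
  have hpow (P : Overpartition n) : z ^ P.rank = z ^ (P.rank % c).toNat := by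
    have hz0 : z ≠ 0 := by rintro rfl; simp [hc] at hz
    conv_lhs => rw [← Int.emod_add_mul_ediv P.rank c, zpow_add₀ hz0, zpow_mul, zpow_natCast, hz,
      one_zpow, mul_one, ← hcast, zpow_natCast]
  have hmaps : ∀ P ∈ (univ : Finset (Overpartition n)), (P.rank % c).toNat ∈ range c := by
    intro P _
    have := Int.emod_lt_of_pos P.rank (show (0 : ℤ) < c by omega)
    rw [mem_range]
    omega
  rw [← sum_fiberwise_of_maps_to hmaps]
  refine sum_congr rfl fun a ha => ?_
  have hfiber : nbar a c n = #{P : Overpartition n | (P.rank % c).toNat = a} := by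
    rw [nbar, Nat.card_eq_fintype_card, Fintype.card_subtype]
    congr! 2 with P
    rw [Int.ModEq, Int.emod_eq_of_lt (b := c) (a := a) (by omega) (by simpa using ha), ← hcast]
    norm_cast
  rw [sum_congr rfl fun P hP => (hpow P).trans (by rw [(mem_filter.mp hP).2]), sum_const,
    nsmul_eq_mul, hfiber]

theorem nbar_zero_four_sub_nbar_one_four {n : ℕ} (hn : n ≠ 0) :
    (nbar 0 4 n : ℤ) - nbar 1 4 n = (if IsSquare n then 1 else 0) - signedCount n := by
  set s : ℤ := if IsSquare n then 1 else 0 with hs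
  have hI : (nbar 0 4 n - nbar 2 4 n + (nbar 1 4 n - nbar 3 4 n) * Complex.I : ℂ) = 2 * s := by
    have h := Overpartition.sum_zpow_rank_of_sq_eq_neg_one hn Complex.I_sq
    rw [sum_zpow_rank_eq_sum_nbar n four_ne_zero Complex.I_pow_four] at h
    simp only [sum_range_succ, range_zero, sum_empty, Complex.I_sq, Complex.I_pow_three] at h
    push_cast [hs] at h ⊢
    linear_combination h
  have hneg : (nbar 0 4 n - nbar 1 4 n + nbar 2 4 n - nbar 3 4 n : ℝ) = -2 * signedCount n := by
    have h := Overpartition.sum_neg_one_zpow_rank (K := ℝ) hn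
    rw [sum_zpow_rank_eq_sum_nbar n four_ne_zero (by norm_num)] at h
    simp only [sum_range_succ, range_zero, sum_empty] at h
    push_cast at h
    linear_combination h
  have hre : (nbar 0 4 n - nbar 2 4 n : ℝ) = 2 * s := by simpa using congrArg Complex.re hI
  have him : (nbar 1 4 n - nbar 3 4 n : ℝ) = 0 := by simpa using congrArg Complex.im hI
  have hreal : (nbar 0 4 n - nbar 1 4 n : ℝ) = s - signedCount n := by linarith
  exact_mod_cast hreal

theorem stmt10 (n : ℕ) (hn : 1 ≤ n) :
    (Odd n → nbar 1 4 n < nbar 0 4 n) ∧ (Even n → nbar 0 4 n < nbar 1 4 n) := by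
  have hsub := nbar_zero_four_sub_nbar_one_four (n := n) (by omega)
  refine ⟨fun hodd => ?_, fun heven => ?_⟩
  · have hneg := signedCount_neg_of_odd hodd
    split_ifs at hsub <;> omega
  · have htwo := two_le_signedCount_of_even (by omega) heven
    split_ifs at hsub <;> omega
end
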